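/- arXiv:1910.11225 — 2 statements merged into one kernel-verified Lean document; each statement's English description precedes it below -/
import Mathlib

section
/- Suppose d = d(n) := p(n)·n satisfies (log n)^3 ≪ d ≪ n. Let i = i(n) ∈ ℕ be the largest integer such that d^i ≤ 3·log n·n (equivalently, c := d^i/n ≤ 3·log n with i maximal), and suppose c = c(n) := d^i/n → A for some real constant A > 0. Then asymptotically almost surely, for G ∈ G(n,p): ζ(G) ≤ (1 + o(1))·(log d + 2·log log n)·e^A/(1 − e^{−A}). -/
open Filter SimpleGraph Set
open scoped Topology

noncomputable section

/-- The probability, under the Erdős–Rényi binomial random graph `G(n,p)`, of a set `A`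
of graphs on vertex set `Fin n`: each pair of distinct vertices is an edge
independently with probability `p`. -/
noncomputable def gnpProb (n : ℕ) (p : ℝ) (A : Set (SimpleGraph (Fin n))) : ℝ := by
  classical
  exact ∑ G ∈ Finset.univ.filter (fun G : SimpleGraph (Fin n) => G ∈ A),
      p ^ (Nat.card G.edgeSet) * (1 - p) ^ (n.choose 2 - Nat.card G.edgeSet)

/-- A sequence of graph events `A n ⊆ G(n, p n)` holds asymptotically almost surely. -/
def AAS (p : ℕ → ℝ) (A : (n : ℕ) → Set (SimpleGraph (Fin n))) : Prop :=
  Tendsto (fun n : ℕ => gnpProb n (p n) (A n)) atTop (nhds 1)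

/-- The set of vertices at graph distance exactly `j` from `v`. -/
def gSphere {V : Type*} (G : SimpleGraph V) (v : V) (j : ℕ) : Set V :=
  {u | G.edist v u = j}

/-- The set of vertices at graph distance at most `j` from some vertex of `A`. -/
def gBall {V : Type*} (G : SimpleGraph V) (A : Set V) (j : ℕ) : Set V :=
  {u | ∃ v ∈ A, G.edist v u ≤ j}

/-- The result of probing with sensor set `S` while the robber is at `v`: the cops
learn the sensor set together with the distance from each sensor to the robber. -/
noncomputable def probe {V : Type*} (G : SimpleGraph V) (S : Finset V) (v : V) :
    Finset V × (V → ℕ) := by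
  classical
  exact (S, fun s => if s ∈ S then G.dist s v else 0)

/-- A cop strategy: given the list of past probe results, choose the next sensor set. -/
def CopStrategy (V : Type*) : Type _ := List (Finset V × (V → ℕ)) → Finset V

/-- A robber trajectory: at each step the robber either stays or moves along an edge. -/
def IsRobberWalk {V : Type*} (G : SimpleGraph V) (w : ℕ → V) : Prop :=
  ∀ t, w (t + 1) = w t ∨ G.Adj (w t) (w (t + 1))

/-- The history of probe results produced in the first `t` rounds when the cops play
strategy `σ` against the robber walk `w` (round `t+1` probes position `w t`). -/
noncomputable def gameHistory {V : Type*} (G : SimpleGraph V) (σ : CopStrategy V)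
    (w : ℕ → V) : ℕ → List (Finset V × (V → ℕ))
  | 0 => []
  | t + 1 => gameHistory G σ w t ++ [probe G (σ (gameHistory G σ w t)) (w t)]

/-- The cops win the localization game on `G` with `k` sensors: there is a strategy,
probing exactly `k` vertices each round, such that for every robber walk there is a
round in which every robber walk producing the same probe results is at the same
vertex, i.e. the cops can locate the robber. -/
def CopsWin {V : Type*} (G : SimpleGraph V) (k : ℕ) : Prop :=
  ∃ σ : CopStrategy V, (∀ h, (σ h).card = k) ∧
    ∀ w : ℕ → V, IsRobberWalk G w → ∃ t : ℕ,
      ∀ w' : ℕ → V, IsRobberWalk G w' →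
        gameHistory G σ w' (t + 1) = gameHistory G σ w (t + 1) → w' t = w t

/-- The localization number `ζ(G)`: the least number of sensors with which the cops
can win the localization game on `G`. -/
noncomputable def localizationNumber {V : Type*} (G : SimpleGraph V) : ℕ :=
  sInf {k | CopsWin G k}

end


/-! ### Finite product probability space -/
namespace Loc

open Finset in
theorem sum_pi_bool {ι : Type*} [Fintype ι] [DecidableEq ι] (h : ι → Bool → ℝ) :
    ∑ ω : ι → Bool, ∏ e, h e (ω e) = ∏ e, (h e true + h e false) := by
  have := Finset.prod_univ_sum (fun _ : ι => (Finset.univ : Finset Bool)) h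
  simp only [Fintype.piFinset_univ] at this
  rw [← this]
  simp

/-- weight of one coordinate -/
def wt (p : ℝ) (b : Bool) : ℝ := if b then p else 1 - p

/-- expectation over independent coordinates -/
def EX {ι : Type*} [Fintype ι] [DecidableEq ι] (p : ℝ) (F : (ι → Bool) → ℝ) : ℝ :=
  ∑ ω : ι → Bool, (∏ e, wt p (ω e)) * F ω

section
variable {ι : Type*} [Fintype ι] [DecidableEq ι] {p : ℝ}

theorem wt_nonneg (h0 : 0 ≤ p) (h1 : p ≤ 1) (b : Bool) : 0 ≤ wt p b := by
  unfold wt; split_ifs <;> linarith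

theorem EX_prod_coord (D : Finset ι) (g : Bool → ℝ) :
    EX p (fun ω : ι → Bool => ∏ e ∈ D, g (ω e)) = (p * g true + (1 - p) * g false) ^ D.card := by
  unfold EX
  have h1 : ∀ ω : ι → Bool, (∏ e, wt p (ω e)) * ∏ e ∈ D, g (ω e)
      = ∏ e, (fun e b => wt p b * (if e ∈ D then g b else 1)) e (ω e) := by
    intro ω
    rw [Finset.prod_mul_distrib]
    congr 1
    rw [Finset.prod_ite_mem]
    simp
  rw [Finset.sum_congr rfl (fun ω _ => h1 ω),
    sum_pi_bool (fun e b => wt p b * (if e ∈ D then g b else 1))]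
  have h2 : ∀ e, (wt p true * (if e ∈ D then g true else 1) + wt p false * (if e ∈ D then g false else 1))
     = if e ∈ D then (p * g true + (1 - p) * g false) else 1 := by
    intro e; by_cases he : e ∈ D <;> simp [he, wt]
  simp only [h2]
  rw [Finset.prod_ite_mem]
  simp

theorem EX_one : EX p (fun _ : ι → Bool => (1:ℝ)) = 1 := by
  have := EX_prod_coord (p := p) (∅ : Finset ι) (fun _ => 1)
  simpa using this

theorem EX_mono (h0 : 0 ≤ p) (h1 : p ≤ 1) {F H : (ι → Bool) → ℝ} (h : ∀ ω, F ω ≤ H ω) :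
    EX p F ≤ EX p H := by
  unfold EX
  refine Finset.sum_le_sum fun ω _ => mul_le_mul_of_nonneg_left (h ω) ?_
  exact Finset.prod_nonneg fun e _ => wt_nonneg h0 h1 _

theorem EX_sub (F H : (ι → Bool) → ℝ) : EX p (fun ω => F ω - H ω) = EX p F - EX p H := by
  unfold EX
  rw [← Finset.sum_sub_distrib]
  simp [mul_sub]

theorem EX_const_mul (a : ℝ) (F : (ι → Bool) → ℝ) : EX p (fun ω => a * F ω) = a * EX p F := by
  unfold EX
  rw [Finset.mul_sum]
  refine Finset.sum_congr rfl fun ω _ => by ring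

theorem EX_sum {κ : Type*} (s : Finset κ) (F : κ → (ι → Bool) → ℝ) :
    EX p (fun ω => ∑ k ∈ s, F k ω) = ∑ k ∈ s, EX p (F k) := by
  unfold EX
  rw [Finset.sum_comm]
  refine Finset.sum_congr rfl fun ω _ => by rw [Finset.mul_sum]

/-- `F` depends only on the coordinates in `D` -/
def DepOn (D : Finset ι) (F : (ι → Bool) → ℝ) : Prop :=
  ∀ ω ω' : ι → Bool, (∀ e ∈ D, ω e = ω' e) → F ω = F ω'

/-- mixing two points -/
def mix (D : Finset ι) (ω ω' : ι → Bool) : ι → Bool := fun e => if e ∈ D then ω e else ω' e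

theorem EX_indep {D D' : Finset ι} (hD : Disjoint D D') {F H : (ι → Bool) → ℝ}
    (hF : DepOn D F) (hH : DepOn D' H) :
    EX p (fun ω => F ω * H ω) = EX p F * EX p H := by
  have hinv : Function.Involutive
      (fun x : (ι → Bool) × (ι → Bool) => (mix D x.1 x.2, mix D x.2 x.1)) := by
    intro x
    ext e <;> by_cases he : e ∈ D <;> simp [mix, he]
  have key : EX p F * EX p H = EX p (fun ω => F ω * H ω) * EX p (fun _ : ι → Bool => (1:ℝ)) := by
    unfold EX
    rw [Finset.sum_mul_sum, Finset.sum_mul_sum, ← Finset.sum_product', ← Finset.sum_product']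
    rw [Finset.univ_product_univ]
    rw [← Equiv.sum_comp hinv.toPerm (fun x : (ι → Bool) × (ι → Bool) =>
      (∏ e, wt p (x.1 e)) * (F x.1 * H x.1) * ((∏ e, wt p (x.2 e)) * 1))]
    refine Finset.sum_congr rfl fun x _ => ?_
    simp only [Function.Involutive.coe_toPerm]
    have e1 : F (mix D x.1 x.2) = F x.1 := hF _ _ (fun e he => by simp [mix, he])
    have e2 : H (mix D x.1 x.2) = H x.2 := hH _ _ (fun e he => by
      have : e ∉ D := fun h => (Finset.disjoint_left.1 hD h he)
      simp [mix, this])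
    have e3 : (∏ e, wt p (mix D x.1 x.2 e)) * (∏ e, wt p (mix D x.2 x.1 e))
        = (∏ e, wt p (x.1 e)) * (∏ e, wt p (x.2 e)) := by
      rw [← Finset.prod_mul_distrib, ← Finset.prod_mul_distrib]
      refine Finset.prod_congr rfl fun e _ => ?_
      by_cases he : e ∈ D <;> simp [mix, he, mul_comm]
    rw [e1, e2]
    linear_combination (-(F x.1 * H x.2)) * e3
  rw [key, EX_one, mul_one]

theorem EX_prod {κ : Type*} [DecidableEq κ] (W : Finset κ) (D : κ → Finset ι)
    (g : κ → (ι → Bool) → ℝ) (hg : ∀ w ∈ W, DepOn (D w) (g w))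
    (hD : ∀ w ∈ W, ∀ w' ∈ W, w ≠ w' → Disjoint (D w) (D w')) :
    EX p (fun ω => ∏ w ∈ W, g w ω) = ∏ w ∈ W, EX p (g w) := by
  induction W using Finset.induction_on with
  | empty => simpa using EX_one
  | insert a W ha ih =>
    have h1 : (fun ω => ∏ w ∈ insert a W, g w ω) = fun ω : ι → Bool => g a ω * ∏ w ∈ W, g w ω := by
      funext ω; rw [Finset.prod_insert ha]
    rw [h1, Finset.prod_insert ha, ← ih (fun w hw => hg w (Finset.mem_insert_of_mem hw))
      (fun w hw w' hw' => hD w (Finset.mem_insert_of_mem hw) w' (Finset.mem_insert_of_mem hw'))]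
    refine EX_indep (D := D a) (D' := W.biUnion D) ?_ (hg a (Finset.mem_insert_self _ _)) ?_
    · rw [Finset.disjoint_biUnion_right]
      intro w hw
      exact hD a (Finset.mem_insert_self _ _) w (Finset.mem_insert_of_mem hw)
        (fun h => ha (h ▸ hw))
    · intro ω ω' h
      refine Finset.prod_congr rfl fun w hw => hg w (Finset.mem_insert_of_mem hw) _ _ ?_
      intro e he
      exact h e (Finset.mem_biUnion.2 ⟨w, hw, he⟩)
end

/-! ### Translation to graphs -/

/-- the pairs of distinct vertices -/
abbrev Edge (n : ℕ) := {e : Sym2 (Fin n) // ¬ e.IsDiag}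

/-- graph of a configuration -/
def toGraph {n : ℕ} (ω : Edge n → Bool) : SimpleGraph (Fin n) where
  Adj a b := ∃ h : ¬ (s(a, b)).IsDiag, ω ⟨s(a, b), h⟩ = true
  symm := ⟨by
    rintro a b ⟨h, h'⟩
    have : s(a, b) = s(b, a) := Sym2.eq_swap
    exact ⟨this ▸ h, by simpa only [this] using h'⟩⟩
  loopless := ⟨by rintro a ⟨h, _⟩; exact h (by simp)⟩

theorem mem_edgeSet_toGraph {n : ℕ} (ω : Edge n → Bool) (e : Sym2 (Fin n)) :
    e ∈ (toGraph ω).edgeSet ↔ ∃ h : ¬ e.IsDiag, ω ⟨e, h⟩ = true := by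
  induction e using Sym2.ind with
  | _ a b => rfl

/-- configurations are graphs -/
noncomputable def graphEquiv (n : ℕ) : (Edge n → Bool) ≃ SimpleGraph (Fin n) := by
  classical
  exact
  { toFun := toGraph
    invFun := fun G e => decide (e.1 ∈ G.edgeSet)
    left_inv := by
      intro ω
      funext e
      have := mem_edgeSet_toGraph ω e.1
      rw [Bool.eq_iff_iff]
      simp only [decide_eq_true_eq]
      rw [this]
      exact ⟨fun ⟨_, h⟩ => h, fun h => ⟨e.2, h⟩⟩
    right_inv := by
      intro G
      ext a b
      constructor
      · rintro ⟨h, h'⟩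
        simpa using h'
      · intro h
        exact ⟨by simpa using h.ne, by simpa using h⟩ }

open Classical in
theorem gnp_eq_EX (n : ℕ) (p : ℝ) (A : Set (SimpleGraph (Fin n))) :
    gnpProb n p A = EX p (fun ω : Edge n → Bool => if toGraph ω ∈ A then 1 else 0) := by
  unfold gnpProb EX
  simp only [mul_ite, mul_one, mul_zero]
  rw [Finset.sum_filter]
  rw [← Equiv.sum_comp (graphEquiv n)]
  refine Finset.sum_congr rfl fun ω _ => ?_
  have e0 : (graphEquiv n) ω = toGraph ω := rfl
  rw [e0]
  congr 1
  have hc : Nat.card (toGraph ω).edgeSet = (Finset.univ.filter fun e : Edge n => ω e = true).card := by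
    rw [← Nat.card_eq_finsetCard]
    refine Nat.card_congr ?_
    refine ⟨fun e => ⟨⟨e.1, ((mem_edgeSet_toGraph ω e.1).1 e.2).choose⟩, ?_⟩,
      fun e => ⟨e.1.1, (mem_edgeSet_toGraph ω e.1.1).2 ⟨e.1.2, ?_⟩⟩, ?_, ?_⟩
    · simpa using ((mem_edgeSet_toGraph ω e.1).1 e.2).choose_spec
    · exact (Finset.mem_filter.1 e.2).2
    · intro e; rfl
    · intro e; rfl
  have hE : Fintype.card (Edge n) = n.choose 2 := by
    have := Sym2.card_subtype_not_diag (α := Fin n)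
    simpa using this
  have hc' : n.choose 2 - Nat.card (toGraph ω).edgeSet
      = (Finset.univ.filter fun e : Edge n => ¬ ω e = true).card := by
    rw [hc, ← hE, ← Finset.card_univ]
    have := Finset.card_filter_add_card_filter_not (s := (Finset.univ : Finset (Edge n))) (fun e => ω e = true)
    omega
  rw [hc', hc]
  simp only [wt]
  rw [Finset.prod_ite]
  simp

theorem gnp_univ (n : ℕ) (p : ℝ) : gnpProb n p Set.univ = 1 := by
  rw [gnp_eq_EX]; simpa using EX_one

theorem gnp_mono {n : ℕ} {p : ℝ} (h0 : 0 ≤ p) (h1 : p ≤ 1) {A B : Set (SimpleGraph (Fin n))}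
    (h : A ⊆ B) : gnpProb n p A ≤ gnpProb n p B := by
  classical
  rw [gnp_eq_EX, gnp_eq_EX]
  refine EX_mono h0 h1 fun ω => ?_
  by_cases hA : toGraph ω ∈ A
  · simp [hA, h hA]
  · simp only [hA, if_false]; split_ifs <;> norm_num

theorem gnp_le_one {n : ℕ} {p : ℝ} (h0 : 0 ≤ p) (h1 : p ≤ 1) (A : Set (SimpleGraph (Fin n))) :
    gnpProb n p A ≤ 1 := by
  rw [← gnp_univ n p]; exact gnp_mono h0 h1 (Set.subset_univ _)

theorem gnp_compl (n : ℕ) (p : ℝ) (A : Set (SimpleGraph (Fin n))) :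
    gnpProb n p A = 1 - gnpProb n p Aᶜ := by
  classical
  rw [gnp_eq_EX, gnp_eq_EX]
  have := EX_one (ι := Edge n) (p := p)
  have h2 := EX_sub (p := p) (fun _ : Edge n → Bool => (1:ℝ)) (fun ω => if toGraph ω ∈ Aᶜ then 1 else 0)
  rw [this] at h2
  refine Eq.trans ?_ (h2.trans (by congr!))
  congr 1
  funext ω
  by_cases hA : toGraph ω ∈ A <;> simp [hA]

/-- union bound -/
theorem gnp_union {n : ℕ} {p : ℝ} (h0 : 0 ≤ p) (h1 : p ≤ 1) {κ : Type*} (s : Finset κ)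
    (B : κ → Set (SimpleGraph (Fin n))) (A : Set (SimpleGraph (Fin n)))
    (h : ∀ G ∈ A, ∃ k ∈ s, G ∈ B k) :
    gnpProb n p A ≤ ∑ k ∈ s, gnpProb n p (B k) := by
  classical
  simp only [gnp_eq_EX]
  rw [← EX_sum]
  refine EX_mono h0 h1 fun ω => ?_
  by_cases hA : toGraph ω ∈ A
  · obtain ⟨k, hk, hB⟩ := h _ hA
    simp only [hA, if_true]
    have := Finset.single_le_sum (f := fun k => if toGraph ω ∈ B k then (1:ℝ) else 0) (s := s)
      (fun k _ => by split_ifs <;> norm_num) hk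
    simpa [hB] using this
  · simp only [hA, if_false]
    exact Finset.sum_nonneg fun k _ => by split_ifs <;> norm_num


/-! ### Chernoff bounds -/

/-- edges from `w` to `R` -/
def DE {n : ℕ} (w : Fin n) (R : Finset (Fin n)) : Finset (Edge n) :=
  Finset.univ.filter (fun e => ∃ x ∈ R, e.1 = s(w, x))

theorem mem_DE {n : ℕ} {w : Fin n} {R : Finset (Fin n)} {e : Edge n} :
    e ∈ DE w R ↔ ∃ x ∈ R, e.1 = s(w, x) := by simp [DE]

theorem card_DE {n : ℕ} {w : Fin n} {R : Finset (Fin n)} (hw : w ∉ R) :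
    (DE w R).card = R.card := by
  symm
  refine Finset.card_bij (fun x hx => ⟨s(w, x), by
    have : w ≠ x := fun h => hw (h ▸ hx)
    simpa using this⟩) ?_ ?_ ?_
  · intro x hx
    exact mem_DE.2 ⟨x, hx, rfl⟩
  · intro x hx y hy h
    rcases Sym2.eq_iff.1 (congrArg Subtype.val h) with ⟨_, h⟩ | ⟨h, h'⟩
    · exact h
    · exact h'.trans h
  · intro e he
    obtain ⟨x, hx, h⟩ := mem_DE.1 he
    exact ⟨x, hx, Subtype.ext h.symm⟩

/-- indicator of no edge -/
def g0 (b : Bool) : ℝ := if b then 0 else 1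

theorem no_adj_iff {n : ℕ} {w : Fin n} {R : Finset (Fin n)} (ω : Edge n → Bool) :
    (∀ x ∈ R, ¬ (toGraph ω).Adj w x) ↔ ∀ e ∈ DE w R, ω e = false := by
  constructor
  · intro h e he
    obtain ⟨x, hx, h'⟩ := mem_DE.1 he
    by_contra hc
    refine h x hx ⟨h' ▸ e.2, ?_⟩
    have : (⟨s(w, x), h' ▸ e.2⟩ : Edge n) = e := Subtype.ext h'.symm
    rw [this]; simpa using hc
  · rintro h x hx ⟨h1, h2⟩
    have := h ⟨s(w, x), h1⟩ (mem_DE.2 ⟨x, hx, rfl⟩)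
    rw [this] at h2; simp at h2

open Classical in
theorem prod_g0 {n : ℕ} {w : Fin n} {R : Finset (Fin n)} (ω : Edge n → Bool) :
    ∏ e ∈ DE w R, g0 (ω e) = if (∀ x ∈ R, ¬ (toGraph ω).Adj w x) then 1 else 0 := by
  have hiff := no_adj_iff (w := w) (R := R) ω
  split_ifs with h
  · rw [hiff] at h
    exact Finset.prod_eq_one fun e he => by simp [g0, h e he]
  · rw [hiff] at h
    push Not at h
    obtain ⟨e, he, h'⟩ := h
    exact Finset.prod_eq_zero he (by simpa [g0] using h')

/-- vertices outside `S ∪ T` with a neighbour in `S` and none in `T` -/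
noncomputable def Nset {n : ℕ} (G : SimpleGraph (Fin n)) (S T : Finset (Fin n)) : Finset (Fin n) := by
  classical
  exact Finset.univ.filter (fun w => w ∉ S ∧ w ∉ T ∧ (∃ x ∈ S, G.Adj w x) ∧ ∀ x ∈ T, ¬ G.Adj w x)

/-- expected size of `Nset` -/
noncomputable def mu (n : ℕ) (p : ℝ) (s t : ℕ) : ℝ :=
  ((n : ℝ) - s - t) * ((1 - p) ^ t - (1 - p) ^ (s + t))

theorem DE_mono {n : ℕ} (w : Fin n) {R R' : Finset (Fin n)} (h : R ⊆ R') : DE w R ⊆ DE w R' := by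
  intro e he
  obtain ⟨x, hx, h'⟩ := mem_DE.1 he
  exact mem_DE.2 ⟨x, h hx, h'⟩

theorem chernoff_N {n : ℕ} {p η : ℝ} (h0 : 0 ≤ p) (h1 : p ≤ 1) (hη0 : 0 ≤ η) (hη1 : η ≤ 1)
    (S T : Finset (Fin n)) (hST : Disjoint S T) :
    gnpProb n p {G | ((Nset G S T).card : ℝ) < (1 - η) * mu n p S.card T.card}
      ≤ Real.exp (-(η ^ 2 * mu n p S.card T.card / 2)) := by
  classical
  set W : Finset (Fin n) := (S ∪ T)ᶜ with hW
  set r : ℝ := (1 - p) ^ T.card - (1 - p) ^ (S.card + T.card) with hr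
  set μ : ℝ := mu n p S.card T.card with hμ
  set a : ℝ := 1 - Real.exp (-η) with ha
  let X : Fin n → (Edge n → Bool) → ℝ := fun w ω =>
    ∏ e ∈ DE w T, g0 (ω e) - ∏ e ∈ DE w (S ∪ T), g0 (ω e)
  let g : Fin n → (Edge n → Bool) → ℝ := fun w ω => 1 - a * X w ω
  have hcardW : (W.card : ℝ) = (n : ℝ) - S.card - T.card := by
    rw [hW, Finset.card_compl, Finset.card_union_of_disjoint hST, Nat.cast_sub, Fintype.card_fin]
    · push_cast; ring
    · rw [← Finset.card_union_of_disjoint hST]; exact Finset.card_le_univ _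
  have hr0 : 0 ≤ r := by
    have : (1 - p) ^ (S.card + T.card) ≤ (1 - p) ^ T.card :=
      pow_le_pow_of_le_one (by linarith) (by linarith) (by omega)
    linarith
  have hμr : μ = W.card * r := by rw [hcardW, hμ, hr]; rfl
  have hμ0 : 0 ≤ μ := by rw [hμr]; positivity
  have hEX : ∀ w ∈ W, EX p (X w) = r := by
    intro w hw
    have hw' : w ∉ S ∪ T := by simpa [hW] using hw
    have hwT : w ∉ T := fun h => hw' (Finset.mem_union_right _ h)
    rw [EX_sub, EX_prod_coord, EX_prod_coord, card_DE hw', card_DE hwT,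
      Finset.card_union_of_disjoint hST]
    simp [g0, hr]
  have hEg : ∀ w ∈ W, EX p (g w) ≤ Real.exp (-(a * r)) := by
    intro w hw
    have : EX p (g w) = 1 - a * r := by
      have e1 : EX p (g w) = EX p (fun _ : Edge n → Bool => (1:ℝ)) - EX p (fun ω => a * X w ω) :=
        EX_sub _ _
      rw [e1, EX_one, EX_const_mul, hEX w hw]
    rw [this]
    have := Real.add_one_le_exp (-(a * r)); linarith
  have hdep : ∀ w ∈ W, DepOn (DE w (S ∪ T)) (g w) := by
    intro w hw ω ω' h
    have e1 : ∏ e ∈ DE w T, g0 (ω e) = ∏ e ∈ DE w T, g0 (ω' e) :=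
      Finset.prod_congr rfl fun e he => by rw [h e (DE_mono w Finset.subset_union_right he)]
    have e2 : ∏ e ∈ DE w (S ∪ T), g0 (ω e) = ∏ e ∈ DE w (S ∪ T), g0 (ω' e) :=
      Finset.prod_congr rfl fun e he => by rw [h e he]
    simp only [g, X, e1, e2]
  have hdis : ∀ w ∈ W, ∀ w' ∈ W, w ≠ w' → Disjoint (DE w (S ∪ T)) (DE w' (S ∪ T)) := by
    intro w hw w' hw' hne
    rw [Finset.disjoint_left]
    intro e he he'
    obtain ⟨x, hx, e1⟩ := mem_DE.1 he
    obtain ⟨y, hy, e2⟩ := mem_DE.1 he'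
    rw [e1] at e2
    rcases Sym2.eq_iff.1 e2 with ⟨h, _⟩ | ⟨h, _⟩
    · exact hne h
    · have hw2 : w ∉ S ∪ T := by simpa [hW] using hw
      exact hw2 (h ▸ hy)
  have hXval : ∀ w ∈ W, ∀ ω, X w ω = if w ∈ Nset (toGraph ω) S T then 1 else 0 := by
    intro w hw ω
    have hw' : w ∉ S ∪ T := by simpa [hW] using hw
    have hwT : w ∉ T := fun h => hw' (Finset.mem_union_right _ h)
    have hwS : w ∉ S := fun h => hw' (Finset.mem_union_left _ h)
    simp only [X]
    rw [prod_g0, prod_g0]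
    by_cases hT : ∀ x ∈ T, ¬ (toGraph ω).Adj w x
    · by_cases hS : ∃ x ∈ S, (toGraph ω).Adj w x
      · have h3 : ¬ ∀ x ∈ S ∪ T, ¬ (toGraph ω).Adj w x := by
          obtain ⟨x, hx, hx'⟩ := hS
          exact fun h => h x (Finset.mem_union_left _ hx) hx'
        have h4 : w ∈ Nset (toGraph ω) S T := by
          simp only [Nset, Finset.mem_filter, Finset.mem_univ, true_and]; exact ⟨hwS, hwT, hS, hT⟩
        rw [if_pos hT, if_neg h3, if_pos h4]; norm_num
      · have h3 : ∀ x ∈ S ∪ T, ¬ (toGraph ω).Adj w x := by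
          intro x hx
          rcases Finset.mem_union.1 hx with h | h
          · exact fun h' => hS ⟨x, h, h'⟩
          · exact hT x h
        have h4 : w ∉ Nset (toGraph ω) S T := by
          simp only [Nset, Finset.mem_filter, Finset.mem_univ, true_and]
          exact fun h => hS h.2.2.1
        rw [if_pos hT, if_pos h3, if_neg h4]; norm_num
    · have h3 : ¬ ∀ x ∈ S ∪ T, ¬ (toGraph ω).Adj w x :=
        fun h => hT fun x hx => h x (Finset.mem_union_right _ hx)
      have h4 : w ∉ Nset (toGraph ω) S T := by
        simp only [Nset, Finset.mem_filter, Finset.mem_univ, true_and]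
        exact fun h => hT h.2.2.2
      rw [if_neg hT, if_neg h3, if_neg h4]; norm_num
  have hprod : ∀ ω, ∏ w ∈ W, g w ω = Real.exp (-η * (Nset (toGraph ω) S T).card) := by
    intro ω
    have e1 : ∀ w ∈ W, g w ω = if w ∈ Nset (toGraph ω) S T then Real.exp (-η) else 1 := by
      intro w hw
      simp only [g]
      rw [hXval w hw]
      split_ifs
      · rw [ha]; ring
      · ring
    rw [Finset.prod_congr rfl e1, Finset.prod_ite_mem]
    have e2 : W ∩ Nset (toGraph ω) S T = Nset (toGraph ω) S T := by
      refine Finset.inter_eq_right.2 ?_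
      intro w hw
      simp only [Nset, Finset.mem_filter] at hw
      simp [hW, hw.2.1, hw.2.2.1]
    rw [e2, Finset.prod_const, ← Real.exp_nat_mul]
    congr 1; ring
  rw [gnp_eq_EX]
  have step1 : EX p (fun ω : Edge n → Bool =>
      if toGraph ω ∈ {G | ((Nset G S T).card : ℝ) < (1 - η) * μ} then (1:ℝ) else 0)
      ≤ EX p (fun ω => Real.exp (η * ((1 - η) * μ)) * ∏ w ∈ W, g w ω) := by
    refine EX_mono h0 h1 fun ω => ?_
    split_ifs with h
    · rw [hprod, ← Real.exp_add]
      refine Real.one_le_exp ?_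
      have : ((Nset (toGraph ω) S T).card : ℝ) < (1 - η) * μ := h
      nlinarith
    · rw [hprod]; positivity
  refine step1.trans ?_
  rw [EX_const_mul, EX_prod W (fun w => DE w (S ∪ T)) g hdep hdis]
  have step2 : ∏ w ∈ W, EX p (g w) ≤ Real.exp (-(a * μ)) := by
    have : ∏ w ∈ W, EX p (g w) ≤ ∏ w ∈ W, Real.exp (-(a * r)) := by
      refine Finset.prod_le_prod (fun w hw => ?_) hEg
      have : EX p (fun _ : Edge n → Bool => (0:ℝ)) ≤ EX p (g w) := by
        refine EX_mono h0 h1 fun ω => ?_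
        simp only [g]
        rw [hXval w hw]
        split_ifs
        · have := Real.exp_pos (-η); rw [ha]; linarith
        · norm_num
      refine le_trans (le_of_eq ?_) this
      simp [EX]
    refine this.trans (le_of_eq ?_)
    rw [Finset.prod_const, ← Real.exp_nat_mul, hμr]
    congr 1; ring
  refine (mul_le_mul_of_nonneg_left step2 (Real.exp_pos _).le).trans ?_
  rw [← Real.exp_add]
  refine Real.exp_le_exp.2 ?_
  have hexp : Real.exp (-η) ≤ 1 - η + η ^ 2 / 2 := by
    rcases eq_or_lt_of_le hη0 with h | h
    · rw [← h]; simp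
    have := Real.quadratic_le_exp_of_nonneg hη0
    have h5 : Real.exp (-η) = (Real.exp η)⁻¹ := Real.exp_neg _
    rw [h5]
    rw [inv_le_comm₀ (Real.exp_pos _) (by nlinarith)]
    refine le_trans ?_ this
    rw [inv_le_iff_one_le_mul₀ (by nlinarith)]
    nlinarith [sq_nonneg η, sq_nonneg (η^2)]
  have : a ≥ η - η ^ 2 / 2 := by rw [ha]; linarith
  nlinarith [mul_le_mul_of_nonneg_right this hμ0]

/-- the neighbour finset -/
noncomputable def nb {n : ℕ} (G : SimpleGraph (Fin n)) (v : Fin n) : Finset (Fin n) := by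
  classical
  exact Finset.univ.filter (fun w => G.Adj v w)

theorem chernoff_deg {n : ℕ} {p η : ℝ} (h0 : 0 ≤ p) (h1 : p ≤ 1) (hη0 : 0 ≤ η) (hη1 : η ≤ 1)
    (v : Fin n) :
    gnpProb n p {G | (1 + 2 * η) * (p * n) < ((nb G v).card : ℝ)}
      ≤ Real.exp (-(η ^ 2 * (p * n))) := by
  classical
  have hv : v ∉ (Finset.univ.erase v : Finset (Fin n)) := by simp
  let f : Bool → ℝ := fun b => if b then Real.exp η else 1
  have hprod : ∀ ω : Edge n → Bool, ∏ e ∈ DE v (Finset.univ.erase v), f (ω e)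
      = Real.exp (η * (nb (toGraph ω) v).card) := by
    intro ω
    have e1 : ((DE v (Finset.univ.erase v)).filter fun e => ω e = true).card
        = (nb (toGraph ω) v).card := by
      symm
      refine Finset.card_bij (fun x hx => ⟨s(v, x), by
        simp only [nb, Finset.mem_filter] at hx
        exact hx.2.choose⟩) ?_ ?_ ?_
      · intro x hx
        simp only [nb, Finset.mem_filter] at hx
        refine Finset.mem_filter.2 ⟨mem_DE.2 ⟨x, ?_, rfl⟩, hx.2.choose_spec⟩
        simpa using hx.2.ne'
      · intro x hx y hy h
        rcases Sym2.eq_iff.1 (congrArg Subtype.val h) with ⟨_, h⟩ | ⟨h, h'⟩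
        · exact h
        · exact h'.trans h
      · intro e he
        obtain ⟨he1, he2⟩ := Finset.mem_filter.1 he
        obtain ⟨x, hx, h⟩ := mem_DE.1 he1
        refine ⟨x, ?_, Subtype.ext h.symm⟩
        simp only [nb, Finset.mem_filter, Finset.mem_univ, true_and]
        refine ⟨h ▸ e.2, ?_⟩
        have : (⟨s(v, x), h ▸ e.2⟩ : Edge n) = e := Subtype.ext h.symm
        rw [this]; exact he2
    simp only [f]
    rw [Finset.prod_ite, Finset.prod_const, Finset.prod_const_one, mul_one, e1, ← Real.exp_nat_mul]
    congr 1; ring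
  rw [gnp_eq_EX]
  have step1 : EX p (fun ω : Edge n → Bool =>
      if toGraph ω ∈ {G | (1 + 2 * η) * (p * n) < ((nb G v).card : ℝ)} then (1:ℝ) else 0)
      ≤ EX p (fun ω => Real.exp (-(η * ((1 + 2 * η) * (p * n)))) *
          ∏ e ∈ DE v (Finset.univ.erase v), f (ω e)) := by
    refine EX_mono h0 h1 fun ω => ?_
    split_ifs with h
    · rw [hprod, ← Real.exp_add]
      refine Real.one_le_exp ?_
      have : (1 + 2 * η) * (p * n) < ((nb (toGraph ω) v).card : ℝ) := h
      nlinarith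
    · rw [hprod]; positivity
  refine step1.trans ?_
  rw [EX_const_mul, EX_prod_coord, card_DE hv]
  have hexp : Real.exp η ≤ 1 + η + η ^ 2 := by
    have := (abs_le.1 (Real.abs_exp_sub_one_sub_id_le (x := η) (by rw [abs_of_nonneg hη0]; exact hη1))).2
    linarith
  have step2 : (p * f true + (1 - p) * f false) ^ (Finset.univ.erase v : Finset (Fin n)).card
      ≤ Real.exp ((p * n) * (η + η ^ 2)) := by
    have h3 : p * f true + (1 - p) * f false ≤ Real.exp (p * (η + η ^ 2)) := by
      have := Real.add_one_le_exp (p * (η + η ^ 2))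
      refine le_trans ?_ this
      simp only [f, if_true]
      simp
      nlinarith
    have h4 : 0 ≤ p * f true + (1 - p) * f false := by
      have := Real.exp_pos η
      simp only [f, if_true]
      simp
      nlinarith
    refine (pow_le_pow_left₀ h4 h3 _).trans ?_
    rw [← Real.exp_nat_mul]
    refine Real.exp_le_exp.2 ?_
    have h5 : ((Finset.univ.erase v : Finset (Fin n)).card : ℝ) ≤ n := by
      have := Finset.card_le_univ (Finset.univ.erase v : Finset (Fin n))
      rw [Fintype.card_fin] at this
      exact_mod_cast this
    have h6 : 0 ≤ p * (η + η ^ 2) := by positivity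
    nlinarith
  refine (mul_le_mul_of_nonneg_left step2 (Real.exp_pos _).le).trans ?_
  rw [← Real.exp_add]
  refine Real.exp_le_exp.2 ?_
  nlinarith


/-! ### The game -/

section game
variable {n : ℕ}

open Classical in
/-- non-separating sensors for a pair -/
noncomputable def nonsep (G : SimpleGraph (Fin n)) (u v : Fin n) : Finset (Fin n) :=
  Finset.univ.filter fun w => G.dist w u = G.dist w v

open Classical in
/-- ordered unresolved pairs in `Y` -/
noncomputable def unres (G : SimpleGraph (Fin n)) (Y S : Finset (Fin n)) : Finset (Fin n × Fin n) :=
  Y.offDiag.filter fun x => ∀ s ∈ S, G.dist s x.1 = G.dist s x.2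

theorem exists_sensors (G : SimpleGraph (Fin n)) (k : ℕ) (hk : k ≤ n) (hn : 0 < n) (θ : ℝ)
    (hθ1 : θ ≤ 1)
    (hsep : ∀ u v, u ≠ v → ((nonsep G u v).card : ℝ) ≤ (1 - θ) * n) (Y : Finset (Fin n)) :
    ∃ S : Finset (Fin n), S.card = k ∧
      ((unres G Y S).card : ℝ) ≤ (Y.card : ℝ) ^ 2 * (1 - θ) ^ k := by
  classical
  let bad : (Fin k → Fin n) → Fin n × Fin n → ℝ := fun s x =>
    if ∀ j, G.dist (s j) x.1 = G.dist (s j) x.2 then 1 else 0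
  have hsum : ∑ s : Fin k → Fin n, ∑ x ∈ Y.offDiag, bad s x
      ≤ ∑ _s : Fin k → Fin n, (Y.card : ℝ) ^ 2 * (1 - θ) ^ k := by
    rw [Finset.sum_comm]
    have h1 : ∀ x ∈ Y.offDiag, ∑ s : Fin k → Fin n, bad s x ≤ ((1 - θ) * n) ^ k := by
      intro x hx
      have hne : x.1 ≠ x.2 := (Finset.mem_offDiag.1 hx).2.2
      have e1 : ∑ s : Fin k → Fin n, bad s x = ((nonsep G x.1 x.2).card : ℝ) ^ k := by
        simp only [bad]
        rw [Finset.sum_boole]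
        have : (Finset.univ.filter fun s : Fin k → Fin n =>
            ∀ j, G.dist (s j) x.1 = G.dist (s j) x.2) = Fintype.piFinset fun _ => nonsep G x.1 x.2 := by
          ext s; simp [nonsep]
        rw [this, Fintype.card_piFinset]
        simp
      rw [e1]
      exact pow_le_pow_left₀ (by positivity) (hsep _ _ hne) _
    refine (Finset.sum_le_sum h1).trans ?_
    rw [Finset.sum_const, Finset.sum_const, nsmul_eq_mul, nsmul_eq_mul]
    have hoff : ((Y.offDiag).card : ℝ) ≤ (Y.card : ℝ) ^ 2 := by
      rw [Finset.offDiag_card]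
      have : Y.card * Y.card - Y.card ≤ Y.card ^ 2 := by rw [sq]; omega
      exact_mod_cast this
    have hcu : ((Finset.univ : Finset (Fin k → Fin n)).card : ℝ) = (n : ℝ) ^ k := by
      simp
    rw [hcu, mul_pow]
    have : 0 ≤ (1 - θ) ^ k := pow_nonneg (by linarith) _
    have h2 : 0 ≤ (1 - θ) ^ k * (n:ℝ) ^ k := by positivity
    nlinarith [mul_le_mul_of_nonneg_right hoff h2]
  have : Nonempty (Fin n) := ⟨⟨0, hn⟩⟩
  obtain ⟨s, -, hs⟩ := Finset.exists_le_of_sum_le (Finset.univ_nonempty) hsum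
  have hle : (Finset.univ.image s).card ≤ k := by
    refine Finset.card_image_le.trans ?_; simp
  obtain ⟨S, hS1, hS2⟩ := Finset.exists_superset_card_eq hle (by simpa using hk)
  refine ⟨S, hS2, le_trans ?_ hs⟩
  simp only [bad]
  rw [Finset.sum_boole]
  have : (unres G Y S).card ≤ (Y.offDiag.filter fun x => ∀ j, G.dist (s j) x.1 = G.dist (s j) x.2).card := by
    refine Finset.card_le_card ?_
    intro x hx
    simp only [unres, Finset.mem_filter] at hx ⊢
    exact ⟨hx.1, fun j => hx.2 _ (hS1 (Finset.mem_image_of_mem _ (Finset.mem_univ _)))⟩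
  exact_mod_cast this

open Classical in
/-- closed neighbourhood of a set -/
noncomputable def cnb (G : SimpleGraph (Fin n)) (X : Finset (Fin n)) : Finset (Fin n) :=
  Finset.univ.filter fun w => w ∈ X ∨ ∃ x ∈ X, G.Adj x w

theorem card_cnb (G : SimpleGraph (Fin n)) (X : Finset (Fin n)) (D : ℝ)
    (hD : ∀ v, ((nb G v).card : ℝ) + 1 ≤ D) : ((cnb G X).card : ℝ) ≤ D * X.card := by
  classical
  have h1 : cnb G X ⊆ X.biUnion fun x => insert x (nb G x) := by
    intro w hw
    simp only [cnb, Finset.mem_filter, Finset.mem_univ, true_and] at hw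
    rw [Finset.mem_biUnion]
    rcases hw with h | ⟨x, hx, h⟩
    · exact ⟨w, h, Finset.mem_insert_self _ _⟩
    · exact ⟨x, hx, Finset.mem_insert_of_mem (by simpa [nb] using h)⟩
  have h2 : ((cnb G X).card : ℝ) ≤ ∑ x ∈ X, ((insert x (nb G x)).card : ℝ) := by
    have := (Finset.card_le_card h1).trans Finset.card_biUnion_le
    exact_mod_cast this
  refine h2.trans ?_
  have h3 : ∑ x ∈ X, ((insert x (nb G x)).card : ℝ) ≤ ∑ x ∈ X, D := by
    refine Finset.sum_le_sum fun x _ => le_trans ?_ (hD x)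
    have := Finset.card_insert_le x (nb G x)
    exact_mod_cast this
  refine h3.trans (le_of_eq ?_)
  rw [Finset.sum_const, nsmul_eq_mul, mul_comm]

open Classical in
/-- candidates consistent with a probe result -/
noncomputable def consis (G : SimpleGraph (Fin n)) (Y : Finset (Fin n))
    (r : Finset (Fin n) × (Fin n → ℕ)) : Finset (Fin n) :=
  Y.filter fun v => probe G r.1 v = r

/-- possible positions before the next probe -/
noncomputable def cand (G : SimpleGraph (Fin n)) (h : List (Finset (Fin n) × (Fin n → ℕ))) :
    Finset (Fin n) :=
  h.foldl (fun Y r => cnb G (consis G Y r)) Finset.univ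

theorem copsWin_of (G : SimpleGraph (Fin n)) (k : ℕ) (hk : k ≤ n) (hn : 0 < n) (θ D : ℝ)
    (hθ1 : θ ≤ 1)
    (hsep : ∀ u v, u ≠ v → ((nonsep G u v).card : ℝ) ≤ (1 - θ) * n)
    (hD : ∀ v, ((nb G v).card : ℝ) + 1 ≤ D) (hDk : D ^ 2 * (1 - θ) ^ k < 1 / 2) :
    CopsWin G k := by
  classical
  choose ch hch1 hch2 using exists_sensors G k hk hn θ hθ1 hsep
  let σ : CopStrategy (Fin n) := fun h => ch (cand G h)
  refine ⟨σ, fun h => hch1 _, ?_⟩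
  intro w hw
  let Y : (ℕ → Fin n) → ℕ → Finset (Fin n) := fun w t => cand G (gameHistory G σ w t)
  let X : (ℕ → Fin n) → ℕ → Finset (Fin n) := fun w t =>
    consis G (Y w t) (probe G (ch (Y w t)) (w t))
  have hYsucc : ∀ w t, Y w (t + 1) = cnb G (X w t) := by
    intro w t
    simp only [Y, X, gameHistory, cand, List.foldl_append, List.foldl_cons, List.foldl_nil, σ]
  have hprobe1 : ∀ S v, (probe G S v).1 = S := fun S v => rfl
  have hmemY : ∀ w, IsRobberWalk G w → ∀ t, w t ∈ Y w t := by
    intro w hw t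
    induction t with
    | zero => simp [Y, gameHistory, cand]
    | succ t ih =>
      rw [hYsucc]
      have hx : w t ∈ X w t := by
        simp only [X, consis, Finset.mem_filter]
        exact ⟨ih, by rw [hprobe1]⟩
      simp only [cnb, Finset.mem_filter, Finset.mem_univ, true_and]
      rcases hw t with h | h
      · left; rw [h]; exact hx
      · right; exact ⟨w t, hx, h⟩
  have hmemX : ∀ w, IsRobberWalk G w → ∀ t, w t ∈ X w t := by
    intro w hw t
    simp only [X, consis, Finset.mem_filter]
    exact ⟨hmemY w hw t, by rw [hprobe1]⟩
  have hclass : ∀ t, ((X w t).card : ℝ) * ((X w t).card - 1) ≤ ((Y w t).card : ℝ) ^ 2 * (1 - θ) ^ k := by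
    intro t
    refine le_trans ?_ (hch2 (Y w t))
    have hsub : (X w t).offDiag ⊆ unres G (Y w t) (ch (Y w t)) := by
      intro x hx
      rw [Finset.mem_offDiag] at hx
      obtain ⟨h1, h2, h3⟩ := hx
      simp only [X, consis, Finset.mem_filter] at h1 h2
      simp only [unres, Finset.mem_filter, Finset.mem_offDiag]
      refine ⟨⟨h1.1, h2.1, h3⟩, fun s hs => ?_⟩
      have h4 := h1.2.trans h2.2.symm
      have h5 := congrFun (congrArg Prod.snd h4) s
      simp only [probe] at h5
      simpa [hs] using h5
    have := Finset.card_le_card hsub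
    rw [Finset.offDiag_card] at this
    have h6 : (((X w t).card * (X w t).card - (X w t).card : ℕ) : ℝ)
        = ((X w t).card : ℝ) * ((X w t).card - 1) := by
      rw [Nat.cast_sub (Nat.le_mul_self _)]; push_cast; ring
    rw [← h6]
    exact_mod_cast this
  have hdec : ∀ t, 2 ≤ (X w t).card → (X w (t + 1)).card < (X w t).card := by
    intro t ht
    by_contra hcon
    push Not at hcon
    have h1 := hclass (t + 1)
    rw [hYsucc] at h1
    have h2 := card_cnb G (X w t) D hD
    have h3 : ((X w t).card : ℝ) ≤ (X w (t + 1)).card := by exact_mod_cast hcon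
    have h4 : (2:ℝ) ≤ (X w t).card := by exact_mod_cast ht
    set x : ℝ := ((X w t).card : ℝ)
    set z : ℝ := ((X w (t + 1)).card : ℝ)
    have h0 : 0 ≤ (1 - θ) ^ k := pow_nonneg (by linarith) _
    have h5 : (((cnb G (X w t)).card : ℝ)) ^ 2 ≤ (D * x) ^ 2 :=
      pow_le_pow_left₀ (by positivity) h2 _
    have h6 : x * (x - 1) ≤ z * (z - 1) := by nlinarith
    have h7 : z * (z - 1) ≤ x ^ 2 * (D ^ 2 * (1 - θ) ^ k) := by
      refine h1.trans ((mul_le_mul_of_nonneg_right h5 h0).trans (le_of_eq (by ring)))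
    have h8 : x ^ 2 * (D ^ 2 * (1 - θ) ^ k) < x ^ 2 * (1 / 2) :=
      mul_lt_mul_of_pos_left hDk (by positivity)
    nlinarith
  have hex : ∃ t, (X w t).card ≤ 1 := by
    by_contra hcon
    push Not at hcon
    have : ∀ t, (X w t).card + t ≤ (X w 0).card := by
      intro t
      induction t with
      | zero => simp
      | succ t ih =>
        have := hdec t (hcon t)
        omega
    have h1 := this ((X w 0).card + 1)
    omega
  obtain ⟨t, ht⟩ := hex
  refine ⟨t, fun w' hw' hh => ?_⟩
  have hh' : gameHistory G σ w' t ++ [probe G (σ (gameHistory G σ w' t)) (w' t)]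
      = gameHistory G σ w t ++ [probe G (σ (gameHistory G σ w t)) (w t)] := hh
  obtain ⟨e1, e2⟩ := List.append_inj' hh' rfl
  have e3 : probe G (ch (Y w' t)) (w' t) = probe G (ch (Y w t)) (w t) := by
    simpa [σ] using e2
  have e4 : Y w' t = Y w t := by simp only [Y]; rw [e1]
  have h1 : w' t ∈ X w t := by
    simp only [X, consis, Finset.mem_filter]
    refine ⟨e4 ▸ hmemY w' hw' t, ?_⟩
    rw [hprobe1, ← e3, e4]
  exact Finset.card_le_one.1 ht _ h1 _ (hmemX w hw t)

end game


/-! ### Deterministic expansion -/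

theorem one_sub_pow_le {p : ℝ} (h1 : p ≤ 1) (s : ℕ) : (1 - p) ^ s ≤ Real.exp (-(p * s)) := by
  have h : 1 - p ≤ Real.exp (-p) := by have := Real.add_one_le_exp (-p); linarith
  refine (pow_le_pow_left₀ (by linarith) h s).trans (le_of_eq ?_)
  rw [← Real.exp_nat_mul]; congr 1; ring

theorem le_one_sub_pow {p : ℝ} (h1 : p < 1) (t : ℕ) :
    Real.exp (-(p * t / (1 - p))) ≤ (1 - p) ^ t := by
  have h0 : 0 < 1 - p := by linarith
  have h : Real.exp (-(p / (1 - p))) ≤ 1 - p := by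
    have h2 := Real.add_one_le_exp (p / (1 - p))
    have h3 : p / (1 - p) + 1 = (1 - p)⁻¹ := by field_simp; ring
    rw [h3] at h2
    rw [Real.exp_neg]
    exact inv_le_of_inv_le₀ h0 h2
  refine le_trans (le_of_eq ?_) (pow_le_pow_left₀ (Real.exp_pos _).le h t)
  rw [← Real.exp_nat_mul]; congr 1; ring

theorem mu_eq (n : ℕ) (p : ℝ) (s t : ℕ) :
    mu n p s t = ((n : ℝ) - s - t) * ((1 - p) ^ t * (1 - (1 - p) ^ s)) := by
  unfold mu; rw [pow_add]; ring

theorem mu_lower1 {n : ℕ} {p η y : ℝ} {s t : ℕ} (hp0 : 0 ≤ p) (hp1 : p ≤ 1)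
    (hd : 1 ≤ p * n) (hη0 : 0 ≤ η) (hη1 : η ≤ 1) (hy : 4 * y ≤ 2 * η) (hy1 : y ≤ 1 / 2)
    (hs : p * s ≤ y) (ht : p * t ≤ y) :
    (1 - 3 * η) * (p * n) * s ≤ (1 - η) * mu n p s t := by
  have hn : (0:ℝ) ≤ n := by positivity
  have hs0 : (0:ℝ) ≤ s := by positivity
  have ht0 : (0:ℝ) ≤ t := by positivity
  have hps : 0 ≤ p * s := by positivity
  have hy0 : 0 ≤ y := hps.trans hs
  have a1 : (s:ℝ) ≤ n * y := by nlinarith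
  have a2 : (t:ℝ) ≤ n * y := by nlinarith
  have b1 : 1 - y ≤ (1 - p) ^ t := by
    have := one_add_mul_le_pow (a := -p) (by linarith) t
    have e : (1:ℝ) + -p = 1 - p := by ring
    rw [e] at this
    nlinarith
  have c1 : p * s * (1 - y) ≤ 1 - (1 - p) ^ s := by
    have h1 := one_sub_pow_le hp1 s
    have h2 := (abs_le.1 (Real.abs_exp_sub_one_sub_id_le (x := -(p * s))
      (by rw [abs_neg, abs_of_nonneg hps]; linarith))).2
    nlinarith
  rw [mu_eq]
  have m1 : (1 - y) * (p * s * (1 - y)) ≤ (1 - p) ^ t * (1 - (1 - p) ^ s) :=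
    mul_le_mul b1 c1 (mul_nonneg hps (by linarith)) (pow_nonneg (by linarith) _)
  have m2 : (n * (1 - 2 * y)) * ((1 - y) * (p * s * (1 - y)))
      ≤ ((n:ℝ) - s - t) * ((1 - p) ^ t * (1 - (1 - p) ^ s)) :=
    mul_le_mul (by nlinarith) m1 (mul_nonneg (by linarith) (mul_nonneg hps (by linarith)))
      (by nlinarith)
  refine le_trans ?_ (mul_le_mul_of_nonneg_left m2 (by linarith))
  have e : (1 - η) * ((n * (1 - 2 * y)) * ((1 - y) * (p * s * (1 - y))))
      = ((1 - η) * ((1 - 2 * y) * (1 - y) ^ 2)) * ((p * n) * s) := by ring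
  rw [e, mul_assoc]
  refine mul_le_mul_of_nonneg_right ?_ (by positivity)
  have f1 : 1 - 4 * y ≤ (1 - 2 * y) * (1 - y) ^ 2 := by nlinarith [mul_nonneg hy0 (sq_nonneg y), sq_nonneg y]
  nlinarith

theorem mu_lower2 {n : ℕ} {p η y a b : ℝ} {s t : ℕ} (hp0 : 0 ≤ p) (hp1 : p < 1)
    (hη1 : η ≤ 1) (hy1 : y ≤ 1 / 2) (ha : 0 ≤ a)
    (hs : a ≤ p * s) (ht : p * t ≤ b) (hs' : (s:ℝ) ≤ n * y) (ht' : (t:ℝ) ≤ n * y) :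
    (1 - η) * (1 - 2 * y) * (1 - Real.exp (-a)) * Real.exp (-(b / (1 - p))) * n
      ≤ (1 - η) * mu n p s t := by
  have hn : (0:ℝ) ≤ n := by positivity
  have b1 : Real.exp (-(b / (1 - p))) ≤ (1 - p) ^ t := by
    refine le_trans (Real.exp_le_exp.2 ?_) (le_one_sub_pow hp1 t)
    have : p * t / (1 - p) ≤ b / (1 - p) := div_le_div_of_nonneg_right ht (by linarith)
    linarith
  have c1 : 1 - Real.exp (-a) ≤ 1 - (1 - p) ^ s := by
    have h1 := one_sub_pow_le hp1.le s
    have : Real.exp (-(p * s)) ≤ Real.exp (-a) := Real.exp_le_exp.2 (by linarith)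
    linarith
  have c0 : 0 ≤ 1 - Real.exp (-a) := by
    have : Real.exp (-a) ≤ 1 := Real.exp_le_one_iff.2 (by linarith)
    linarith
  rw [mu_eq]
  have m1 := mul_le_mul b1 c1 c0 (pow_nonneg (by linarith) _)
  have m2 : (n * (1 - 2 * y)) * (Real.exp (-(b / (1 - p))) * (1 - Real.exp (-a)))
      ≤ ((n:ℝ) - s - t) * ((1 - p) ^ t * (1 - (1 - p) ^ s)) :=
    mul_le_mul (by nlinarith) m1 (mul_nonneg (Real.exp_pos _).le c0) (by nlinarith)
  refine le_trans (le_of_eq ?_) (mul_le_mul_of_nonneg_left m2 (by linarith))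
  ring

theorem mu_lower3 {n : ℕ} {p M : ℝ} {s t : ℕ} (hp0 : 0 < p) (hp1 : p ≤ 1 / 2)
    (hd : 6 * M ≤ p * n) (hs : p * s ≤ M) (ht : t ≤ 2 * s) :
    Real.exp (-(4 * M)) / (2 * (1 + M)) * ((p * n) * s) ≤ mu n p s t := by
  have hn : (0:ℝ) ≤ n := by positivity
  have hs0 : (0:ℝ) ≤ s := by positivity
  have hps : 0 ≤ p * s := by positivity
  have hM : 0 ≤ M := hps.trans hs
  have ht2 : (t:ℝ) ≤ 2 * s := by exact_mod_cast ht
  have hsn : 6 * (s:ℝ) ≤ n := by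
    have : p * (6 * s) ≤ p * n := by nlinarith
    exact le_of_mul_le_mul_left this hp0
  have b1 : Real.exp (-(4 * M)) ≤ (1 - p) ^ t := by
    refine le_trans (Real.exp_le_exp.2 ?_) (le_one_sub_pow (by linarith) t)
    have : p * t / (1 - p) ≤ 4 * M := by
      rw [div_le_iff₀ (by linarith)]
      nlinarith
    linarith
  have c1 : p * s / (1 + M) ≤ 1 - (1 - p) ^ s := by
    have h1 := one_sub_pow_le (by linarith : p ≤ 1) s
    have h2 := Real.add_one_le_exp (p * s)
    have h3 : Real.exp (-(p * s)) ≤ (1 + p * s)⁻¹ := by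
      rw [Real.exp_neg]
      exact inv_anti₀ (by linarith) (by linarith)
    have h4 : p * s / (1 + M) ≤ p * s / (1 + p * s) :=
      div_le_div_of_nonneg_left hps (by linarith) (by linarith)
    have h5 : p * s / (1 + p * s) = 1 - (1 + p * s)⁻¹ := by
      have : 1 + p * s ≠ 0 := by positivity
      field_simp; ring
    linarith
  rw [mu_eq]
  have m1 := mul_le_mul b1 c1 (by positivity) (pow_nonneg (by linarith) _)
  have m2 : (n / 2 : ℝ) * (Real.exp (-(4 * M)) * (p * s / (1 + M)))
      ≤ ((n:ℝ) - s - t) * ((1 - p) ^ t * (1 - (1 - p) ^ s)) :=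
    mul_le_mul (by linarith) m1 (by positivity) (by linarith)
  refine le_trans (le_of_eq ?_) m2
  field_simp

section det
variable {n : ℕ}

/-- balls -/
noncomputable def bl (G : SimpleGraph (Fin n)) (v : Fin n) : ℕ → Finset (Fin n)
  | 0 => {v}
  | j + 1 => cnb G (bl G v j)

theorem mem_cnb {G : SimpleGraph (Fin n)} {X : Finset (Fin n)} {w : Fin n} :
    w ∈ cnb G X ↔ w ∈ X ∨ ∃ x ∈ X, G.Adj x w := by
  classical simp [cnb]

theorem mem_bl {G : SimpleGraph (Fin n)} {v w : Fin n} {j : ℕ} :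
    w ∈ bl G v j ↔ ∃ q : G.Walk v w, q.length ≤ j := by
  induction j generalizing w with
  | zero =>
    simp only [bl, Finset.mem_singleton]
    constructor
    · rintro rfl; exact ⟨Walk.nil, by simp⟩
    · rintro ⟨q, hq⟩
      exact (Walk.eq_of_length_eq_zero (Nat.le_zero.1 hq)).symm
  | succ j ih =>
    simp only [bl, mem_cnb]
    constructor
    · rintro (h | ⟨x, hx, h⟩)
      · obtain ⟨q, hq⟩ := ih.1 h
        exact ⟨q, by omega⟩
      · obtain ⟨q, hq⟩ := ih.1 hx
        exact ⟨q.concat h, by simp; omega⟩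
    · rintro ⟨q, hq⟩
      by_cases h0 : q.length ≤ j
      · left; exact ih.2 ⟨q, h0⟩
      · right
        have hnil : ¬ q.Nil := by
          intro h; have := Walk.length_eq_zero_iff.2 h; omega
        refine ⟨q.penultimate, ih.2 ⟨q.dropLast, ?_⟩, q.adj_penultimate hnil⟩
        simp; omega

theorem sep_of_bl {G : SimpleGraph (Fin n)} {u v w : Fin n} {j : ℕ} (hwu : w ≠ u)
    (h1 : w ∈ bl G u j) (h2 : w ∉ bl G v j) : G.dist w u ≠ G.dist w v := by
  obtain ⟨q, hq⟩ := mem_bl.1 h1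
  have hru : G.Reachable w u := ⟨q.reverse⟩
  have hdu : G.dist w u ≤ j := by
    have := SimpleGraph.dist_le q.reverse
    simp at this; omega
  have hpos : 0 < G.dist w u := hru.pos_dist_of_ne hwu
  by_cases hr : G.Reachable w v
  · obtain ⟨q', hq'⟩ := hr.exists_walk_length_eq_dist
    intro he
    exact h2 (mem_bl.2 ⟨q'.reverse, by simp; omega⟩)
  · have : G.dist w v = 0 := SimpleGraph.dist_eq_zero_of_not_reachable hr
    omega

theorem Nset_sub {G : SimpleGraph (Fin n)} {u v w : Fin n} {j : ℕ}
    (hw : w ∈ Nset G (bl G u j \ bl G v j) (bl G v j)) :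
    w ∈ bl G u (j + 1) ∧ w ∉ bl G v (j + 1) ∧ w ≠ u := by
  classical
  simp only [Nset, Finset.mem_filter, Finset.mem_univ, true_and] at hw
  obtain ⟨a, b, ⟨x, hx, hax⟩, c⟩ := hw
  refine ⟨?_, ?_, ?_⟩
  · simp only [bl, mem_cnb]
    right; exact ⟨x, (Finset.mem_sdiff.1 hx).1, hax.symm⟩
  · simp only [bl, mem_cnb]
    rintro (h | ⟨x, hx, h⟩)
    · exact b h
    · exact c x hx h.symm
  · rintro rfl
    exact a (Finset.mem_sdiff.2 ⟨mem_bl.2 ⟨Walk.nil, by simp⟩, b⟩)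

/-- The good event. -/
def Good (n : ℕ) (p η M : ℝ) (G : SimpleGraph (Fin n)) : Prop :=
  (∀ v, ((nb G v).card : ℝ) ≤ (1 + 2 * η) * (p * n)) ∧
  ∀ S T : Finset (Fin n), Disjoint S T → S.Nonempty → T.card ≤ 2 * S.card → p * S.card ≤ M →
    (1 - η) * mu n p S.card T.card ≤ ((Nset G S T).card : ℝ)

set_option maxHeartbeats 2000000 in
theorem det_sep {G : SimpleGraph (Fin n)} {p η A c y z L : ℝ} {i : ℕ}
    (hp0 : 0 < p) (hp1 : p < 1) (hn : 0 < n) (hi : 2 ≤ i) (hA : 0 < A)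
    (hc : c = (p * n) ^ i / n) (hcA : c ≤ A + 1)
    (hη0 : 0 < η) (hη1 : η ≤ 1 / 4) (hηd : 1 ≤ η * (p * n))
    (hz : z = 3 * η * i) (hz1 : z ≤ 1 / 4) (hy : y = 2 * (A + 1) / (p * n)) (hyη : 4 * y ≤ 2 * η)
    (hL : L = (1 - η) * (1 - 2 * y) * (1 - Real.exp (-((1 - z) * c)))
      * Real.exp (-((Real.exp z * c) / (1 - p))))
    (hG : Good n p η (2 * (A + 1)) G) :
    (∀ v, ((nb G v).card : ℝ) + 1 ≤ 2 * (p * n)) ∧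
    ∀ u v, u ≠ v → ((nonsep G u v).card : ℝ) ≤ (1 - 2 * L) * n := by
  classical
  obtain ⟨H1, H2⟩ := hG
  set d : ℝ := p * n with hd
  have hn0 : (0:ℝ) < n := by exact_mod_cast hn
  have hd0 : 0 < d := by positivity
  have hd1 : 1 ≤ d := by nlinarith
  have hc0 : 0 < c := by rw [hc]; positivity
  have hD : ∀ v, ((nb G v).card : ℝ) + 1 ≤ (1 + 3 * η) * d := by
    intro v; have := H1 v; nlinarith
  refine ⟨fun v => (hD v).trans (by nlinarith), ?_⟩
  have hz0 : 0 ≤ z := by rw [hz]; positivity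
  have hez : Real.exp z ≤ 4 / 3 := by
    have h1 := Real.add_one_le_exp (-z)
    have h2 : Real.exp z * Real.exp (-z) = 1 := by rw [← Real.exp_add]; simp
    nlinarith [Real.exp_pos z]
  have hjz : ∀ j, j ≤ i → 3 * η * (j:ℝ) ≤ z := by
    intro j hj
    rw [hz]
    have : (j:ℝ) ≤ i := by exact_mod_cast hj
    exact mul_le_mul_of_nonneg_left this (by positivity)
  have hal : ∀ j, j ≤ i → (1 + 3 * η) ^ j ≤ Real.exp z := by
    intro j hj
    have h1 : 1 + 3 * η ≤ Real.exp (3 * η) := by have := Real.add_one_le_exp (3 * η); linarith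
    refine (pow_le_pow_left₀ (by positivity) h1 j).trans ?_
    rw [← Real.exp_nat_mul]
    refine Real.exp_le_exp.2 ?_
    have := hjz j hj
    linarith
  have hbe : ∀ j, j ≤ i → 1 - z ≤ (1 - 3 * η) ^ j := by
    intro j hj
    have h1 := one_add_mul_le_pow (a := -(3 * η)) (by linarith) j
    have e : (1:ℝ) + -(3 * η) = 1 - 3 * η := by ring
    rw [e] at h1
    have := hjz j hj
    nlinarith
  have hball0 : ∀ v j, ((bl G v j).card : ℝ) ≤ ((1 + 3 * η) * d) ^ j := by
    intro v j
    induction j with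
    | zero => simp [bl]
    | succ j ih =>
      have := card_cnb G (bl G v j) _ hD
      rw [pow_succ, mul_comm]
      exact this.trans (mul_le_mul_of_nonneg_left ih (by positivity))
  have hball : ∀ v j, j ≤ i → ((bl G v j).card : ℝ) ≤ Real.exp z * d ^ j := by
    intro v j hj
    refine (hball0 v j).trans ?_
    rw [mul_pow]
    exact mul_le_mul_of_nonneg_right (hal j hj) (by positivity)
  -- p d^(i-1) = c
  have hpd : p * d ^ (i - 1) = c := by
    rw [hc]
    have : d ^ i = d ^ (i - 1) * d := by rw [← pow_succ]; congr 1; omega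
    rw [this, hd]; field_simp
  have hpd2 : p * d ^ (i - 2) = c / d := by
    rw [← hpd]
    have : d ^ (i - 1) = d ^ (i - 2) * d := by rw [← pow_succ]; congr 1; omega
    rw [this]; field_simp
  have hy0 : 0 < y := by rw [hy]; positivity
  have hy1 : y ≤ 1 / 2 := by linarith
  have hcd : Real.exp z * (c / d) ≤ y := by
    rw [hy, mul_div_assoc', div_le_div_iff_of_pos_right hd0]
    nlinarith
  have hUcard : ∀ u v, u ≠ v → ∀ j, j ≤ i - 1 →
      ((1 - 3 * η) * d) ^ j ≤ ((bl G u j \ bl G v j).card : ℝ) := by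
    intro u v huv j
    induction j with
    | zero =>
      intro _
      have : bl G u 0 \ bl G v 0 = {u} := by
        simp only [bl]; ext x; simp; rintro rfl; exact huv
      rw [this]; simp
    | succ j ih =>
      intro hj
      have ih' := ih (by omega)
      set S := bl G u j \ bl G v j with hS
      set T := bl G v j with hT
      have hSpos : 0 < (S.card : ℝ) := lt_of_lt_of_le (pow_pos (mul_pos (by linarith) hd0) _) ih'
      have hdj : d ^ j ≤ d ^ (i - 2) := pow_le_pow_right₀ hd1 (by omega)
      have hSle : (S.card : ℝ) ≤ Real.exp z * d ^ j := by
        refine le_trans ?_ (hball u j (by omega))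
        exact_mod_cast Finset.card_le_card Finset.sdiff_subset
      have hTle : (T.card : ℝ) ≤ Real.exp z * d ^ j := hball v j (by omega)
      have hyb : p * (Real.exp z * d ^ j) ≤ y := by
        refine le_trans ?_ hcd
        rw [← hpd2]
        have : 0 < p * Real.exp z := by positivity
        nlinarith
      have hps : p * S.card ≤ y := (mul_le_mul_of_nonneg_left hSle hp0.le).trans hyb
      have hpt : p * T.card ≤ y := (mul_le_mul_of_nonneg_left hTle hp0.le).trans hyb
      have hT2 : T.card ≤ 2 * S.card := by
        have h1 : (T.card : ℝ) ≤ 2 * S.card := by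
          rw [mul_pow] at ih'
          have := hbe j (by omega)
          have hdj0 : 0 < d ^ j := by positivity
          nlinarith [mul_le_mul_of_nonneg_right this hdj0.le]
        exact_mod_cast h1
      have hN := H2 S T Finset.sdiff_disjoint (Finset.card_pos.1 (by exact_mod_cast hSpos)) hT2
        (by linarith)
      have hm := mu_lower1 (n := n) (s := S.card) (t := T.card) hp0.le hp1.le hd1 hη0.le
        (by linarith) hyη hy1 hps hpt
      have hsub : Nset G S T ⊆ bl G u (j + 1) \ bl G v (j + 1) := by
        intro w hw
        obtain ⟨a, b, _⟩ := Nset_sub hw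
        exact Finset.mem_sdiff.2 ⟨a, b⟩
      have hcc : ((Nset G S T).card : ℝ) ≤ ((bl G u (j + 1) \ bl G v (j + 1)).card : ℝ) := by
        exact_mod_cast Finset.card_le_card hsub
      refine le_trans ?_ (hm.trans (hN.trans hcc))
      rw [pow_succ, mul_comm]
      exact mul_le_mul_of_nonneg_left ih' (mul_nonneg (by linarith) hd0.le)
  have hfinal : ∀ u v, u ≠ v →
      L * n ≤ ((Nset G (bl G u (i - 1) \ bl G v (i - 1)) (bl G v (i - 1))).card : ℝ) := by
    intro u v huv
    have ih' := hUcard u v huv (i - 1) le_rfl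
    set S := bl G u (i - 1) \ bl G v (i - 1) with hS
    set T := bl G v (i - 1) with hT
    have hSpos : 0 < (S.card : ℝ) := lt_of_lt_of_le (pow_pos (mul_pos (by linarith) hd0) _) ih'
    have hSle : (S.card : ℝ) ≤ Real.exp z * d ^ (i - 1) := by
      refine le_trans ?_ (hball u (i - 1) (by omega))
      exact_mod_cast Finset.card_le_card Finset.sdiff_subset
    have hTle : (T.card : ℝ) ≤ Real.exp z * d ^ (i - 1) := hball v (i - 1) (by omega)
    have hdj0 : 0 < d ^ (i - 1) := by positivity
    have hSge : (1 - z) * d ^ (i - 1) ≤ S.card := by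
      rw [mul_pow] at ih'
      exact (mul_le_mul_of_nonneg_right (hbe (i - 1) (by omega)) hdj0.le).trans ih'
    have hyb : Real.exp z * d ^ (i - 1) ≤ n * y := by
      have h1 : d ^ (i - 1) = n * (c / d) := by rw [← hpd, hd]; field_simp
      rw [h1]; nlinarith
    have hT2 : T.card ≤ 2 * S.card := by
      have h1 : (T.card : ℝ) ≤ 2 * S.card := by nlinarith
      exact_mod_cast h1
    have hN := H2 S T Finset.sdiff_disjoint (Finset.card_pos.1 (by exact_mod_cast hSpos)) hT2 (by
      have : p * S.card ≤ p * (Real.exp z * d ^ (i - 1)) := mul_le_mul_of_nonneg_left hSle hp0.le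
      nlinarith)
    have hm := mu_lower2 (n := n) (η := η) (y := y) (a := (1 - z) * c) (b := Real.exp z * c)
      (s := S.card) (t := T.card) hp0.le hp1
      (by linarith) hy1 (mul_nonneg (by linarith) hc0.le)
      (by rw [← hpd]; nlinarith) (by rw [← hpd]; nlinarith) (hSle.trans hyb) (hTle.trans hyb)
    rw [hL]
    exact hm.trans hN
  intro u v huv
  set N1 := Nset G (bl G u (i - 1) \ bl G v (i - 1)) (bl G v (i - 1)) with hN1
  set N2 := Nset G (bl G v (i - 1) \ bl G u (i - 1)) (bl G u (i - 1)) with hN2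
  have hdisj : Disjoint N1 N2 := by
    rw [Finset.disjoint_left]
    intro w hw1 hw2
    exact (Nset_sub hw2).2.1 (Nset_sub hw1).1
  have hsub : nonsep G u v ⊆ (N1 ∪ N2)ᶜ := by
    intro w hw
    simp only [nonsep, Finset.mem_filter, Finset.mem_univ, true_and] at hw
    rw [Finset.mem_compl, Finset.mem_union]
    rintro (h | h)
    · obtain ⟨a, b, c⟩ := Nset_sub h
      exact sep_of_bl c a b hw
    · obtain ⟨a, b, c⟩ := Nset_sub h
      exact sep_of_bl c a b hw.symm
  have h1 := Finset.card_le_card hsub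
  have h2 : (N1 ∪ N2)ᶜ.card + (N1.card + N2.card) = n := by
    rw [← Finset.card_union_of_disjoint hdisj, Finset.card_compl_add_card]; simp
  have h3 : ((nonsep G u v).card : ℝ) + (N1.card + N2.card) ≤ n := by
    exact_mod_cast (by omega : (nonsep G u v).card + (N1.card + N2.card) ≤ n)
  have h4 := hfinal u v huv
  have h5 := hfinal v u huv.symm
  linarith

end det


/-! ### The good event is likely -/

theorem sum_pow_card (n : ℕ) (y : ℝ) : ∑ S : Finset (Fin n), y ^ S.card = (1 + y) ^ n := by
  have := Fintype.sum_pow_mul_eq_add_pow (Fin n) y 1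
  simp only [one_pow, mul_one, Fintype.card_fin] at this
  rw [this, add_comm]

theorem prob_bad {n : ℕ} {p η M : ℝ} (hn : 0 < n) (hp0 : 0 < p) (hp1 : p ≤ 1 / 2)
    (hη0 : 0 ≤ η) (hη1 : η ≤ 1) (hM : 0 < M) (hd : 6 * M ≤ p * n)
    (hκ : 24 * Real.log n ≤ η ^ 2 * (Real.exp (-(4 * M)) / (2 * (1 + M)) * (p * n))) :
    gnpProb n p {G | ¬ Good n p η M G} ≤ (1 + Real.exp 2) / n := by
  classical
  have hn0 : (0:ℝ) < n := by exact_mod_cast hn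
  have hn1 : (1:ℝ) ≤ n := by exact_mod_cast hn
  set x : ℝ := (n:ℝ)⁻¹ with hx
  have hx0 : 0 < x := by positivity
  have hx1 : x ≤ 1 := inv_le_one_of_one_le₀ hn1
  have hxe : x = Real.exp (-Real.log n) := by rw [Real.exp_neg, Real.exp_log hn0]
  set κ : ℝ := Real.exp (-(4 * M)) / (2 * (1 + M)) with hκd
  have hκ1 : κ ≤ 1 := by
    rw [hκd, div_le_one (by positivity)]
    have : Real.exp (-(4 * M)) ≤ 1 := Real.exp_le_one_iff.2 (by linarith)
    linarith
  have hlog : 0 ≤ Real.log n := Real.log_nonneg hn1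
  let I : Finset (Fin n ⊕ (Finset (Fin n) × Finset (Fin n))) := Finset.univ
  let Bd : Fin n → Set (SimpleGraph (Fin n)) :=
    fun v => {G | (1 + 2 * η) * (p * n) < ((nb G v).card : ℝ)}
  let J : Finset (Finset (Fin n) × Finset (Fin n)) := Finset.univ.filter fun q =>
    Disjoint q.1 q.2 ∧ q.1.Nonempty ∧ q.2.card ≤ 2 * q.1.card ∧ p * q.1.card ≤ M
  let Bn : Finset (Fin n) × Finset (Fin n) → Set (SimpleGraph (Fin n)) :=
    fun q => {G | ((Nset G q.1 q.2).card : ℝ) < (1 - η) * mu n p q.1.card q.2.card}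
  have hU := gnp_union hp0.le (by linarith : p ≤ 1)
    ((Finset.univ : Finset (Fin n)).disjSum J)
    (Sum.elim Bd Bn) {G | ¬ Good n p η M G} (by
      intro G hG
      simp only [Set.mem_setOf_eq, Good, not_and_or] at hG
      rcases hG with h | h
      · push Not at h
        obtain ⟨v, hv⟩ := h
        exact ⟨Sum.inl v, by simp, hv⟩
      · push Not at h
        obtain ⟨S, T, h1, h2, h3, h4, h5⟩ := h
        exact ⟨Sum.inr (S, T), by simp [J, h1, h2, h3, h4], h5⟩)
  rw [Finset.sum_disjSum] at hU
  simp only [Sum.elim_inl, Sum.elim_inr] at hU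
  have hdeg : ∑ v : Fin n, gnpProb n p (Bd v) ≤ x := by
    have h1 : ∀ v ∈ (Finset.univ : Finset (Fin n)), gnpProb n p (Bd v) ≤ x ^ 2 := by
      intro v _
      refine (chernoff_deg hp0.le (by linarith) hη0 hη1 v).trans ?_
      rw [hxe, ← Real.exp_nat_mul]
      refine Real.exp_le_exp.2 ?_
      have h2 : η ^ 2 * (κ * (p * n)) ≤ η ^ 2 * (p * n) :=
        mul_le_mul_of_nonneg_left (by nlinarith [mul_pos hp0 hn0]) (by positivity)
      push_cast
      linarith
    refine (Finset.sum_le_sum h1).trans (le_of_eq ?_)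
    rw [Finset.sum_const, nsmul_eq_mul, Finset.card_univ, Fintype.card_fin, hx]
    field_simp
  have hNN : ∑ q ∈ J, gnpProb n p (Bn q) ≤ Real.exp 2 * x := by
    have h1 : ∀ q ∈ J, gnpProb n p (Bn q) ≤ x ^ 4 * ((x ^ 2) ^ q.1.card * (x ^ 2) ^ q.2.card) := by
      intro q hq
      simp only [J, Finset.mem_filter, Finset.mem_univ, true_and] at hq
      obtain ⟨a1, a2, a3, a4⟩ := hq
      refine (chernoff_N hp0.le (by linarith) hη0 hη1 q.1 q.2 a1).trans ?_
      have hmu := mu_lower3 (n := n) (s := q.1.card) (t := q.2.card) hp0 hp1 hd a4 a3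
      have hs : 1 ≤ q.1.card := a2.card_pos
      have h2 : x ^ (12 * q.1.card) ≤ x ^ 4 * ((x ^ 2) ^ q.1.card * (x ^ 2) ^ q.2.card) := by
        rw [← pow_mul, ← pow_mul, ← pow_add, ← pow_add]
        exact pow_le_pow_of_le_one hx0.le hx1 (by omega)
      refine le_trans ?_ h2
      rw [hxe, ← Real.exp_nat_mul]
      refine Real.exp_le_exp.2 ?_
      push_cast
      have h3 : η ^ 2 * (κ * ((p * n) * q.1.card)) ≤ η ^ 2 * mu n p q.1.card q.2.card :=
        mul_le_mul_of_nonneg_left hmu (by positivity)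
      have h4 : 24 * Real.log n * q.1.card ≤ η ^ 2 * (κ * (p * n)) * q.1.card :=
        mul_le_mul_of_nonneg_right hκ (by positivity)
      nlinarith
    refine (Finset.sum_le_sum h1).trans ?_
    have h5 : ∑ q ∈ J, x ^ 4 * ((x ^ 2) ^ q.1.card * (x ^ 2) ^ q.2.card)
        ≤ ∑ q : Finset (Fin n) × Finset (Fin n), x ^ 4 * ((x ^ 2) ^ q.1.card * (x ^ 2) ^ q.2.card) :=
      Finset.sum_le_sum_of_subset_of_nonneg (Finset.subset_univ _) (fun q _ _ => by positivity)
    refine h5.trans ?_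
    rw [← Finset.mul_sum]
    have h6 : ∑ q : Finset (Fin n) × Finset (Fin n), ((x ^ 2) ^ q.1.card * (x ^ 2) ^ q.2.card)
        = (1 + x ^ 2) ^ n * (1 + x ^ 2) ^ n := by
      rw [← sum_pow_card, Finset.sum_mul_sum, Fintype.sum_prod_type]
    rw [h6]
    have h7 : (1 + x ^ 2) ^ n ≤ Real.exp 1 := by
      have h8 : 1 + x ^ 2 ≤ Real.exp (x ^ 2) := by have := Real.add_one_le_exp (x ^ 2); linarith
      refine (pow_le_pow_left₀ (by positivity) h8 n).trans ?_
      rw [← Real.exp_nat_mul]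
      refine Real.exp_le_exp.2 ?_
      have : (n:ℝ) * x ^ 2 = x := by rw [hx]; field_simp
      rw [this]; exact hx1
    have h9 : (1 + x ^ 2) ^ n * (1 + x ^ 2) ^ n ≤ Real.exp 2 := by
      have : Real.exp 2 = Real.exp 1 * Real.exp 1 := by rw [← Real.exp_add]; norm_num
      rw [this]
      exact mul_le_mul h7 h7 (by positivity) (Real.exp_pos _).le
    have h10 : x ^ 4 ≤ x := by
      calc x ^ 4 ≤ x ^ 1 := pow_le_pow_of_le_one hx0.le hx1 (by norm_num)
        _ = x := pow_one x
    calc x ^ 4 * ((1 + x ^ 2) ^ n * (1 + x ^ 2) ^ n) ≤ x * Real.exp 2 :=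
          mul_le_mul h10 h9 (by positivity) hx0.le
      _ = Real.exp 2 * x := by ring
  calc _ ≤ x + Real.exp 2 * x := hU.trans (add_le_add hdeg hNN)
    _ = _ := by rw [hx]; field_simp

/-- one fixed `n` -/
theorem loc_le {n : ℕ} {G : SimpleGraph (Fin n)} {p η A c y z L : ℝ} {i : ℕ}
    (hp0 : 0 < p) (hp1 : p < 1) (hn : 0 < n) (hi : 2 ≤ i) (hA : 0 < A)
    (hc : c = (p * n) ^ i / n) (hcA : c ≤ A + 1)
    (hη0 : 0 < η) (hη1 : η ≤ 1 / 4) (hηd : 1 ≤ η * (p * n))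
    (hz : z = 3 * η * i) (hz1 : z ≤ 1 / 4) (hy : y = 2 * (A + 1) / (p * n)) (hyη : 4 * y ≤ 2 * η)
    (hL : L = (1 - η) * (1 - 2 * y) * (1 - Real.exp (-((1 - z) * c)))
      * Real.exp (-((Real.exp z * c) / (1 - p))))
    (hG : Good n p η (2 * (A + 1)) G)
    (hL0 : 0 < L) (hL1 : L ≤ 1 / 2) (hkn : (Real.log (p * n) + 2) / L + 1 ≤ n) :
    (localizationNumber G : ℝ) ≤ (Real.log (p * n) + 2) / L + 1 := by
  obtain ⟨hD, hsep⟩ := det_sep hp0 hp1 hn hi hA hc hcA hη0 hη1 hηd hz hz1 hy hyη hL hG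
  have hn0 : (0:ℝ) < n := by exact_mod_cast hn
  have hd0 : 0 < p * n := by positivity
  have hd1 : 1 ≤ p * n := by nlinarith
  have hlog : 0 ≤ Real.log (p * n) := Real.log_nonneg hd1
  set d : ℝ := p * n with hd
  set k := ⌈(Real.log d + 2) / L⌉₊ with hk
  have hx0 : 0 ≤ (Real.log d + 2) / L := by positivity
  have hk1 : (k:ℝ) ≤ (Real.log d + 2) / L + 1 := (Nat.ceil_lt_add_one hx0).le
  have hk2 : (Real.log d + 2) / L ≤ k := Nat.le_ceil _
  have hkn' : k ≤ n := by exact_mod_cast hk1.trans hkn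
  have hwin : CopsWin G k := by
    refine copsWin_of G k hkn' hn (2 * L) (2 * d) (by linarith) hsep hD ?_
    have h1 := one_sub_pow_le (p := 2 * L) (by linarith) k
    have h2 : Real.exp (-(2 * L * k)) ≤ Real.exp (-(2 * (Real.log d + 2))) := by
      refine Real.exp_le_exp.2 ?_
      rw [div_le_iff₀ hL0] at hk2
      linarith
    have h3 : Real.exp (-(2 * (Real.log d + 2))) * d ^ 2 = Real.exp (-4) := by
      have : d ^ 2 = Real.exp (2 * Real.log d) := by
        rw [two_mul, Real.exp_add, Real.exp_log hd0, sq]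
      rw [this, ← Real.exp_add]; congr 1; ring
    have h4 : Real.exp (-4) * 16 ≤ 1 := by
      have h5 : (2:ℝ) ≤ Real.exp 1 := by have := Real.add_one_le_exp (1:ℝ); linarith
      have h6 : (16:ℝ) ≤ Real.exp 4 := by
        have : Real.exp 4 = Real.exp 1 ^ 4 := by rw [← Real.exp_nat_mul]; norm_num
        rw [this]
        calc (16:ℝ) = 2 ^ 4 := by norm_num
          _ ≤ _ := pow_le_pow_left₀ (by norm_num) h5 4
      have h7 : Real.exp (-4) * Real.exp 4 = 1 := by rw [← Real.exp_add]; simp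
      nlinarith [Real.exp_pos (-4)]
    have h8 : (1 - 2 * L) ^ k * d ^ 2 ≤ Real.exp (-4) := by
      rw [← h3]; exact mul_le_mul_of_nonneg_right (h1.trans h2) (by positivity)
    nlinarith
  refine le_trans ?_ hk1
  exact_mod_cast Nat.sInf_le hwin

end Loc


set_option maxHeartbeats 4000000
theorem stmt13_localization_upper_bound_constant_c
    (p d : ℕ → ℝ) (i : ℕ → ℕ) (c : ℕ → ℝ)
    (hd : ∀ n, d n = p n * n)
    (hc : ∀ n, c n = d n ^ i n / n)
    (hlog3 : Filter.Tendsto (fun n : ℕ => (Real.log n) ^ 3 / d n) Filter.atTop (nhds 0))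
    (hdn : Filter.Tendsto (fun n : ℕ => d n / n) Filter.atTop (nhds 0))
    (himax : ∀ᶠ n : ℕ in Filter.atTop,
      c n ≤ 3 * Real.log n ∧ 3 * Real.log n < d n ^ (i n + 1) / n)
    (A : ℝ) (hA : 0 < A)
    (hcA : Filter.Tendsto c Filter.atTop (nhds A)) :
    ∃ ε : ℕ → ℝ, Filter.Tendsto ε Filter.atTop (nhds 0) ∧
      AAS p (fun n : ℕ =>
        {G : SimpleGraph (Fin n) |
          (localizationNumber G : ℝ)
            ≤ (1 + ε n) * (Real.log (d n) + 2 * Real.log (Real.log n))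
                * (Real.exp A / (1 - Real.exp (-A)))}) := by
  classical
  -- basic sequences
  have hlogT : Tendsto (fun n : ℕ => Real.log n) atTop atTop :=
    Real.tendsto_log_atTop.comp tendsto_natCast_atTop_atTop
  have hnT : Tendsto (fun n : ℕ => (n:ℝ)) atTop atTop := tendsto_natCast_atTop_atTop
  have hn1 : ∀ᶠ n : ℕ in atTop, 1 ≤ n := eventually_ge_atTop 1
  have hl1 : ∀ᶠ n : ℕ in atTop, 4 ≤ Real.log n := hlogT.eventually_ge_atTop 4
  have hc2 : ∀ᶠ n in atTop, A / 2 < c n := hcA.eventually (lt_mem_nhds (by linarith))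
  have hc1 : ∀ᶠ n in atTop, c n < A + 1 := hcA.eventually (gt_mem_nhds (by linarith))
  have hdpos : ∀ᶠ n in atTop, 0 < d n := by
    filter_upwards [hn1, hl1, hc2, himax] with n h1 h2 h3 h4
    have hn0 : (0:ℝ) < n := by exact_mod_cast h1
    have a1 : 0 < d n ^ i n := by
      have : 0 < d n ^ i n / n := by rw [← hc]; linarith
      by_contra hcon
      push Not at hcon
      exact absurd this (not_lt.2 (div_nonpos_of_nonpos_of_nonneg hcon hn0.le))
    have a2 : 0 < d n ^ (i n + 1) := by
      have : 0 < d n ^ (i n + 1) / n := by linarith [h4.2]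
      by_contra hcon
      push Not at hcon
      exact absurd this (not_lt.2 (div_nonpos_of_nonpos_of_nonneg hcon hn0.le))
    rw [pow_succ] at a2
    exact pos_of_mul_pos_right a2 a1.le
  have hdK : ∀ K : ℝ, 0 < K → ∀ᶠ n : ℕ in atTop, K * Real.log n ^ 3 ≤ d n := by
    intro K hK
    filter_upwards [hlog3.eventually (gt_mem_nhds (show (0:ℝ) < K⁻¹ by positivity)), hdpos] with n h1 h2
    rw [div_lt_iff₀ h2] at h1
    calc K * Real.log n ^ 3 ≤ K * (K⁻¹ * d n) := mul_le_mul_of_nonneg_left h1.le hK.le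
      _ = d n := by field_simp
  have hdT : Tendsto d atTop atTop := by
    refine tendsto_atTop_mono' _ ?_ hlogT
    filter_upwards [hdK 1 one_pos, hl1] with n h1 h2
    have : Real.log n ≤ Real.log n ^ 3 := by nlinarith [mul_nonneg (by linarith : (0:ℝ) ≤ Real.log n) (by linarith : (0:ℝ) ≤ Real.log n)]
    linarith
  have hldT : Tendsto (fun n => Real.log (d n)) atTop atTop := Real.tendsto_log_atTop.comp hdT
  have hpn : ∀ᶠ n in atTop, d n / n = p n := by
    filter_upwards [hn1] with n h1
    have hn0 : (0:ℝ) < n := by exact_mod_cast h1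
    rw [hd]; field_simp
  have hpT : Tendsto p atTop (𝓝 0) := hdn.congr' hpn
  have hi2 : ∀ᶠ n in atTop, 2 ≤ i n := by
    have hinv : Tendsto (fun n : ℕ => (n:ℝ)⁻¹) atTop (𝓝 0) := tendsto_inv_atTop_zero.comp hnT
    filter_upwards [hc2, hdn.eventually (gt_mem_nhds (show (0:ℝ) < A / 2 by positivity)),
      hinv.eventually (gt_mem_nhds (show (0:ℝ) < A / 2 by positivity))] with n h1 h2 h3
    by_contra hcon
    have : i n = 0 ∨ i n = 1 := by omega
    rw [hc] at h1
    rcases this with h | h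
    · rw [h] at h1; simp at h1; linarith
    · rw [h, pow_one] at h1; linarith
  -- η, y, z, L
  let η : ℕ → ℝ := fun n => (Real.log n)⁻¹
  let y : ℕ → ℝ := fun n => 2 * (A + 1) / d n
  let z : ℕ → ℝ := fun n => 3 * η n * i n
  let L : ℕ → ℝ := fun n => (1 - η n) * (1 - 2 * y n) * (1 - Real.exp (-((1 - z n) * c n)))
      * Real.exp (-((Real.exp (z n) * c n) / (1 - p n)))
  have hηT : Tendsto η atTop (𝓝 0) := tendsto_inv_atTop_zero.comp hlogT
  have hyT : Tendsto y atTop (𝓝 0) := hdT.const_div_atTop _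
  have hldi : Tendsto (fun n => (Real.log (d n))⁻¹) atTop (𝓝 0) := tendsto_inv_atTop_zero.comp hldT
  have hzT : Tendsto z atTop (𝓝 0) := by
    have hup : Tendsto (fun n => 3 * ((1 + Real.log (A + 1) * η n) * (Real.log (d n))⁻¹)) atTop (𝓝 0) := by
      have := ((hηT.const_mul (Real.log (A + 1))).const_add 1).mul hldi |>.const_mul 3
      simpa using this
    refine tendsto_of_tendsto_of_tendsto_of_le_of_le' tendsto_const_nhds hup ?_ ?_
    · filter_upwards [hl1] with n h1
      simp only [z, η]; positivity
    · filter_upwards [hl1, hn1, hc1, hc2, hdpos, hldT.eventually_ge_atTop 1] with n h1 h2 h3 h4 h5 h6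
      have hn0 : (0:ℝ) < n := by exact_mod_cast h2
      have e1 : d n ^ i n = c n * n := by rw [hc]; field_simp
      have e2 : (i n : ℝ) * Real.log (d n) = Real.log (c n) + Real.log n := by
        rw [← Real.log_pow, e1, Real.log_mul (by linarith) hn0.ne']
      have e3 : Real.log (c n) ≤ Real.log (A + 1) := Real.log_le_log (by linarith) h3.le
      have hl0 : 0 < Real.log (n:ℝ) := by linarith
      have hl0' : 0 < Real.log (d n) := by linarith
      have e4 : (i n : ℝ) ≤ (Real.log (A + 1) + Real.log n) * (Real.log (d n))⁻¹ := by
        rw [← div_eq_mul_inv, le_div_iff₀ hl0']; linarith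
      simp only [z, η]
      calc 3 * (Real.log (n:ℝ))⁻¹ * i n
          ≤ 3 * (Real.log (n:ℝ))⁻¹ * ((Real.log (A + 1) + Real.log n) * (Real.log (d n))⁻¹) :=
            mul_le_mul_of_nonneg_left e4 (by positivity)
        _ = _ := by field_simp; ring
  let q : ℝ := (1 - Real.exp (-A)) * Real.exp (-A)
  have hexpA : Real.exp (-A) < 1 := Real.exp_lt_one_iff.2 (by linarith)
  have hq0 : 0 < q := mul_pos (by linarith) (Real.exp_pos _)
  have hq1 : q < 1 / 2 := by
    simp only [q]; nlinarith [sq_nonneg (Real.exp (-A) - 1 / 2)]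
  have hLT : Tendsto L atTop (𝓝 q) := by
    have t1 : Tendsto (fun n => (1 - η n) * (1 - 2 * y n)) atTop (𝓝 ((1 - 0) * (1 - 2 * 0))) :=
      (hηT.const_sub 1).mul ((hyT.const_mul 2).const_sub 1)
    have t2 : Tendsto (fun n => 1 - Real.exp (-((1 - z n) * c n))) atTop
        (𝓝 (1 - Real.exp (-((1 - 0) * A)))) :=
      ((Real.continuous_exp.tendsto _).comp (((hzT.const_sub 1).mul hcA).neg)).const_sub 1
    have t3 : Tendsto (fun n => Real.exp (-((Real.exp (z n) * c n) / (1 - p n)))) atTop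
        (𝓝 (Real.exp (-((Real.exp 0 * A) / (1 - 0))))) :=
      (Real.continuous_exp.tendsto _).comp
        (((((Real.continuous_exp.tendsto 0).comp hzT).mul hcA).div (hpT.const_sub 1) (by norm_num)).neg)
    have := (t1.mul t2).mul t3
    simpa [L, q] using this
  -- the bound
  let Q : ℝ := Real.exp A / (1 - Real.exp (-A))
  have hQq : Q * q = 1 := by
    simp only [Q, q]
    have : Real.exp A * Real.exp (-A) = 1 := by rw [← Real.exp_add]; simp
    have h2 : (1 - Real.exp (-A)) ≠ 0 := by linarith
    field_simp; linarith
  have hQ0 : 0 < Q := div_pos (Real.exp_pos _) (by linarith)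
  let ε : ℕ → ℝ := fun n => ((1 + 2 * (Real.log (d n))⁻¹) / L n + (Real.log (d n))⁻¹) / Q - 1
  have hεT : Tendsto ε atTop (𝓝 0) := by
    have := ((((hldi.const_mul 2).const_add 1).div hLT hq0.ne').add hldi).div_const Q |>.sub_const 1
    have e : ((1 + 2 * 0) / q + 0) / Q - 1 = 0 := by
      have : q ≠ 0 := hq0.ne'
      have h3 : Q ≠ 0 := hQ0.ne'
      rw [sub_eq_zero, mul_zero, add_zero, add_zero, div_div, mul_comm, hQq, div_one]
    rw [e] at this
    exact this
  refine ⟨ε, hεT, ?_⟩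
  set M : ℝ := 2 * (A + 1) with hM
  have hM0 : 0 < M := by positivity
  set κ : ℝ := Real.exp (-(4 * M)) / (2 * (1 + M)) with hκ
  have hκ0 : 0 < κ := by positivity
  have hkn : ∀ᶠ n : ℕ in atTop, (Real.log n + 2) / (q / 2) + 1 ≤ n := by
    have h1 : Tendsto (fun n : ℕ => Real.log n / n) atTop (𝓝 0) := by
      have := Real.isLittleO_log_id_atTop.tendsto_div_nhds_zero
      exact this.comp hnT
    filter_upwards [h1.eventually (gt_mem_nhds (show (0:ℝ) < q / 4 by positivity)), hn1,
      hnT.eventually_ge_atTop (2 * (4 / q + 1))] with n h1 h2 h3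
    have hn0 : (0:ℝ) < n := by exact_mod_cast h2
    rw [div_lt_iff₀ hn0] at h1
    have e1 : (Real.log n + 2) / (q / 2) + 1 = 2 * (Real.log n) / q + (4 / q + 1) := by
      field_simp; ring
    have e2 : 2 * (Real.log n) / q ≤ n / 2 := by
      rw [div_le_iff₀ hq0]; linarith
    linarith
  have hmain : ∀ᶠ n : ℕ in atTop, 1 - (1 + Real.exp 2) / n ≤ gnpProb n (p n)
        {G : SimpleGraph (Fin n) |
          (localizationNumber G : ℝ)
            ≤ (1 + ε n) * (Real.log (d n) + 2 * Real.log (Real.log n))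
                * (Real.exp A / (1 - Real.exp (-A)))} ∧ 0 ≤ p n ∧ p n ≤ 1 := by
    filter_upwards [hl1, hn1, hc1, hc2, hdpos, hldT.eventually_ge_atTop 1, hi2,
      hpT.eventually (gt_mem_nhds (show (0:ℝ) < 1 / 2 by norm_num)),
      hzT.eventually (gt_mem_nhds (show (0:ℝ) < 1 / 4 by norm_num)),
      hLT.eventually (lt_mem_nhds (show q / 2 < q by linarith)),
      hLT.eventually (gt_mem_nhds hq1), hkn,
      hdK (24 / κ) (by positivity), hdK (1 + 6 * M + 4 * (A + 1)) (by positivity),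
      hdn.eventually (gt_mem_nhds (show (0:ℝ) < 1 by norm_num))] with
      n hl hn hc1 hc2 hd0 hld hi hp2 hz hL0 hL1 hkn hK1 hK2 hdn1
    have hn0 : (0:ℝ) < n := by exact_mod_cast hn
    have hp0 : 0 < p n := by
      have := hd n ▸ hd0
      exact pos_of_mul_pos_left this hn0.le
    refine ⟨?_, hp0.le, by linarith⟩
    set l : ℝ := Real.log n with hldef
    have hl0 : 0 < l := by linarith
    have hl3 : l ≤ l ^ 3 := by nlinarith [mul_nonneg hl0.le hl0.le]
    have hdl : (1 + 6 * M + 4 * (A + 1)) * l ≤ d n :=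
      (mul_le_mul_of_nonneg_left hl3 (by positivity)).trans hK2
    have hη0 : 0 < η n := by simp only [η]; positivity
    have hηl : η n * l = 1 := by simp only [η]; exact inv_mul_cancel₀ hl0.ne'
    have hη1 : η n ≤ 1 / 4 := by nlinarith
    have hηd : 1 ≤ η n * d n := by
      have : l ≤ d n := by nlinarith
      nlinarith
    have hdM : 6 * M ≤ d n := by nlinarith
    have hyη : 4 * y n ≤ 2 * η n := by
      have h1 : 4 * (A + 1) * l ≤ d n := by nlinarith
      simp only [y]
      rw [mul_div_assoc', div_le_iff₀ hd0]
      nlinarith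
    have hκ' : 24 * Real.log n ≤ η n ^ 2 * (κ * (p n * n)) := by
      rw [← hd n, ← hldef]
      have h1 : 24 * l ^ 3 ≤ κ * d n := by
        have : 24 / κ * l ^ 3 * κ ≤ d n * κ := mul_le_mul_of_nonneg_right hK1 hκ0.le
        have e : 24 / κ * l ^ 3 * κ = 24 * l ^ 3 := by field_simp
        linarith
      have h2 : η n ^ 2 * (24 * l ^ 3) = 24 * l := by
        have : η n ^ 2 * (24 * l ^ 3) = 24 * l * (η n * l) ^ 2 := by ring
        rw [this, hηl]; ring
      rw [← h2]
      exact mul_le_mul_of_nonneg_left h1 (by positivity)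
    have hbad := Loc.prob_bad (n := n) (p := p n) (η := η n) (M := M) hn hp0 hp2.le hη0.le
      (by linarith) hM0 (by rw [← hd n]; exact hdM) hκ'
    have hLpos : 0 < L n := by linarith
    have hldn : Real.log (d n) ≤ l := by
      refine Real.log_le_log hd0 ?_
      rw [div_lt_one hn0] at hdn1; exact hdn1.le
    have hkn' : (Real.log (d n) + 2) / L n + 1 ≤ n := by
      refine le_trans ?_ hkn
      have : (Real.log (d n) + 2) / L n ≤ (l + 2) / (q / 2) :=
        div_le_div₀ (by linarith) (by linarith) (by linarith) hL0.le
      linarith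
    rw [Loc.gnp_compl]
    have hmono := Loc.gnp_mono (n := n) hp0.le (by linarith : p n ≤ 1)
      (A := {G : SimpleGraph (Fin n) |
          (localizationNumber G : ℝ)
            ≤ (1 + ε n) * (Real.log (d n) + 2 * Real.log (Real.log n))
                * (Real.exp A / (1 - Real.exp (-A)))}ᶜ)
      (B := {G | ¬ Loc.Good n (p n) (η n) M G}) (by
        intro G hG hgood
        apply hG
        have hloc := Loc.loc_le (n := n) (G := G) (p := p n) (η := η n) (A := A) (c := c n) (y := y n)
          (z := z n) (L := L n) (i := i n) hp0 (by linarith) hn hi hA (by rw [hc, ← hd]) hc1.le hη0 hη1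
          (by rw [← hd n]; exact hηd) rfl hz.le (by rw [← hd n]) hyη rfl hgood hLpos hL1.le
          (by rw [← hd n]; exact hkn')
        rw [← hd n] at hloc
        show (localizationNumber G : ℝ) ≤ (1 + ε n) * (Real.log (d n) + 2 * Real.log l) * Q
        refine hloc.trans ?_
        have hldp : 0 < Real.log (d n) := by linarith
        have e1 : (1 + ε n) * Real.log (d n) * Q = (Real.log (d n) + 2) / L n + 1 := by
          simp only [ε]
          field_simp
          ring
        have e2 : 0 ≤ 1 + ε n := by
          have : 1 + ε n = ((1 + 2 * (Real.log (d n))⁻¹) / L n + (Real.log (d n))⁻¹) / Q := by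
            simp only [ε]; ring
          rw [this]; positivity
        rw [← e1]
        have e3 : 0 ≤ Real.log l := Real.log_nonneg (by linarith)
        refine mul_le_mul_of_nonneg_right ?_ hQ0.le
        exact mul_le_mul_of_nonneg_left (by linarith) e2)
    linarith
  have hlow : Tendsto (fun n : ℕ => 1 - (1 + Real.exp 2) / (n:ℝ)) atTop (𝓝 1) := by
    have := (hnT.const_div_atTop (1 + Real.exp 2)).const_sub 1
    simpa using this
  refine tendsto_of_tendsto_of_tendsto_of_le_of_le' hlow tendsto_const_nhds ?_ ?_
  · filter_upwards [hmain] with n h using h.1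
  · filter_upwards [hmain] with n h using Loc.gnp_le_one h.2.1 h.2.2 _
end

section
/- Suppose d = d(n) := p(n)·n satisfies (log n)^3 ≪ d ≪ n. Let i = i(n) ∈ ℕ be the largest integer such that c = c(n) := d^i/n ≤ 3·log n, and suppose c → ∞ and c − (log d − log log d) → −∞ as n → ∞. Then asymptotically almost surely, for G ∈ G(n,p): ζ(G) ≤ (1 + o(1))·(log d + 2·log log n)·e^c. -/
open Filter SimpleGraph Set
open scoped Topology

open Filter SimpleGraph Set
open scoped Topology

open Classical in
lemma probe_eq_dist {V : Type*} (G : SimpleGraph V) (S : Finset V) (u v : V)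
    (h : probe G S u = probe G S v) (s : V) (hs : s ∈ S) : G.dist s u = G.dist s v := by
  have h2 := congrArg (fun x => x.2 s) h
  simpa [probe, hs] using h2

open Classical in
lemma exists_sensors {V : Type*} [Fintype V] [Nonempty V] (G : SimpleGraph V) (k : ℕ) (q : ℝ)
    (hq : ∀ u v : V, u ≠ v → q * Fintype.card V ≤
      ((Finset.univ.filter fun s => G.dist s u ≠ G.dist s v).card : ℝ))
    (hk : k ≤ Fintype.card V) (W : Finset V) :
    ∃ S : Finset V, S.card = k ∧ ∀ C : Finset V, C ⊆ W →
      (∀ u ∈ C, ∀ v ∈ C, probe G S u = probe G S v) →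
      ((C.card : ℝ) * C.card - C.card) ≤ (W.card : ℝ) ^ 2 * Real.exp (-(q * k)) := by
  set n : ℝ := (Fintype.card V : ℝ) with hn
  have hnpos : 0 < n := by
    rw [hn]; exact_mod_cast Fintype.card_pos
  let bad : (Fin k → V) → Finset (V × V) := fun τ =>
    W.offDiag.filter fun x => ∀ j, G.dist (τ j) x.1 = G.dist (τ j) x.2
  have key : ∑ τ : Fin k → V, ((bad τ).card : ℝ) ≤
      ∑ τ : Fin k → V, (W.card : ℝ) ^ 2 * Real.exp (-(q * k)) := by
    have h1 : ∑ τ : Fin k → V, ((bad τ).card : ℝ) =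
        ∑ x ∈ W.offDiag, ((Finset.univ.filter fun τ : Fin k → V =>
          ∀ j, G.dist (τ j) x.1 = G.dist (τ j) x.2).card : ℝ) := by
      simp only [bad, Finset.card_filter, Nat.cast_sum]
      rw [Finset.sum_comm]
    have h2 : ∀ x ∈ W.offDiag, ((Finset.univ.filter fun τ : Fin k → V =>
          ∀ j, G.dist (τ j) x.1 = G.dist (τ j) x.2).card : ℝ) ≤ n ^ k * Real.exp (-(q * k)) := by
      intro x hx
      have hne : x.1 ≠ x.2 := by simp at hx; exact hx.2.2
      have e : (Finset.univ.filter fun τ : Fin k → V =>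
          ∀ j, G.dist (τ j) x.1 = G.dist (τ j) x.2) =
          Fintype.piFinset (fun _ : Fin k => Finset.univ.filter fun s => G.dist s x.1 = G.dist s x.2) := by
        ext τ; simp [Fintype.mem_piFinset]
      rw [e, Fintype.card_piFinset]
      simp only [Finset.prod_const, Finset.card_univ, Fintype.card_fin, Nat.cast_pow]
      have h3 := hq _ _ hne
      have h4 : ((Finset.univ.filter fun s => G.dist s x.1 = G.dist s x.2).card : ℝ) +
          ((Finset.univ.filter fun s => G.dist s x.1 ≠ G.dist s x.2).card : ℝ) = n := by
        rw [hn, ← Finset.card_univ]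
        exact_mod_cast Finset.card_filter_add_card_filter_not (s := Finset.univ)
          (fun s => G.dist s x.1 = G.dist s x.2)
      have h5 : ((Finset.univ.filter fun s => G.dist s x.1 = G.dist s x.2).card : ℝ) ≤
          n * Real.exp (-q) := by
        have := Real.add_one_le_exp (-q)
        nlinarith
      calc _ ≤ (n * Real.exp (-q)) ^ k := by gcongr
        _ = _ := by
          rw [mul_pow, ← Real.exp_nat_mul]; congr 2; ring
    rw [h1]
    calc _ ≤ ∑ x ∈ W.offDiag, n ^ k * Real.exp (-(q * k)) := Finset.sum_le_sum h2
      _ = (W.offDiag.card : ℝ) * (n ^ k * Real.exp (-(q * k))) := by simp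
      _ ≤ (W.card : ℝ) ^ 2 * (n ^ k * Real.exp (-(q * k))) := by
        gcongr
        rw [Finset.offDiag_card, sq]
        exact_mod_cast Nat.sub_le _ _
      _ = _ := by
        simp [hn]; ring
  obtain ⟨τ, -, hτ⟩ := Finset.exists_le_of_sum_le Finset.univ_nonempty key
  obtain ⟨S, hS, hSc⟩ := Finset.exists_superset_card_eq (s := Finset.univ.image τ) (n := k)
    (le_trans Finset.card_image_le (by simp)) hk
  refine ⟨S, hSc, fun C hC hp => le_trans ?_ hτ⟩
  have hsub : C.offDiag ⊆ bad τ := by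
    intro x hx
    simp only [Finset.mem_offDiag] at hx
    simp only [bad, Finset.mem_filter, Finset.mem_offDiag]
    exact ⟨⟨hC hx.1, hC hx.2.1, hx.2.2⟩, fun j =>
      probe_eq_dist G S _ _ (hp _ hx.1 _ hx.2.1) _ (hS (by simp))⟩
  have := Finset.card_le_card hsub
  rw [Finset.offDiag_card] at this
  have h6 : C.card * C.card ≤ (bad τ).card + C.card := by omega
  have h7 : (C.card : ℝ) * C.card ≤ (bad τ).card + C.card := by exact_mod_cast h6
  linarith

open Classical in
noncomputable def possSet {V : Type*} [Fintype V] (G : SimpleGraph V)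
    (h : List (Finset V × (V → ℕ))) : Finset V :=
  h.foldl (fun W r => Finset.univ.filter fun v => ∃ u ∈ W, probe G r.1 u = r ∧ (v = u ∨ G.Adj u v))
    Finset.univ

open Classical in
lemma copsWin_of {V : Type*} [Fintype V] [Nonempty V] (G : SimpleGraph V) (Dg k : ℕ) (q : ℝ)
    (hdeg : ∀ u, (Finset.univ.filter fun v => v = u ∨ G.Adj u v).card ≤ Dg)
    (hq : ∀ u v : V, u ≠ v → q * Fintype.card V ≤
      ((Finset.univ.filter fun s => G.dist s u ≠ G.dist s v).card : ℝ))
    (hk : k ≤ Fintype.card V)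
    (hsmall : (Dg : ℝ) ^ 2 * Real.exp (-(q * k)) < 1 / 2) : CopsWin G k := by
  choose f hf1 hf2 using exists_sensors G k q hq hk
  let σ : CopStrategy V := fun h => f (possSet G h)
  refine ⟨σ, fun h => hf1 _, fun w hw => ?_⟩
  let Wt : ℕ → Finset V := fun t => possSet G (gameHistory G σ w t)
  let St : ℕ → Finset V := fun t => σ (gameHistory G σ w t)
  let Rt : ℕ → Finset V := fun t => (Wt t).filter fun v => probe G (St t) v = probe G (St t) (w t)
  have hWsucc : ∀ t, Wt (t + 1) = Finset.univ.filter
      fun v => ∃ u ∈ Wt t, probe G (St t) u = probe G (St t) (w t) ∧ (v = u ∨ G.Adj u v) := by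
    intro t
    simp only [Wt, possSet, gameHistory, List.foldl_append, List.foldl_cons, List.foldl_nil]
    rfl
  have hmem : ∀ t, ∀ w' : ℕ → V, IsRobberWalk G w' →
      gameHistory G σ w' t = gameHistory G σ w t → w' t ∈ Wt t := by
    intro t
    induction t with
    | zero => intro w' _ _; simp [Wt, possSet, gameHistory]
    | succ t ih =>
      intro w' hw' hh
      simp only [gameHistory] at hh
      obtain ⟨h1, h2⟩ := List.append_inj' hh rfl
      have h3 := ih w' hw' h1
      rw [hWsucc]
      simp only [Finset.mem_filter, Finset.mem_univ, true_and]
      refine ⟨w' t, h3, ?_, hw' t⟩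
      rw [h1] at h2
      simpa using h2
  have hmemR : ∀ t, ∀ w' : ℕ → V, IsRobberWalk G w' →
      gameHistory G σ w' (t + 1) = gameHistory G σ w (t + 1) → w' t ∈ Rt t := by
    intro t w' hw' hh
    simp only [gameHistory] at hh
    obtain ⟨h1, h2⟩ := List.append_inj' hh rfl
    rw [h1] at h2
    simp only [Rt, Finset.mem_filter]
    exact ⟨hmem t w' hw' h1, by simpa using h2⟩
  by_contra hcon
  push Not at hcon
  have hR2 : ∀ t, 2 ≤ (Rt t).card := by
    intro t
    obtain ⟨w', hw', hh, hne⟩ := hcon t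
    exact Finset.one_lt_card.2 ⟨w' t, hmemR t w' hw' hh, w t, hmemR t w hw rfl, hne⟩
  have hWc : ∀ t, (Wt (t + 1)).card ≤ Dg * (Rt t).card := by
    intro t
    have : Wt (t + 1) ⊆ (Rt t).biUnion fun u => Finset.univ.filter fun v => v = u ∨ G.Adj u v := by
      rw [hWsucc]
      intro v hv
      simp only [Finset.mem_filter, Finset.mem_univ, true_and] at hv
      obtain ⟨u, h1, h2, h3⟩ := hv
      simp only [Finset.mem_biUnion, Finset.mem_filter, Finset.mem_univ, true_and, Rt]
      exact ⟨u, ⟨h1, h2⟩, h3⟩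
    calc _ ≤ _ := Finset.card_le_card this
      _ ≤ _ := Finset.card_biUnion_le
      _ ≤ ∑ u ∈ Rt t, Dg := Finset.sum_le_sum fun u _ => hdeg u
      _ = _ := by simp [mul_comm]
  have hdec : ∀ t, (Rt (t + 1)).card < (Rt t).card := by
    intro t
    have h1 := hf2 (Wt (t + 1)) (Rt (t + 1)) (Finset.filter_subset _ _) (by
      intro u hu v hv
      simp only [Rt, Finset.mem_filter] at hu hv
      exact hu.2.trans hv.2.symm)
    have h2 : ((Wt (t + 1)).card : ℝ) ≤ Dg * (Rt t).card := by exact_mod_cast hWc t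
    have h3 : ((Wt (t + 1)).card : ℝ) ^ 2 * Real.exp (-(q * k)) ≤
        (Dg * (Rt t).card : ℝ) ^ 2 * Real.exp (-(q * k)) := by gcongr
    have hr : (2 : ℝ) ≤ (Rt t).card := by exact_mod_cast hR2 t
    by_contra hle
    push Not at hle
    have hle' : ((Rt t).card : ℝ) ≤ (Rt (t + 1)).card := by exact_mod_cast hle
    have h4 : (Dg * (Rt t).card : ℝ) ^ 2 * Real.exp (-(q * k)) < 1 / 2 * ((Rt t).card : ℝ) ^ 2 := by
      have : (0 : ℝ) < ((Rt t).card : ℝ) ^ 2 := by positivity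
      nlinarith
    nlinarith
  have : ∀ t, (Rt t).card + t ≤ (Rt 0).card := by
    intro t
    induction t with
    | zero => simp
    | succ t ih => have := hdec t; omega
  have h1 := this ((Rt 0).card + 1)
  omega

open Filter SimpleGraph Set
open scoped Topology

open Classical in
/-- Closed neighbourhood of a finite set. -/
noncomputable def stepB {V : Type*} [Fintype V] (G : SimpleGraph V) (A : Finset V) : Finset V :=
  A ∪ Finset.univ.filter fun v => ∃ a ∈ A, G.Adj a v

/-- Ball of radius `j` around a finite set. -/
noncomputable def ballB {V : Type*} [Fintype V] (G : SimpleGraph V) (U : Finset V) : ℕ → Finset V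
  | 0 => U
  | j + 1 => stepB G (ballB G U j)

open Classical in
/-- Vertices of `T` without neighbours in `S`. -/
noncomputable def nonN {V : Type*} (G : SimpleGraph V) (S T : Finset V) : Finset V :=
  T.filter fun t => ∀ s ∈ S, ¬ G.Adj s t

lemma mem_nonN {V : Type*} (G : SimpleGraph V) (S T : Finset V) (t : V) :
    t ∈ nonN G S T ↔ t ∈ T ∧ ∀ s ∈ S, ¬ G.Adj s t := by
  simp [nonN]

lemma nonN_congr {V : Type*} (G G' : SimpleGraph V) (S T : Finset V)
    (h : ∀ s ∈ S, ∀ t ∈ T, G.Adj s t ↔ G'.Adj s t) : nonN G S T = nonN G' S T := by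
  ext t
  rw [mem_nonN, mem_nonN]
  exact and_congr_right fun ht => forall₂_congr fun s hs => not_congr (h s hs t ht)

lemma mem_stepB {V : Type*} [Fintype V] (G : SimpleGraph V) (A : Finset V) (v : V) :
    v ∈ stepB G A ↔ v ∈ A ∨ ∃ a ∈ A, G.Adj a v := by
  simp [stepB]

lemma ballB_subset_succ {V : Type*} [Fintype V] (G : SimpleGraph V) (U : Finset V) (j : ℕ) :
    ballB G U j ⊆ ballB G U (j + 1) := by
  intro v hv
  simp only [ballB, mem_stepB]; exact Or.inl hv

lemma ballB_mono {V : Type*} [Fintype V] (G : SimpleGraph V) (U : Finset V) {j k : ℕ} (h : j ≤ k) :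
    ballB G U j ⊆ ballB G U k :=
  monotone_nat_of_le_succ (f := fun j => ballB G U j) (ballB_subset_succ G U) h

lemma ballB_mem_iff {V : Type*} [Fintype V] (G : SimpleGraph V) (U : Finset V) (j : ℕ) (s : V) :
    s ∈ ballB G U j ↔ ∃ u ∈ U, ∃ w : G.Walk s u, w.length ≤ j := by
  induction j generalizing s with
  | zero =>
    simp only [ballB]
    constructor
    · intro h; exact ⟨s, h, Walk.nil, by simp⟩
    · rintro ⟨u, hu, w, hw⟩
      have := Walk.eq_of_length_eq_zero (p := w) (by omega)
      rwa [this]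
  | succ j ih =>
    simp only [ballB, mem_stepB, ih]
    constructor
    · rintro (⟨u, hu, w, hw⟩ | ⟨a, ⟨u, hu, w, hw⟩, ha⟩)
      · exact ⟨u, hu, w, by omega⟩
      · exact ⟨u, hu, Walk.cons ha.symm w, by simp; omega⟩
    · rintro ⟨u, hu, w, hw⟩
      cases w with
      | nil => exact Or.inl ⟨s, hu, Walk.nil, by simp⟩
      | cons h w' =>
        rename_i b
        exact Or.inr ⟨b, ⟨u, hu, w', by simp at hw; omega⟩, h.symm⟩

lemma dist_ne_of_ball {V : Type*} [Fintype V] (G : SimpleGraph V) (u v s : V) (i : ℕ)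
    (hv : s ∈ ballB G {v} i) (hu : s ∉ ballB G {u} i) (hne : s ≠ v) : G.dist s u ≠ G.dist s v := by
  rw [ballB_mem_iff] at hv hu
  obtain ⟨v', hv', w, hw⟩ := hv
  simp only [Finset.mem_singleton] at hv'
  subst hv'
  have h1 : G.dist s v' ≤ i := le_trans (dist_le w) hw
  have hr : G.Reachable s v' := ⟨w⟩
  have h2 : 0 < G.dist s v' := hr.pos_dist_of_ne hne
  intro heq
  have hr2 : G.Reachable s u := by
    by_contra hc
    rw [dist_eq_zero_of_not_reachable hc] at heq
    omega
  obtain ⟨w2, hw2⟩ := hr2.exists_walk_length_eq_dist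
  exact hu ⟨u, by simp, w2, by omega⟩

lemma ballB_pair {V : Type*} [Fintype V] [DecidableEq V] (G : SimpleGraph V) (u v s : V) (i : ℕ) :
    s ∈ ballB G {u, v} i ↔ s ∈ ballB G {u} i ∨ s ∈ ballB G {v} i := by
  simp [ballB_mem_iff]

lemma card_dis {V : Type*} [Fintype V] [DecidableEq V] (G : SimpleGraph V) (u v : V) (i : ℕ) :
    ((ballB G {u} i)ᶜ.card : ℝ) + (ballB G {v} i)ᶜ.card - 2 * (ballB G {u, v} i)ᶜ.card - 2 ≤
      ((Finset.univ.filter fun s => G.dist s u ≠ G.dist s v).card : ℝ) := by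
  set Du := (ballB G {u} i)ᶜ
  set Dv := (ballB G {v} i)ᶜ
  have hI : (ballB G {u, v} i)ᶜ = Du ∩ Dv := by
    ext s; simp [Du, Dv, ballB_pair]
  rw [hI]
  have hsub : (Du \ Dv) ∪ (Dv \ Du) ⊆
      (Finset.univ.filter fun s => G.dist s u ≠ G.dist s v) ∪ {u, v} := by
    intro s hs
    by_cases hu : s = u
    · simp [hu]
    by_cases hv : s = v
    · simp [hv]
    simp only [Du, Dv, Finset.mem_union, Finset.mem_sdiff, Finset.mem_compl, not_not] at hs
    simp only [Finset.mem_union, Finset.mem_filter, Finset.mem_univ, true_and]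
    left
    rcases hs with ⟨h1, h2⟩ | ⟨h1, h2⟩
    · exact dist_ne_of_ball G u v s i h2 h1 hv
    · exact (dist_ne_of_ball G v u s i h2 h1 hu).symm
  have h1 := Finset.card_le_card hsub
  have h2 : ((Du \ Dv) ∪ (Dv \ Du)).card = (Du \ Dv).card + (Dv \ Du).card := by
    apply Finset.card_union_of_disjoint
    rw [Finset.disjoint_left]; intro s; simp; tauto
  have h3 := Finset.card_sdiff_add_card_inter Du Dv
  have h4 := Finset.card_sdiff_add_card_inter Dv Du
  rw [Finset.inter_comm] at h4
  have h5 := Finset.card_union_le (Finset.univ.filter fun s => G.dist s u ≠ G.dist s v) {u, v}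
  have h6 : ({u, v} : Finset V).card ≤ 2 := Finset.card_le_two
  have h7 : Du.card + Dv.card ≤
      (Finset.univ.filter fun s => G.dist s u ≠ G.dist s v).card + 2 + 2 * (Du ∩ Dv).card := by
    omega
  have h8 : (Du.card : ℝ) + Dv.card ≤
      (Finset.univ.filter fun s => G.dist s u ≠ G.dist s v).card + 2 + 2 * (Du ∩ Dv).card := by
    exact_mod_cast h7
  linarith

open Classical in
lemma card_ballB_le {V : Type*} [Fintype V] (G : SimpleGraph V) (Dg : ℕ)
    (hdeg : ∀ u, (Finset.univ.filter fun v => v = u ∨ G.Adj u v).card ≤ Dg)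
    (U : Finset V) (j : ℕ) : (ballB G U j).card ≤ Dg ^ j * U.card := by
  induction j with
  | zero => simp [ballB]
  | succ j ih =>
    have : ballB G U (j + 1) ⊆ (ballB G U j).biUnion
        fun u => Finset.univ.filter fun v => v = u ∨ G.Adj u v := by
      intro v hv
      simp only [ballB, mem_stepB] at hv
      simp only [Finset.mem_biUnion, Finset.mem_filter, Finset.mem_univ, true_and]
      rcases hv with h | ⟨a, h1, h2⟩
      · exact ⟨v, h, Or.inl rfl⟩
      · exact ⟨a, h1, Or.inr h2⟩
    calc _ ≤ _ := Finset.card_le_card this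
      _ ≤ _ := Finset.card_biUnion_le
      _ ≤ ∑ u ∈ ballB G U j, Dg := Finset.sum_le_sum fun u _ => hdeg u
      _ = (ballB G U j).card * Dg := by simp
      _ ≤ (Dg ^ j * U.card) * Dg := Nat.mul_le_mul_right _ ih
      _ = _ := by ring

lemma stepB_congr {V : Type*} [Fintype V] (G G' : SimpleGraph V) (A B : Finset V)
    (h : ∀ a ∈ B, ∀ v, G.Adj a v ↔ G'.Adj a v) (hA : A ⊆ B) : stepB G A = stepB G' A := by
  ext v
  simp only [mem_stepB]
  refine or_congr Iff.rfl ⟨?_, ?_⟩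
  · rintro ⟨a, ha, hav⟩; exact ⟨a, ha, (h a (hA ha) v).1 hav⟩
  · rintro ⟨a, ha, hav⟩; exact ⟨a, ha, (h a (hA ha) v).2 hav⟩

lemma ballB_congr {V : Type*} [Fintype V] (G G' : SimpleGraph V) (U : Finset V) (m : ℕ)
    (h : ∀ a ∈ ballB G U m, ∀ v, G.Adj a v ↔ G'.Adj a v) (j : ℕ) (hj : j ≤ m + 1) :
    ballB G' U j = ballB G U j := by
  induction j with
  | zero => rfl
  | succ j ih =>
    simp only [ballB]
    rw [ih (by omega)]
    exact (stepB_congr G G' _ _ h (ballB_mono G U (by omega))).symm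

open Classical in
lemma compl_ballB {V : Type*} [Fintype V] (G : SimpleGraph V) (U : Finset V) (m : ℕ) :
    (ballB G U (m + 2))ᶜ =
      nonN G (ballB G U (m + 1) \ ballB G U m) (ballB G U (m + 1))ᶜ := by
  ext t
  have e : t ∈ ballB G U (m + 2) ↔ t ∈ ballB G U (m + 1) ∨ ∃ a ∈ ballB G U (m + 1), G.Adj a t := by
    show t ∈ stepB G _ ↔ _
    rw [mem_stepB]
  simp only [Finset.mem_compl, e, nonN, Finset.mem_filter, Finset.mem_sdiff]
  push Not
  refine and_congr_right fun ht => ⟨fun h s hs => h s hs.1, fun h s hs hadj => ?_⟩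
  by_cases hm : s ∈ ballB G U m
  · apply ht
    show t ∈ stepB G _
    rw [mem_stepB]; exact Or.inr ⟨s, hm, hadj⟩
  · exact h s ⟨hs, hm⟩ hadj
open Classical in
lemma card_compl_eq {V : Type*} [Fintype V] (G : SimpleGraph V) (A : Finset V) :
    (stepB G A \ A).card + (nonN G A Aᶜ).card = Aᶜ.card := by
  have : stepB G A \ A = Aᶜ.filter fun t => ¬ ∀ s ∈ A, ¬ G.Adj s t := by
    ext t
    simp only [Finset.mem_sdiff, mem_stepB, Finset.mem_filter, Finset.mem_compl]
    push Not
    tauto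
  have h2 := Finset.card_filter_add_card_filter_not (s := Aᶜ) (fun t => ∀ s ∈ A, ¬ G.Adj s t)
  rw [this, nonN, add_comm]
  convert h2

open Filter SimpleGraph Set
open scoped Topology

/-- Expectation under the product of Bernoulli measures on `ι → Bool`. -/
noncomputable def Ex {ι : Type*} [Fintype ι] [DecidableEq ι] (p : ℝ) (f : (ι → Bool) → ℝ) : ℝ :=
  ∑ ω : ι → Bool, (∏ e, if ω e = true then p else 1 - p) * f ω

def DepOn {ι : Type*} (F : Set ι) (f : (ι → Bool) → ℝ) : Prop :=
  ∀ ω ω' : ι → Bool, (∀ e ∈ F, ω e = ω' e) → f ω = f ω'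

section
variable {ι : Type*} [Fintype ι] [DecidableEq ι] {p : ℝ}

lemma Ex_prod (h : ι → Bool → ℝ) :
    Ex p (fun ω => ∏ e, h e (ω e)) = ∏ e, (p * h e true + (1 - p) * h e false) := by
  have h1 := Finset.prod_univ_sum (fun _ : ι => (Finset.univ : Finset Bool))
    (fun e b => (if b = true then p else 1 - p) * h e b)
  rw [Fintype.piFinset_univ] at h1
  simp only [Ex, ← Finset.prod_mul_distrib]
  rw [← h1]
  simp

lemma Ex_one : Ex (ι := ι) p (fun _ => 1) = 1 := by
  have := Ex_prod (p := p) (fun (_ : ι) (_ : Bool) => (1 : ℝ))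
  simpa using this

lemma wt_nonneg (h0 : 0 ≤ p) (h1 : p ≤ 1) (ω : ι → Bool) :
    0 ≤ ∏ e, if ω e = true then p else 1 - p := by
  apply Finset.prod_nonneg
  intro e _
  split_ifs <;> linarith

lemma Ex_mono (h0 : 0 ≤ p) (h1 : p ≤ 1) {f g : (ι → Bool) → ℝ} (h : ∀ ω, f ω ≤ g ω) :
    Ex p f ≤ Ex p g :=
  Finset.sum_le_sum fun ω _ => mul_le_mul_of_nonneg_left (h ω) (wt_nonneg h0 h1 ω)

lemma Ex_nonneg (h0 : 0 ≤ p) (h1 : p ≤ 1) {f : (ι → Bool) → ℝ} (h : ∀ ω, 0 ≤ f ω) :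
    0 ≤ Ex p f :=
  Finset.sum_nonneg fun ω _ => mul_nonneg (wt_nonneg h0 h1 ω) (h ω)

lemma Ex_sum {α : Type*} (s : Finset α) (f : α → (ι → Bool) → ℝ) :
    Ex p (fun ω => ∑ a ∈ s, f a ω) = ∑ a ∈ s, Ex p (f a) := by
  simp only [Ex, Finset.mul_sum]
  rw [Finset.sum_comm]

lemma Ex_add (f g : (ι → Bool) → ℝ) : Ex p (fun ω => f ω + g ω) = Ex p f + Ex p g := by
  simp only [Ex, mul_add, Finset.sum_add_distrib]

lemma Ex_const_mul (a : ℝ) (f : (ι → Bool) → ℝ) : Ex p (fun ω => a * f ω) = a * Ex p f := by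
  simp only [Ex, Finset.mul_sum]
  refine Finset.sum_congr rfl fun ω _ => by ring

lemma Ex_split (P : ι → Prop) [DecidablePred P] (f1 : ({e // P e} → Bool) → ℝ)
    (g2 : ({e // ¬ P e} → Bool) → ℝ) :
    Ex p (fun ω : ι → Bool => f1 (fun e => ω e) * g2 (fun e => ω e)) = Ex p f1 * Ex p g2 := by
  simp only [Ex]
  rw [Finset.sum_mul_sum, ← Finset.sum_product', Finset.univ_product_univ]
  refine Fintype.sum_equiv (Equiv.piEquivPiSubtypeProd P (fun _ => Bool)) _ _ fun ω => ?_
  simp only [Equiv.piEquivPiSubtypeProd_apply]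
  rw [← Fintype.prod_subtype_mul_prod_subtype P (fun e => if ω e = true then p else 1 - p)]
  ring

open Classical in
lemma Ex_indep {F F' : Set ι} (hd : ∀ e ∈ F, e ∉ F') {f g : (ι → Bool) → ℝ}
    (hf : DepOn F f) (hg : DepOn F' g) : Ex p (fun ω => f ω * g ω) = Ex p f * Ex p g := by
  let f1 : ({e // e ∈ F} → Bool) → ℝ := fun a => f (fun e => if h : e ∈ F then a ⟨e, h⟩ else false)
  let g2 : ({e // ¬ e ∈ F} → Bool) → ℝ := fun a => g (fun e => if h : e ∉ F then a ⟨e, h⟩ else false)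
  have e1 : ∀ ω, f ω = f1 (fun e => ω e) := by
    intro ω; apply hf; intro e he; simp [he]
  have e2 : ∀ ω, g ω = g2 (fun e => ω e) := by
    intro ω; apply hg; intro e he
    have : e ∉ F := fun h => hd e h he
    simp [this]
  have h0 := Ex_split (p := p) (fun e => e ∈ F) f1 g2
  have h1 := Ex_split (p := p) (fun e => e ∈ F) f1 (fun _ => 1)
  have h2 := Ex_split (p := p) (fun e => e ∈ F) (fun _ => 1) g2
  rw [Ex_one] at h1 h2
  simp only [mul_one, one_mul] at h1 h2
  have e1' : f = fun ω => f1 (fun e => ω e) := funext e1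
  have e2' : g = fun ω => g2 (fun e => ω e) := funext e2
  rw [← h1, ← h2] at h0
  rw [e1', e2']
  exact h0

end

/-- The graph coded by an element of the product space. -/
def gr {V : Type*} (ω : Sym2 V → Bool) : SimpleGraph V where
  Adj a b := a ≠ b ∧ ω s(a, b) = true
  symm := ⟨fun a b h => ⟨h.1.symm, by rw [Sym2.eq_swap]; exact h.2⟩⟩
  loopless := ⟨fun a h => h.1 rfl⟩

open Classical in
noncomputable def Pr {V : Type*} [Fintype V] [DecidableEq V] (p : ℝ) (X : SimpleGraph V → Prop) : ℝ :=
  Ex p (fun ω : Sym2 V → Bool => if X (gr ω) then 1 else 0)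

open Classical in
lemma gr_weight {n : ℕ} (p : ℝ) (G : SimpleGraph (Fin n)) :
    Ex p (fun ω : Sym2 (Fin n) → Bool => if gr ω = G then 1 else 0) =
      p ^ (Nat.card G.edgeSet) * (1 - p) ^ (n.choose 2 - Nat.card G.edgeSet) := by
  have h1 : (fun ω : Sym2 (Fin n) → Bool => if gr ω = G then (1 : ℝ) else 0) =
      fun ω => ∏ e, (fun (e : Sym2 (Fin n)) (b : Bool) =>
        if e.IsDiag then (1 : ℝ) else if (b = true ↔ e ∈ G.edgeSet) then 1 else 0) e (ω e) := by
    funext ω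
    by_cases hG : gr ω = G
    · rw [if_pos hG]
      symm
      apply Finset.prod_eq_one
      intro e _
      by_cases he : e.IsDiag
      · simp [he]
      · simp only [he, if_false]
        rw [if_pos]
        induction e with
        | _ a b =>
          rw [← hG]
          simp only [Sym2.mk_isDiag_iff] at he
          simp [gr, he]
    · rw [if_neg hG]
      symm
      rw [Finset.prod_eq_zero_iff]
      by_contra hc
      push Not at hc
      apply hG
      ext a b
      have := hc s(a, b) (Finset.mem_univ _)
      by_cases hab : a = b
      · simp [hab]
      · simp [hab] at this
        simp [gr, hab, this]
  rw [h1, Ex_prod (fun (e : Sym2 (Fin n)) (b : Bool) =>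
        if e.IsDiag then (1 : ℝ) else if (b = true ↔ e ∈ G.edgeSet) then 1 else 0)]
  have h2 : ∀ e : Sym2 (Fin n), (p * (if e.IsDiag then (1 : ℝ) else if (true = true ↔ e ∈ G.edgeSet) then 1 else 0)
      + (1 - p) * (if e.IsDiag then (1 : ℝ) else if (false = true ↔ e ∈ G.edgeSet) then 1 else 0)) =
      (if e ∈ G.edgeSet then p else 1) * (if ¬ e.IsDiag ∧ e ∉ G.edgeSet then 1 - p else 1) := by
    intro e
    by_cases he : e.IsDiag
    · have : e ∉ G.edgeSet := fun h => G.not_isDiag_of_mem_edgeSet h he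
      simp [he, this]
    · by_cases h : e ∈ G.edgeSet <;> simp [he, h]
  rw [Finset.prod_congr rfl fun e _ => h2 e]
  rw [Finset.prod_mul_distrib, Finset.prod_ite, Finset.prod_ite]
  simp only [Finset.prod_const, one_pow, mul_one]
  have h3 : (Finset.univ.filter fun e : Sym2 (Fin n) => e ∈ G.edgeSet).card = Nat.card G.edgeSet := by
    rw [Nat.card_eq_fintype_card, Fintype.card_subtype]
  have h4 : (Finset.univ.filter fun e : Sym2 (Fin n) => ¬ e.IsDiag).card = n.choose 2 := by
    rw [← Fintype.card_subtype]
    have := Sym2.card_subtype_not_diag (α := Fin n)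
    rw [Fintype.card_fin] at this
    convert this
  have h5 : (Finset.univ.filter fun e : Sym2 (Fin n) => ¬ e.IsDiag ∧ e ∉ G.edgeSet).card =
      n.choose 2 - Nat.card G.edgeSet := by
    rw [← h4, ← h3, ← Finset.card_sdiff_of_subset]
    · congr 1; ext e; simp
    · intro e he
      simp only [Finset.mem_filter, Finset.mem_univ, true_and] at he ⊢
      exact G.not_isDiag_of_mem_edgeSet he
  rw [h3, h5]

open Classical in
lemma gnpProb_eq {n : ℕ} (p : ℝ) (A : Set (SimpleGraph (Fin n))) :
    gnpProb n p A = Pr p (fun G => G ∈ A) := by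
  have h1 : (fun ω : Sym2 (Fin n) → Bool => if gr ω ∈ A then (1 : ℝ) else 0) =
      fun ω => ∑ G ∈ Finset.univ.filter (fun G : SimpleGraph (Fin n) => G ∈ A),
        (if gr ω = G then (1 : ℝ) else 0) := by
    funext ω
    rw [Finset.sum_ite_eq]
    simp
  unfold gnpProb Pr
  rw [h1, Ex_sum]
  simp only [gr_weight]

open Filter SimpleGraph Set
open scoped Topology

section
variable {V : Type*} [Fintype V] [DecidableEq V] {p : ℝ}

lemma gr_adj_congr {ω ω' : Sym2 V → Bool} {a b : V} (h : ω s(a, b) = ω' s(a, b)) :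
    (gr ω).Adj a b ↔ (gr ω').Adj a b := by
  simp [gr, h]

open Classical in
lemma Ex_nonadj (S : Finset V) (t : V) (ht : t ∉ S) :
    Ex p (fun ω : Sym2 V → Bool => if ∀ s ∈ S, ¬ (gr ω).Adj s t then (1 : ℝ) else 0) =
      (1 - p) ^ S.card := by
  have h1 : (fun ω : Sym2 V → Bool => if ∀ s ∈ S, ¬ (gr ω).Adj s t then (1 : ℝ) else 0) =
      fun ω => ∏ e, (fun (e : Sym2 V) (b : Bool) =>
        if e ∈ S.image (fun s => s(s, t)) then (if b = true then (0 : ℝ) else 1) else 1) e (ω e) := by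
    funext ω
    by_cases h : ∀ s ∈ S, ¬ (gr ω).Adj s t
    · rw [if_pos h]
      symm
      apply Finset.prod_eq_one
      intro e _
      by_cases he : e ∈ S.image (fun s => s(s, t))
      · simp only [he, if_true]
        rw [if_neg]
        obtain ⟨s, hs, rfl⟩ := Finset.mem_image.1 he
        intro hω
        exact h s hs ⟨fun hst => ht (hst ▸ hs), hω⟩
      · simp only [he, if_false]
    · rw [if_neg h]
      symm
      push Not at h
      obtain ⟨s, hs, hadj⟩ := h
      rw [Finset.prod_eq_zero_iff]
      refine ⟨s(s, t), Finset.mem_univ _, ?_⟩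
      have : s(s, t) ∈ S.image (fun s => s(s, t)) := Finset.mem_image_of_mem _ hs
      simp only [this, if_true]
      rw [if_pos hadj.2]
  rw [h1, Ex_prod (fun (e : Sym2 V) (b : Bool) =>
        if e ∈ S.image (fun s => s(s, t)) then (if b = true then (0 : ℝ) else 1) else 1)]
  have h2 : ∀ e : Sym2 V, (p * (if e ∈ S.image (fun s => s(s, t)) then (if true = true then (0 : ℝ) else 1) else 1)
     + (1 - p) * (if e ∈ S.image (fun s => s(s, t)) then (if false = true then (0 : ℝ) else 1) else 1)) =
     if e ∈ S.image (fun s => s(s, t)) then 1 - p else 1 := by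
    intro e
    by_cases he : e ∈ S.image (fun s => s(s, t))
    · simp only [he]; simp
    · simp only [he]; simp
  rw [Finset.prod_congr rfl fun e _ => h2 e, Finset.prod_ite]
  simp only [Finset.prod_const, one_pow, mul_one]
  rw [Finset.filter_mem_eq_inter, Finset.univ_inter, Finset.card_image_of_injOn]
  intro a _ b _ hab
  simp only [Sym2.eq_iff] at hab
  rcases hab with h | h
  · exact h.1
  · exact h.1.trans h.2

open Classical in
lemma Ex_mgf (l : ℝ) (S T : Finset V) (hST : Disjoint S T) :
    Ex p (fun ω : Sym2 V → Bool => Real.exp (l * (nonN (gr ω) S T).card)) =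
      (1 + (1 - p) ^ S.card * (Real.exp l - 1)) ^ T.card := by
  induction T using Finset.induction_on with
  | empty =>
    simp only [nonN, Finset.filter_empty, Finset.card_empty, Nat.cast_zero, mul_zero, Real.exp_zero,
      pow_zero]
    exact Ex_one
  | insert t T ht ih =>
    rw [Finset.disjoint_insert_right] at hST
    have h1 : (fun ω : Sym2 V → Bool => Real.exp (l * (nonN (gr ω) S (insert t T)).card)) =
        fun ω => (1 + (Real.exp l - 1) * (if ∀ s ∈ S, ¬ (gr ω).Adj s t then (1 : ℝ) else 0)) *
          Real.exp (l * (nonN (gr ω) S T).card) := by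
      funext ω
      have ht' : t ∉ nonN (gr ω) S T := fun h => ht ((mem_nonN _ _ _ _).1 h).1
      by_cases h : ∀ s ∈ S, ¬ (gr ω).Adj s t
      · have e : nonN (gr ω) S (insert t T) = insert t (nonN (gr ω) S T) := by
          ext x
          simp only [mem_nonN, Finset.mem_insert]
          constructor
          · rintro ⟨h2 | h2, h3⟩
            · exact Or.inl h2
            · exact Or.inr ⟨h2, h3⟩
          · rintro (h2 | h2)
            · subst h2; exact ⟨Or.inl rfl, h⟩
            · exact ⟨Or.inr h2.1, h2.2⟩
        rw [e, Finset.card_insert_of_notMem ht', if_pos h]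
        push_cast
        rw [mul_add, Real.exp_add]; ring_nf
      · have e : nonN (gr ω) S (insert t T) = nonN (gr ω) S T := by
          ext x
          simp only [mem_nonN, Finset.mem_insert]
          constructor
          · rintro ⟨h2 | h2, h3⟩
            · subst h2; exact absurd h3 h
            · exact ⟨h2, h3⟩
          · intro h2; exact ⟨Or.inr h2.1, h2.2⟩
        rw [e, if_neg h]; ring
    rw [h1, Ex_indep (F := {e | ∃ s ∈ S, e = s(s, t)}) (F' := {e | ∃ s ∈ S, ∃ t' ∈ T, e = s(s, t')}),
      ih hST.2, Ex_add, Ex_const_mul, Ex_one, Ex_nonadj S t hST.1, Finset.card_insert_of_notMem ht]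
    · ring
    · rintro e ⟨s, hs, rfl⟩ ⟨s', hs', t', ht', he⟩
      rw [Sym2.eq_iff] at he
      rcases he with ⟨_, h⟩ | ⟨_, h⟩
      · exact ht (h ▸ ht')
      · exact hST.1 (h ▸ hs')
    · intro ω ω' h
      have : (∀ s ∈ S, ¬ (gr ω).Adj s t) ↔ (∀ s ∈ S, ¬ (gr ω').Adj s t) :=
        forall₂_congr fun s hs => not_congr (gr_adj_congr (h _ ⟨s, hs, rfl⟩))
      simp only [this]
    · intro ω ω' h
      have : nonN (gr ω) S T = nonN (gr ω') S T :=
        nonN_congr _ _ _ _ fun s hs t' ht' => gr_adj_congr (h _ ⟨s, hs, t', ht', rfl⟩)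
      simp only [this]

lemma Pr_mono (h0 : 0 ≤ p) (h1 : p ≤ 1) {X Y : SimpleGraph V → Prop} (h : ∀ G, X G → Y G) :
    Pr p X ≤ Pr p Y := by
  apply Ex_mono h0 h1
  intro ω
  split_ifs with h2 h3
  · exact le_rfl
  · exact absurd (h _ h2) h3
  · norm_num
  · exact le_rfl

lemma Pr_or (h0 : 0 ≤ p) (h1 : p ≤ 1) (X Y : SimpleGraph V → Prop) :
    Pr p (fun G => X G ∨ Y G) ≤ Pr p X + Pr p Y := by
  unfold Pr
  rw [← Ex_add]
  apply Ex_mono h0 h1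
  intro ω
  by_cases hx : X (gr ω) <;> by_cases hy : Y (gr ω) <;> simp [hx, hy]

lemma Pr_exists (h0 : 0 ≤ p) (h1 : p ≤ 1) {α : Type*} (s : Finset α)
    (X : α → SimpleGraph V → Prop) :
    Pr p (fun G => ∃ a ∈ s, X a G) ≤ ∑ a ∈ s, Pr p (X a) := by
  classical
  unfold Pr
  rw [← Ex_sum]
  apply Ex_mono h0 h1
  intro ω
  split_ifs with h
  · obtain ⟨a, ha, hx⟩ := h
    have := Finset.single_le_sum (s := s) (f := fun a => if X a (gr ω) then (1 : ℝ) else 0)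
      (fun a _ => by positivity) ha
    simp only [hx, if_true] at this
    convert this
  · apply Finset.sum_nonneg; intro a _; positivity

lemma Pr_not (X : SimpleGraph V → Prop) : Pr p (fun G => ¬ X G) = 1 - Pr p X := by
  have : Pr p (fun G => ¬ X G) + Pr p X = 1 := by
    unfold Pr
    rw [← Ex_add]
    refine Eq.trans ?_ (Ex_one (ι := Sym2 V) (p := p))
    congr 1
    funext ω
    by_cases hx : X (gr ω) <;> simp [hx]
  linarith

lemma Pr_le_one (h0 : 0 ≤ p) (h1 : p ≤ 1) (X : SimpleGraph V → Prop) : Pr p X ≤ 1 := by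
  unfold Pr
  refine le_trans ?_ (Ex_one (ι := Sym2 V) (p := p)).le
  apply Ex_mono h0 h1
  intro ω; split_ifs <;> norm_num

/-- Chernoff bound. -/
lemma chernoff (h0 : 0 ≤ p) (h1 : p ≤ 1) (l m : ℝ) (S T : Finset V) (hST : Disjoint S T)
    (X : SimpleGraph V → Prop) (hX : ∀ G, X G → l * m ≤ l * (nonN G S T).card) :
    Pr p X ≤ Real.exp ((T.card * (1 - p) ^ S.card) * (Real.exp l - 1) - l * m) := by
  have hx : Pr p X ≤ Ex p (fun ω : Sym2 V → Bool =>
      Real.exp (-(l * m)) * Real.exp (l * (nonN (gr ω) S T).card)) := by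
    apply Ex_mono h0 h1
    intro ω
    split_ifs with h
    · rw [← Real.exp_add]
      apply Real.one_le_exp
      linarith [hX _ h]
    · positivity
  refine hx.trans ?_
  rw [Ex_const_mul, Ex_mgf l S T hST, sub_eq_neg_add _ (l * m), Real.exp_add]
  have hq0 : 0 ≤ (1 - p) ^ S.card := pow_nonneg (by linarith) _
  have hq1 : (1 - p) ^ S.card ≤ 1 := pow_le_one₀ (by linarith) (by linarith)
  gcongr
  rw [mul_assoc, Real.exp_nat_mul]
  apply pow_le_pow_left₀
  · nlinarith [Real.exp_pos l]
  · have := Real.add_one_le_exp ((1 - p) ^ S.card * (Real.exp l - 1))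
    linarith

/-- Exposure of the ball. -/
lemma expose (h0 : 0 ≤ p) (h1 : p ≤ 1) (U : Finset V) (m : ℕ) (β : ℝ) (hβ : 0 ≤ β)
    (good : Finset V → Finset V → Prop) (bad : ℕ → Prop)
    (h : ∀ A' A : Finset V, A' ⊆ A → good A' A →
      Pr p (fun G => bad (nonN G (A \ A') Aᶜ).card) ≤ β) :
    Pr p (fun G => good (ballB G U m) (ballB G U (m + 1)) ∧ bad (ballB G U (m + 2))ᶜ.card) ≤ β := by
  classical
  let E : Finset V × Finset V → (Sym2 V → Bool) → ℝ := fun A ω =>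
    if ballB (gr ω) U m = A.1 ∧ ballB (gr ω) U (m + 1) = A.2 then 1 else 0
  let B : Finset V × Finset V → (Sym2 V → Bool) → ℝ := fun A ω =>
    if bad (nonN (gr ω) (A.2 \ A.1) A.2ᶜ).card then 1 else 0
  have hE : ∀ A ω, 0 ≤ E A ω := by intro A ω; simp only [E]; positivity
  have hsumE : ∀ ω, ∑ A, E A ω = 1 := by
    intro ω
    have : ∀ A : Finset V × Finset V, E A ω =
        if A = (ballB (gr ω) U m, ballB (gr ω) U (m + 1)) then 1 else 0 := by
      intro A
      simp only [E, Prod.ext_iff, eq_comm]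
    simp [this]
  have hle : Pr p (fun G => good (ballB G U m) (ballB G U (m + 1)) ∧ bad (ballB G U (m + 2))ᶜ.card) ≤
      Ex p (fun ω => ∑ A ∈ Finset.univ.filter (fun A : Finset V × Finset V => A.1 ⊆ A.2 ∧ good A.1 A.2),
        E A ω * B A ω) := by
    apply Ex_mono h0 h1
    intro ω
    split_ifs with hx
    · have hs := Finset.single_le_sum
        (s := Finset.univ.filter (fun A : Finset V × Finset V => A.1 ⊆ A.2 ∧ good A.1 A.2))
        (f := fun A => E A ω * B A ω)
        (fun A _ => mul_nonneg (hE A ω) (by simp only [B]; positivity))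
        (a := (ballB (gr ω) U m, ballB (gr ω) U (m + 1)))
        (by simp only [Finset.mem_filter, Finset.mem_univ, true_and]
            exact ⟨ballB_subset_succ _ _ _, hx.1⟩)
      refine le_trans ?_ hs
      have hb := hx.2
      have hcc := compl_ballB (gr ω) U m
      have hb2 : bad (nonN (gr ω) (ballB (gr ω) U (m + 1) \ ballB (gr ω) U m) (ballB (gr ω) U (m + 1))ᶜ).card := by
        convert hb using 2
        convert hcc.symm
      simp only [E, B]
      rw [if_pos hb2]
      simp
    · exact Finset.sum_nonneg fun A _ => mul_nonneg (hE A ω) (by simp only [B]; positivity)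
  refine hle.trans ?_
  rw [Ex_sum]
  calc _ ≤ ∑ A ∈ Finset.univ.filter (fun A : Finset V × Finset V => A.1 ⊆ A.2 ∧ good A.1 A.2),
        β * Ex p (E A) := by
        apply Finset.sum_le_sum
        rintro ⟨A', A⟩ hA
        simp only [Finset.mem_filter, Finset.mem_univ, true_and] at hA
        rw [Ex_indep (F := {e | ∃ a ∈ A', a ∈ e})
          (F' := {e | ∃ s ∈ A \ A', ∃ t ∈ Aᶜ, e = s(s, t)}), mul_comm]
        · apply mul_le_mul_of_nonneg_right _ (Ex_nonneg h0 h1 (hE _))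
          have := h A' A hA.1 hA.2
          unfold Pr at this
          convert this using 3
        · rintro e ⟨a, ha, hae⟩ ⟨s, hs, t, ht, rfl⟩
          simp only [Finset.mem_sdiff, Finset.mem_compl] at hs ht
          rw [Sym2.mem_iff] at hae
          rcases hae with rfl | rfl
          · exact hs.2 ha
          · exact ht (hA.1 ha)
        · have key : ∀ ω ω' : Sym2 V → Bool, (∀ e ∈ {e | ∃ a ∈ A', a ∈ e}, ω e = ω' e) →
              (ballB (gr ω) U m = A' ∧ ballB (gr ω) U (m + 1) = A) →
              (ballB (gr ω') U m = A' ∧ ballB (gr ω') U (m + 1) = A) := by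
            rintro ω ω' hω ⟨e1, e2⟩
            have hc := ballB_congr (gr ω) (gr ω') U m (by
              intro a ha v
              rw [e1] at ha
              exact gr_adj_congr (hω _ ⟨a, ha, by simp⟩))
            exact ⟨(hc m (by omega)).trans e1, (hc (m + 1) le_rfl).trans e2⟩
          intro ω ω' hω
          have : (ballB (gr ω) U m = A' ∧ ballB (gr ω) U (m + 1) = A) ↔
              (ballB (gr ω') U m = A' ∧ ballB (gr ω') U (m + 1) = A) :=
            ⟨key ω ω' hω, key ω' ω fun e he => (hω e he).symm⟩
          simp only [E, this]
        · intro ω ω' hω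
          have : nonN (gr ω) (A \ A') Aᶜ = nonN (gr ω') (A \ A') Aᶜ :=
            nonN_congr _ _ _ _ fun s hs t ht => gr_adj_congr (hω _ ⟨s, hs, t, ht, rfl⟩)
          simp only [B, this]
    _ ≤ ∑ A : Finset V × Finset V, β * Ex p (E A) := by
        apply Finset.sum_le_sum_of_subset_of_nonneg (Finset.filter_subset _ _)
        intro A _ _
        exact mul_nonneg hβ (Ex_nonneg h0 h1 (hE _))
    _ = β := by
        rw [← Finset.mul_sum, ← Ex_sum]
        simp only [hsumE, Ex_one, mul_one]

end

open Filter SimpleGraph Set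
open scoped Topology

section
variable {V : Type*} [Fintype V] [DecidableEq V] {p : ℝ}

/-- Chernoff bound for the number of vertices of `T` with a neighbour in `S`. -/
lemma chernoff' (h0 : 0 ≤ p) (h1 : p ≤ 1) (l m : ℝ) (S T : Finset V) (hST : Disjoint S T)
    (X : SimpleGraph V → Prop) (hX : ∀ G, X G → l * m ≤ l * (T.card - (nonN G S T).card)) :
    Pr p X ≤ Real.exp ((T.card * (1 - (1 - p) ^ S.card)) * (Real.exp l - 1) - l * m) := by
  have hx : Pr p X ≤ Ex p (fun ω : Sym2 V → Bool =>
      Real.exp (l * T.card - (l * m)) * Real.exp ((-l) * (nonN (gr ω) S T).card)) := by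
    apply Ex_mono h0 h1
    intro ω
    split_ifs with h
    · rw [← Real.exp_add]
      apply Real.one_le_exp
      linarith [hX _ h]
    · positivity
  refine hx.trans ?_
  rw [Ex_const_mul, Ex_mgf (-l) S T hST]
  have hq0 : 0 ≤ (1 - p) ^ S.card := pow_nonneg (by linarith) _
  have hq1 : (1 - p) ^ S.card ≤ 1 := pow_le_one₀ (by linarith) (by linarith)
  set q := (1 - p) ^ S.card
  have e1 : Real.exp (l * T.card - l * m) = Real.exp (-(l * m)) * Real.exp l ^ T.card := by
    rw [← Real.exp_nat_mul, ← Real.exp_add]; congr 1; ring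
  rw [e1, mul_assoc, ← mul_pow, sub_eq_neg_add _ (l * m), Real.exp_add]
  gcongr
  rw [mul_assoc, Real.exp_nat_mul]
  have e2 : Real.exp l * (1 + q * (Real.exp (-l) - 1)) = 1 + (1 - q) * (Real.exp l - 1) := by
    have : Real.exp l * Real.exp (-l) = 1 := by rw [← Real.exp_add]; simp
    linear_combination q * this
  rw [e2]
  apply pow_le_pow_left₀
  · nlinarith [Real.exp_pos l]
  · have := Real.add_one_le_exp ((1 - q) * (Real.exp l - 1))
    linarith

lemma exp_sub_one_le {x : ℝ} (h : |x| ≤ 1) : Real.exp x - 1 ≤ x + x ^ 2 := by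
  have := Real.abs_exp_sub_one_sub_id_le h
  have := (abs_le.1 this).2
  linarith

lemma one_sub_pow_le_exp (h1 : p ≤ 1) (a : ℕ) : (1 - p) ^ a ≤ Real.exp (-(p * a)) := by
  have : Real.exp (-(p * a)) = Real.exp (-p) ^ a := by
    rw [← Real.exp_nat_mul]; congr 1; ring
  rw [this]
  exact pow_le_pow_left₀ (by linarith) (Real.one_sub_le_exp_neg p) a

lemma stepB_card (G : SimpleGraph V) (A : Finset V) :
    ((stepB G A \ A).card : ℝ) = (Aᶜ.card : ℝ) - (nonN G A Aᶜ).card := by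
  have this : (stepB G A \ A).card + (nonN G A Aᶜ).card = Aᶜ.card := by
    convert card_compl_eq G A
  have h2 : ((stepB G A \ A).card : ℝ) + (nonN G A Aᶜ).card = Aᶜ.card := by
    exact_mod_cast this
  linarith

lemma compl_card_real (A : Finset V) : (Aᶜ.card : ℝ) = Fintype.card V - A.card := by
  rw [Finset.card_compl, Nat.cast_sub (Finset.card_le_univ A)]

/-- Upper tail of degrees. -/
lemma pr_deg (h0 : 0 ≤ p) (h1 : p ≤ 1) {d ε : ℝ} (hd : d = p * Fintype.card V)
    (hε0 : 0 < ε) (hε1 : ε ≤ 1) (u : V) :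
    Pr p (fun G => (1 + ε) * d ≤ (stepB G {u} \ {u}).card) ≤ Real.exp (-(ε ^ 2 * d / 4)) := by
  have hn : (1 : ℝ) ≤ Fintype.card V := by
    have : 0 < Fintype.card V := Fintype.card_pos_iff.2 ⟨u⟩
    exact_mod_cast this
  refine (chernoff' h0 h1 (ε / 2) ((1 + ε) * d) {u} {u}ᶜ (disjoint_compl_right) _ ?_).trans ?_
  · intro G hG
    rw [stepB_card] at hG
    exact mul_le_mul_of_nonneg_left hG (by linarith)
  · apply Real.exp_le_exp.2
    rw [compl_card_real]
    simp only [Finset.card_singleton, pow_one, Nat.cast_one, sub_sub_cancel]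
    have h3 := exp_sub_one_le (x := ε / 2) (by rw [abs_of_pos] <;> linarith)
    have h4 : 0 ≤ Real.exp (ε / 2) - 1 := by
      have := Real.add_one_le_exp (ε / 2); linarith
    have h5 : ((Fintype.card V : ℝ) - 1) * p ≤ d := by rw [hd]; nlinarith
    have hd0 : 0 ≤ d := by rw [hd]; positivity
    calc _ ≤ d * (ε / 2 + (ε / 2) ^ 2) - ε / 2 * ((1 + ε) * d) := by
          gcongr
      _ = _ := by ring

/-- Expansion of a fixed set. -/
lemma pr_expand (h0 : 0 ≤ p) (h1 : p ≤ 1) {d ε : ℝ} (hd : d = p * Fintype.card V)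
    (hd1 : 1 ≤ d) (hε0 : 0 < ε) (hε1 : ε ≤ 1) (A : Finset V)
    (hA : (A.card : ℝ) * d ≤ ε * Fintype.card V / 4) :
    Pr p (fun G => ((stepB G A \ A).card : ℝ) < (1 - 3 * ε) * d * A.card) ≤
      Real.exp (-(ε ^ 2 * d * A.card)) := by
  refine (chernoff' h0 h1 (-(ε / 2)) ((1 - 3 * ε) * d * A.card) A Aᶜ (disjoint_compl_right) _ ?_).trans ?_
  · intro G hG
    rw [stepB_card] at hG
    nlinarith
  · apply Real.exp_le_exp.2
    rw [compl_card_real]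
    set n : ℝ := (Fintype.card V : ℝ)
    set a : ℝ := (A.card : ℝ) with ha
    have ha0 : 0 ≤ a := by positivity
    have hn0 : 0 ≤ n := by positivity
    have hnpos : 0 < n := by
      rcases hn0.lt_or_eq with h | h
      · exact h
      · rw [← h] at hd; simp at hd; linarith
    have hx := exp_sub_one_le (x := -(ε / 2)) (by rw [abs_neg, abs_of_pos] <;> linarith)
    have hpa : p * a ≤ ε / 4 := by
      have : p * a * n ≤ ε / 4 * n := by rw [hd] at hA; nlinarith
      exact le_of_mul_le_mul_right this hnpos
    have hpa0 : 0 ≤ p * a := by positivity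
    have hr : p * a * (1 - p * a) ≤ 1 - (1 - p) ^ A.card := by
      have h2 := one_sub_pow_le_exp h1 A.card
      have h3 := exp_sub_one_le (x := -(p * a)) (by rw [abs_neg, abs_of_nonneg hpa0]; linarith)
      rw [← ha] at h2
      nlinarith
    have han : a ≤ ε / 4 * n := by nlinarith
    set r := 1 - (1 - p) ^ A.card
    have hμ : d * a * (1 - ε / 2) ≤ (n - a) * r := by
      have e1 : p * a * (1 - ε / 4) ≤ r := by nlinarith
      have e2 : n * (1 - ε / 4) ≤ n - a := by nlinarith
      calc d * a * (1 - ε / 2) ≤ (n * (1 - ε / 4)) * (p * a * (1 - ε / 4)) := by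
            rw [hd]
            have : 0 ≤ p * n * a := by positivity
            nlinarith [mul_nonneg this (sq_nonneg ε)]
        _ ≤ (n - a) * r := by
            apply mul_le_mul e2 e1 _ (by nlinarith)
            have : 0 ≤ 1 - ε / 4 := by linarith
            positivity
    have hda : 0 ≤ d * a := by positivity
    set μ := (n - a) * r
    have hμ0 : 0 ≤ μ := le_trans (by nlinarith) hμ
    have s1 : μ * (Real.exp (-(ε / 2)) - 1) ≤ μ * (-(ε / 2) + (-(ε / 2)) ^ 2) :=
      mul_le_mul_of_nonneg_left hx hμ0
    have s2 : μ * (-(ε / 2) + (-(ε / 2)) ^ 2) ≤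
        (d * a * (1 - ε / 2)) * (-(ε / 2) + (-(ε / 2)) ^ 2) := by
      apply mul_le_mul_of_nonpos_right hμ
      nlinarith
    have s3 : 0 ≤ d * a * ε ^ 3 := by positivity
    nlinarith

/-- Upper tail for the number of vertices not reached. -/
lemma pr_upper (h0 : 0 ≤ p) (h1 : p ≤ 1) {c δ : ℝ} (hcδ : 4 * Real.exp (-(c / 2)) ≤ δ)
    (S T : Finset V) (hST : Disjoint S T) (hs : 3 / 2 * c ≤ p * S.card) :
    Pr p (fun G => δ * (Fintype.card V * Real.exp (-c)) ≤ (nonN G S T).card) ≤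
      Real.exp (-(δ * (Fintype.card V * Real.exp (-c)) / 2)) := by
  refine (chernoff h0 h1 1 (δ * (Fintype.card V * Real.exp (-c))) S T hST _ ?_).trans ?_
  · intro G hG; linarith
  · apply Real.exp_le_exp.2
    have h2 := one_sub_pow_le_exp h1 S.card
    have h3 : (1 - p) ^ S.card ≤ Real.exp (-c) * Real.exp (-(c / 2)) := by
      refine h2.trans ?_
      rw [← Real.exp_add]
      apply Real.exp_le_exp.2; linarith
    have h4 : (T.card : ℝ) ≤ Fintype.card V := by exact_mod_cast Finset.card_le_univ T
    have h5 : Real.exp 1 - 1 ≤ 2 := by have := Real.exp_one_lt_d9; linarith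
    have h6 : 0 ≤ Real.exp 1 - 1 := by have := Real.add_one_le_exp 1; linarith
    have h7 : (T.card : ℝ) * (1 - p) ^ S.card * (Real.exp 1 - 1) ≤
        Fintype.card V * (Real.exp (-c) * Real.exp (-(c / 2))) * 2 := by
      have : 0 ≤ (1 - p) ^ S.card := pow_nonneg (by linarith) _
      gcongr
    have h8 : 0 ≤ Fintype.card V * Real.exp (-c) := by positivity
    nlinarith

/-- Lower tail for the number of vertices not reached. -/
lemma pr_lower (h0 : 0 ≤ p) (h1 : p ≤ 1) {N δ : ℝ} (hδ0 : 0 < δ) (hδ1 : δ ≤ 1) (hN : 0 ≤ N)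
    (S T : Finset V) (hST : Disjoint S T)
    (hμ : (1 - δ / 4) * N ≤ T.card * (1 - p) ^ S.card) :
    Pr p (fun G => ((nonN G S T).card : ℝ) < (1 - δ) * N) ≤ Real.exp (-(δ ^ 2 * N / 8)) := by
  refine (chernoff h0 h1 (-(δ / 2)) ((1 - δ) * N) S T hST _ ?_).trans ?_
  · intro G hG; nlinarith
  · apply Real.exp_le_exp.2
    have hx := exp_sub_one_le (x := -(δ / 2)) (by rw [abs_neg, abs_of_pos] <;> linarith)
    set μ := T.card * (1 - p) ^ S.card
    have hμ0 : 0 ≤ μ := le_trans (mul_nonneg (by linarith) hN) hμ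
    have s1 : μ * (Real.exp (-(δ / 2)) - 1) ≤ μ * (-(δ / 2) + (-(δ / 2)) ^ 2) :=
      mul_le_mul_of_nonneg_left hx hμ0
    have s2 : μ * (-(δ / 2) + (-(δ / 2)) ^ 2) ≤
        ((1 - δ / 4) * N) * (-(δ / 2) + (-(δ / 2)) ^ 2) := by
      apply mul_le_mul_of_nonpos_right hμ
      nlinarith
    have s3 : 0 ≤ N * δ ^ 3 := by positivity
    nlinarith

end

open Filter SimpleGraph Set
open scoped Topology

section
variable {V : Type*} [Fintype V] [DecidableEq V] {p : ℝ}

def GoodG (G : SimpleGraph V) (m : ℕ) (D1 N δ : ℝ) : Prop :=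
  (∀ u, ((stepB G {u}).card : ℝ) ≤ D1) ∧
  (∀ u v, u ≠ v → ((ballB G {u, v} (m + 2))ᶜ.card : ℝ) ≤ δ * N) ∧
  (∀ u, (1 - δ) * N ≤ ((ballB G {u} (m + 2))ᶜ.card : ℝ))

open Classical in
lemma filter_eq_stepB (G : SimpleGraph V) (u : V) :
    (Finset.univ.filter fun v => v = u ∨ G.Adj u v) = stepB G {u} := by
  ext v; simp [mem_stepB]

lemma good_cops [Nonempty V] (G : SimpleGraph V) (m k : ℕ) (D1 c δ : ℝ) (hD1 : 0 ≤ D1)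
    (hG : GoodG G m D1 (Fintype.card V * Real.exp (-c)) δ)
    (hk : k ≤ Fintype.card V) (hδN : 1 ≤ δ * (Fintype.card V * Real.exp (-c)))
    (hs : D1 ^ 2 * Real.exp (-(2 * (1 - 3 * δ) * Real.exp (-c) * k)) < 1 / 2) : CopsWin G k := by
  refine copsWin_of G ⌊D1⌋₊ k (2 * (1 - 3 * δ) * Real.exp (-c)) ?_ ?_ hk ?_
  · intro u
    have h1 := Nat.le_floor (hG.1 u)
    convert h1
    convert filter_eq_stepB G u
  · intro u v huv
    have h2 := card_dis G u v (m + 2)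
    have h3 := hG.2.1 u v huv
    have h4 := hG.2.2 u
    have h5 := hG.2.2 v
    have h6 : 2 * (1 - 3 * δ) * Real.exp (-c) * (Fintype.card V : ℝ) ≤
       ((ballB G {u} (m + 2))ᶜ.card : ℝ) + (ballB G {v} (m + 2))ᶜ.card
        - 2 * (ballB G {u, v} (m + 2))ᶜ.card - 2 := by
      nlinarith
    exact h6.trans h2
  · refine lt_of_le_of_lt ?_ hs
    have := Nat.floor_le hD1
    gcongr

lemma card_ball_le_real (G : SimpleGraph V) {D1 : ℝ} (hD1 : 0 ≤ D1)
    (h : ∀ u, ((stepB G {u}).card : ℝ) ≤ D1) (U : Finset V) (j : ℕ) :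
    ((ballB G U j).card : ℝ) ≤ D1 ^ j * U.card := by
  have h1 := card_ballB_le G ⌊D1⌋₊ (by
    intro u
    have h1 := Nat.le_floor (h u)
    convert h1
    convert filter_eq_stepB G u) U j
  have h2 : ((ballB G U j).card : ℝ) ≤ (⌊D1⌋₊ : ℝ) ^ j * U.card := by exact_mod_cast h1
  refine h2.trans ?_
  have := Nat.floor_le hD1
  gcongr

lemma ball_growth (G : SimpleGraph V) {d ε n : ℝ} (hd1 : 1 ≤ d) (hε0 : 0 < ε) (hε1 : ε ≤ 1 / 10)
    (m : ℕ) (hsz : 2 * ((1 + 2 * ε) * d) ^ m * d ≤ ε * n / 4)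
    (h34 : 3 / 4 ≤ (1 - 3 * ε) ^ (m + 1))
    (hdeg : ∀ u, ((stepB G {u}).card : ℝ) ≤ (1 + 2 * ε) * d)
    (hexp : ∀ A : Finset V, A.Nonempty → (A.card : ℝ) * d ≤ ε * n / 4 →
      (1 - 3 * ε) * d * A.card ≤ ((stepB G A \ A).card : ℝ))
    (u v : V) (huv : u ≠ v) :
    3 / 2 * d ^ (m + 1) ≤ ((ballB G {u, v} (m + 1) \ ballB G {u, v} m).card : ℝ) := by
  have hU : ({u, v} : Finset V).card = 2 := Finset.card_pair huv
  have hD : 1 ≤ (1 + 2 * ε) * d := by nlinarith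
  have hsmall : ∀ j ≤ m, ((ballB G {u, v} j).card : ℝ) * d ≤ ε * n / 4 := by
    intro j hj
    refine le_trans ?_ hsz
    have h1 := card_ball_le_real G (by linarith) hdeg {u, v} j
    rw [hU] at h1
    have h2 : ((1 + 2 * ε) * d) ^ j ≤ ((1 + 2 * ε) * d) ^ m := pow_le_pow_right₀ hD hj
    push_cast at h1
    gcongr
    linarith
  have hne : ∀ j, (ballB G {u, v} j).Nonempty := by
    intro j
    exact ⟨u, ballB_mono G {u, v} (Nat.zero_le j) (by simp [ballB])⟩
  have he : 0 ≤ (1 - 3 * ε) * d := by nlinarith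
  have hgrow : ∀ j ≤ m, 2 * ((1 - 3 * ε) * d) ^ j ≤ ((ballB G {u, v} j).card : ℝ) := by
    intro j
    induction j with
    | zero => intro _; simp [ballB, hU]
    | succ j ih =>
      intro hj
      have h1 := ih (by omega)
      have h2 := hexp _ (hne j) (hsmall j (by omega))
      have h3 : ((stepB G (ballB G {u, v} j) \ ballB G {u, v} j).card : ℝ) ≤
          (ballB G {u, v} (j + 1)).card := by
        exact_mod_cast Finset.card_le_card Finset.sdiff_subset
      calc 2 * ((1 - 3 * ε) * d) ^ (j + 1) = (1 - 3 * ε) * d * (2 * ((1 - 3 * ε) * d) ^ j) := by ring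
        _ ≤ (1 - 3 * ε) * d * (ballB G {u, v} j).card := by gcongr
        _ ≤ _ := h2.trans h3
  have h1 := hgrow m le_rfl
  have h2 := hexp _ (hne m) (hsmall m le_rfl)
  refine le_trans ?_ h2
  calc 3 / 2 * d ^ (m + 1) = 2 * (3 / 4) * d ^ (m + 1) := by ring
    _ ≤ 2 * (1 - 3 * ε) ^ (m + 1) * d ^ (m + 1) := by gcongr
    _ = (1 - 3 * ε) * d * (2 * ((1 - 3 * ε) * d) ^ m) := by rw [mul_pow]; ring
    _ ≤ _ := by gcongr

lemma sum_pow_card (x : ℝ) : ∑ A : Finset V, x ^ A.card = (x + 1) ^ Fintype.card V := by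
  have := Fintype.sum_pow_mul_eq_add_pow V x 1
  simpa using this

lemma pr_good (hn : 1 ≤ Fintype.card V) (h0 : 0 < p) (h1 : p ≤ 1) {d ε c δ : ℝ} (m : ℕ)
    (hd : d = p * Fintype.card V) (hd1 : 1 ≤ d) (hε0 : 0 < ε) (hε1 : ε ≤ 1 / 10)
    (hεd : 1 ≤ ε * d) (hεL : ε ^ 2 * d = 64 * Real.log (Fintype.card V))
    (hsz : 2 * ((1 + 2 * ε) * d) ^ m * d ≤ ε * Fintype.card V / 4)
    (h34 : 3 / 4 ≤ (1 - 3 * ε) ^ (m + 1))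
    (hc : c = p * d ^ (m + 1)) (hδ0 : 0 < δ) (hδ1 : δ ≤ 1)
    (hcδ : 4 * Real.exp (-(c / 2)) ≤ δ)
    (hN : 100 * Real.log (Fintype.card V) ≤ δ ^ 2 * (Fintype.card V * Real.exp (-c)))
    (hlow : ∀ a : ℕ, (a : ℝ) ≤ ((1 + 2 * ε) * d) ^ (m + 1) →
      (1 - δ / 4) * (Fintype.card V * Real.exp (-c)) ≤ (Fintype.card V - a) * (1 - p) ^ a) :
    Pr p (fun G : SimpleGraph V => ¬ GoodG G m ((1 + 2 * ε) * d) (Fintype.card V * Real.exp (-c)) δ) ≤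
      6 / Fintype.card V := by
  have hp0 := h0.le
  set n : ℝ := (Fintype.card V : ℝ) with hnn
  have hn1 : 1 ≤ n := by rw [hnn]; exact_mod_cast hn
  have hn0 : 0 < n := by linarith
  set L := Real.log n with hL
  have hL0 : 0 ≤ L := Real.log_nonneg hn1
  have hexpL : Real.exp (-L) = 1 / n := by
    rw [Real.exp_neg, hL, Real.exp_log hn0]; simp
  set N := n * Real.exp (-c) with hNdef
  have hN0 : 0 ≤ N := by positivity
  let B1 : SimpleGraph V → Prop := fun G => ∃ u ∈ (Finset.univ : Finset V),
    (1 + ε) * d ≤ (stepB G {u} \ {u}).card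
  let B2 : SimpleGraph V → Prop := fun G => ∃ A ∈ (Finset.univ.filter fun A : Finset V =>
    A.Nonempty ∧ (A.card : ℝ) * d ≤ ε * n / 4), ((stepB G A \ A).card : ℝ) < (1 - 3 * ε) * d * A.card
  let B3 : SimpleGraph V → Prop := fun G => ∃ x ∈ (Finset.univ : Finset (V × V)),
    3 / 2 * d ^ (m + 1) ≤ ((ballB G {x.1, x.2} (m + 1) \ ballB G {x.1, x.2} m).card : ℝ) ∧
      δ * N ≤ ((ballB G {x.1, x.2} (m + 2))ᶜ.card : ℝ)
  let B4 : SimpleGraph V → Prop := fun G => ∃ u ∈ (Finset.univ : Finset V),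
    ((ballB G {u} (m + 1)).card : ℝ) ≤ ((1 + 2 * ε) * d) ^ (m + 1) ∧
      ((ballB G {u} (m + 2))ᶜ.card : ℝ) < (1 - δ) * N
  have hdet : ∀ G : SimpleGraph V, ¬ GoodG G m ((1 + 2 * ε) * d) N δ →
      (B1 G ∨ B2 G) ∨ (B3 G ∨ B4 G) := by
    intro G hG
    by_contra hcon
    push Not at hcon
    obtain ⟨⟨hb1, hb2⟩, hb3, hb4⟩ := hcon
    apply hG
    have hdeg : ∀ u, ((stepB G {u}).card : ℝ) ≤ (1 + 2 * ε) * d := by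
      intro u
      by_contra hu
      push Not at hu
      apply hb1
      refine ⟨u, Finset.mem_univ _, ?_⟩
      have e1 : (stepB G {u} \ {u}).card + 1 = (stepB G {u}).card := by
        have hs : ({u} : Finset V) ⊆ stepB G {u} := by
          intro x hx; rw [mem_stepB]; exact Or.inl hx
        have := Finset.card_sdiff_add_card_eq_card hs
        simpa using this
      have e2 : ((stepB G {u} \ {u}).card : ℝ) + 1 = (stepB G {u}).card := by exact_mod_cast e1
      nlinarith
    have hexp : ∀ A : Finset V, A.Nonempty → (A.card : ℝ) * d ≤ ε * n / 4 →
      (1 - 3 * ε) * d * A.card ≤ ((stepB G A \ A).card : ℝ) := by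
      intro A hA1 hA2
      by_contra hA
      push Not at hA
      exact hb2 ⟨A, by simp [hA1, hA2], hA⟩
    refine ⟨hdeg, ?_, ?_⟩
    · intro u v huv
      by_contra hu
      push Not at hu
      exact hb3 ⟨(u, v), Finset.mem_univ _,
        ball_growth G hd1 hε0 hε1 m hsz h34 hdeg hexp u v huv, hu.le⟩
    · intro u
      by_contra hu
      push Not at hu
      refine hb4 ⟨u, Finset.mem_univ _, ?_, hu⟩
      have := card_ball_le_real G (by nlinarith) hdeg {u} (m + 1)
      simpa using this
  have q1 : Pr p B1 ≤ 1 / n := by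
    refine (Pr_exists hp0 h1 _ _).trans ?_
    calc _ ≤ ∑ u : V, Real.exp (-(ε ^ 2 * d / 4)) :=
          Finset.sum_le_sum fun u _ => pr_deg hp0 h1 hd hε0 (by linarith) u
      _ = n * Real.exp (-(ε ^ 2 * d / 4)) := by simp [hnn]
      _ ≤ n * Real.exp (-L + -L) := by
          gcongr; rw [hεL]; linarith
      _ = 1 / n := by rw [Real.exp_add, hexpL]; field_simp
  have q2 : Pr p B2 ≤ 3 / n := by
    refine (Pr_exists hp0 h1 _ _).trans ?_
    calc _ ≤ ∑ A ∈ (Finset.univ.filter fun A : Finset V =>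
              A.Nonempty ∧ (A.card : ℝ) * d ≤ ε * n / 4), 1 / n * (1 / n) ^ A.card := by
          apply Finset.sum_le_sum
          intro A hA
          simp only [Finset.mem_filter, Finset.mem_univ, true_and] at hA
          refine (pr_expand hp0 h1 hd hd1 hε0 (by linarith) A hA.2).trans ?_
          rw [← hexpL, ← Real.exp_nat_mul, ← Real.exp_add, hεL]
          apply Real.exp_le_exp.2
          have : (1 : ℝ) ≤ A.card := by exact_mod_cast hA.1.card_pos
          nlinarith
      _ ≤ ∑ A : Finset V, 1 / n * (1 / n) ^ A.card := by
          apply Finset.sum_le_sum_of_subset_of_nonneg (Finset.filter_subset _ _)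
          intro A _ _; positivity
      _ = 1 / n * (1 / n + 1) ^ Fintype.card V := by rw [← Finset.mul_sum, sum_pow_card]
      _ ≤ 1 / n * Real.exp 1 := by
          gcongr
          calc (1 / n + 1) ^ Fintype.card V ≤ (Real.exp (1 / n)) ^ Fintype.card V := by
                gcongr; exact Real.add_one_le_exp _
            _ = Real.exp 1 := by
                rw [← Real.exp_nat_mul]; congr 1; rw [← hnn]; field_simp
      _ ≤ 1 / n * 3 := by
          gcongr; have := Real.exp_one_lt_d9; linarith
      _ = 3 / n := by ring
  have hδN : δ ^ 2 * N ≤ δ * N := by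
    apply mul_le_mul_of_nonneg_right _ hN0; nlinarith
  have h3L : Real.exp (-(3 * L)) = 1 / n ^ 3 := by
    have : -(3 * L) = -L + -L + -L := by ring
    rw [this, Real.exp_add, Real.exp_add, hexpL]; field_simp
  have q3 : Pr p B3 ≤ 1 / n := by
    refine (Pr_exists hp0 h1 _ _).trans ?_
    calc _ ≤ ∑ x : V × V, Real.exp (-(3 * L)) := by
          apply Finset.sum_le_sum
          intro x _
          apply expose hp0 h1 {x.1, x.2} m (Real.exp (-(3 * L))) (Real.exp_pos _).le
            (fun A' A => 3 / 2 * d ^ (m + 1) ≤ ((A \ A').card : ℝ)) (fun Z => δ * N ≤ (Z : ℝ))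
          intro A' A _ hA
          refine (pr_upper hp0 h1 hcδ (A \ A') Aᶜ ?_ ?_).trans ?_
          · exact Disjoint.mono_left Finset.sdiff_subset disjoint_compl_right
          · rw [hc]; nlinarith
          · apply Real.exp_le_exp.2
            rw [← hnn, ← hNdef]; linarith
      _ = n * n * (1 / n ^ 3) := by
          rw [h3L]; simp [hnn]
      _ = 1 / n := by field_simp
  have q4 : Pr p B4 ≤ 1 / n := by
    refine (Pr_exists hp0 h1 _ _).trans ?_
    calc _ ≤ ∑ x : V, Real.exp (-(3 * L)) := by
          apply Finset.sum_le_sum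
          intro x _
          apply expose hp0 h1 {x} m (Real.exp (-(3 * L))) (Real.exp_pos _).le
            (fun A' A => (A.card : ℝ) ≤ ((1 + 2 * ε) * d) ^ (m + 1))
            (fun Z => (Z : ℝ) < (1 - δ) * N)
          intro A' A _ hA
          refine (pr_lower hp0 h1 hδ0 hδ1 hN0 (A \ A') Aᶜ ?_ ?_).trans ?_
          · exact Disjoint.mono_left Finset.sdiff_subset disjoint_compl_right
          · refine (hlow A.card hA).trans ?_
            rw [compl_card_real, ← hnn]
            have : (A.card : ℝ) ≤ n := by rw [hnn]; exact_mod_cast Finset.card_le_univ A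
            apply mul_le_mul_of_nonneg_left _ (by linarith)
            apply pow_le_pow_of_le_one (by linarith) (by linarith)
            exact Finset.card_le_card Finset.sdiff_subset
          · apply Real.exp_le_exp.2
            linarith
      _ = n * (1 / n ^ 3) := by
          rw [h3L]; simp [hnn]
      _ = 1 / n * (1 / n) := by field_simp
      _ ≤ 1 / n * 1 := by
          gcongr; rw [div_le_one hn0]; exact hn1
      _ = 1 / n := by ring
  calc _ ≤ Pr p (fun G => (B1 G ∨ B2 G) ∨ (B3 G ∨ B4 G)) := Pr_mono hp0 h1 hdet
    _ ≤ Pr p (fun G => B1 G ∨ B2 G) + Pr p (fun G => B3 G ∨ B4 G) := Pr_or hp0 h1 _ _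
    _ ≤ (Pr p B1 + Pr p B2) + (Pr p B3 + Pr p B4) := add_le_add (Pr_or hp0 h1 _ _) (Pr_or hp0 h1 _ _)
    _ ≤ (1 / n + 3 / n) + (1 / n + 1 / n) := by gcongr
    _ = 6 / n := by ring

end

open Filter SimpleGraph Set
open scoped Topology

lemma le_of_sq_le_sq' {a b : ℝ} (h : a ^ 2 ≤ b ^ 2) (hb : 0 ≤ b) : a ≤ b :=
  (abs_le_of_sq_le_sq' h hb).2

lemma exp_le_one_sub {p : ℝ} (h0 : 0 ≤ p) (h1 : p ≤ 1 / 2) :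
    Real.exp (-(p + 2 * p ^ 2)) ≤ 1 - p := by
  have hpos : 0 < 1 - p := by linarith
  have h2 := Real.one_sub_inv_le_log_of_pos hpos
  rw [← Real.le_log_iff_exp_le hpos]
  refine le_trans ?_ h2
  have h3 : (1 - p)⁻¹ ≤ 1 + p + 2 * p ^ 2 := by
    rw [inv_le_iff_one_le_mul₀ hpos]
    nlinarith [mul_nonneg (mul_nonneg h0 h0) (by linarith : (0:ℝ) ≤ 1 - 2 * p)]
  linarith

lemma pow_one_add_le {ε κ : ℝ} (hε : 0 ≤ ε) (j : ℕ) (h : 2 * ε * j ≤ κ) (hκ : κ ≤ 1) :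
    (1 + 2 * ε) ^ j ≤ 1 + 2 * (2 * ε * j) := by
  have h1 : (1 + 2 * ε) ^ j ≤ Real.exp (2 * ε) ^ j := by
    gcongr; have := Real.add_one_le_exp (2 * ε); linarith
  rw [← Real.exp_nat_mul] at h1
  have h0 : 0 ≤ 2 * ε * j := by positivity
  have h2 := exp_sub_one_le (x := 2 * ε * j) (by rw [abs_of_nonneg h0]; linarith)
  have h3 : (j : ℝ) * (2 * ε) = 2 * ε * j := by ring
  rw [h3] at h1
  nlinarith

set_option maxHeartbeats 4000000 in
lemma numeric (n : ℕ) (p d c δ : ℝ) (m : ℕ) (hL : 2 ≤ Real.log n) (hd : d = p * n) (hd0 : 0 < d)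
    (hδ0 : 0 < δ) (hδ1 : δ ≤ 1) (hsm : Real.log n ^ 3 ≤ (δ / 400) ^ 2 / 64 * d)
    (hc1 : 1 ≤ c) (hc3 : c ≤ 3 * Real.log n) (hcd : c ≤ Real.log d)
    (hpow : d ^ (m + 2) = c * n) (hn3 : 3 * Real.log n ≤ n)
    (hcδ : 4 * Real.exp (-(c / 2)) ≤ δ) :
    ∃ ε : ℝ, 0 < ε ∧ ε ≤ 1 / 10 ∧ 1 ≤ δ * (n * Real.exp (-c)) ∧ 0 < p ∧ p ≤ 1 ∧
      Pr p (fun G : SimpleGraph (Fin n) =>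
        ¬ GoodG G m ((1 + 2 * ε) * d) (n * Real.exp (-c)) δ) ≤ 6 / n := by
  set L := Real.log n with hLdef
  have hn6 : (6 : ℝ) ≤ n := by linarith
  have hn0 : (0 : ℝ) < n := by linarith
  obtain ⟨κ, hκ⟩ : ∃ κ, κ = δ / 400 := ⟨_, rfl⟩
  rw [← hκ] at hsm
  have hκ0 : 0 < κ := by rw [hκ]; positivity
  have hκ1 : κ ≤ 1 / 400 := by rw [hκ]; linarith
  have hκ2 : κ ^ 2 ≤ κ / 400 := by nlinarith
  have hL3 : 4 * L ≤ L ^ 3 := by nlinarith [mul_nonneg (by linarith : (0:ℝ) ≤ L) (by nlinarith : (0:ℝ) ≤ L ^ 2 - 4)]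
  have hL2 : 2 * L ^ 2 ≤ L ^ 3 := by nlinarith [sq_nonneg L]
  have hLd : L ≤ κ ^ 2 / 256 * d := by linarith
  have hL2d : L ^ 2 ≤ κ ^ 2 / 128 * d := by linarith
  have hdbig : 1 ≤ d := by
    have h1 : κ ^ 2 / 256 * d ≤ 1 * d := by gcongr; linarith
    linarith
  set ε := 8 * Real.sqrt (L / d) with hεdef
  have hε0 : 0 < ε := by
    have : 0 < L / d := by apply div_pos <;> linarith
    have := Real.sqrt_pos.2 this
    rw [hεdef]; positivity
  have hε2 : ε ^ 2 = 64 * (L / d) := by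
    rw [hεdef, mul_pow, Real.sq_sqrt (by positivity)]; norm_num
  have hεd : ε ^ 2 * d = 64 * L := by rw [hε2]; field_simp
  clear_value ε
  have hεL : ε * L ≤ κ := by
    refine le_of_sq_le_sq' ?_ hκ0.le
    have : (ε * L) ^ 2 * d ≤ κ ^ 2 * d := by
      calc (ε * L) ^ 2 * d = (ε ^ 2 * d) * L ^ 2 := by ring
        _ = 64 * L ^ 3 := by rw [hεd]; ring
        _ ≤ _ := by linarith
    exact le_of_mul_le_mul_right this hd0
  have hεκ : ε ≤ κ := by
    have h1 : ε * 1 ≤ ε * L := by gcongr; linarith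
    linarith
  have hεd1 : 1 ≤ ε * d := by
    by_contra hcon
    push Not at hcon
    nlinarith
  have hp0 : 0 < p := by
    rw [hd] at hd0; exact pos_of_mul_pos_left hd0 hn0.le
  -- size of d relative to n
  have hd2 : d ^ 2 ≤ 3 * L * n := by
    calc d ^ 2 ≤ d ^ (m + 2) := pow_le_pow_right₀ hdbig (by omega)
      _ = c * n := hpow
      _ ≤ _ := by gcongr
  -- p * L small
  have hpL : p * L ≤ κ / 10 := by
    have h1 : d * L ≤ κ / 10 * n := by
      -- d * L * d ≤ 3 L^2 n ≤ κ d n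
      have h2 : (d * L) * d ≤ (κ / 10 * n) * d := by
        calc (d * L) * d = d ^ 2 * L := by ring
          _ ≤ 3 * L * n * L := by gcongr
          _ = 3 * n * L ^ 2 := by ring
          _ ≤ 3 * n * (κ ^ 2 / 128 * d) := by gcongr
          _ ≤ (κ / 10 * n) * d := by
            have h5 := mul_le_mul_of_nonneg_right hκ2 (by positivity : 0 ≤ n * d)
            have h6 : 0 ≤ κ * (n * d) := by positivity
            linarith
      exact le_of_mul_le_mul_right h2 hd0
    rw [hd] at h1
    have : p * L * n ≤ κ / 10 * n := by linarith
    exact le_of_mul_le_mul_right this hn0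
  have hpκ : p ≤ κ / 20 := by
    have := mul_le_mul_of_nonneg_left hL hp0.le
    linarith
  have hp1 : p ≤ 1 := by linarith
  -- number of steps
  have hlogd : 1 ≤ Real.log d := by linarith
  have hiL : ((m : ℝ) + 2) * Real.log d ≤ 2 * L := by
    have h1 : Real.log (d ^ (m + 2)) ≤ Real.log ((n : ℝ) ^ 2) := by
      apply Real.log_le_log (by positivity)
      rw [hpow, sq]; gcongr; linarith
    rw [Real.log_pow, Real.log_pow] at h1
    push_cast at h1
    exact h1
  have hmL : (m : ℝ) + 2 ≤ 2 * L := by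
    have h5 : (0 : ℝ) ≤ (m : ℝ) + 2 := by positivity
    have := mul_le_mul_of_nonneg_left hlogd h5
    linarith
  have hmcL : ((m : ℝ) + 2) * c ≤ 2 * L := by
    refine le_trans ?_ hiL
    gcongr
  have hm0 : (0 : ℝ) ≤ m := by positivity
  have hεm : ε * ((m : ℝ) + 2) ≤ 2 * κ := by
    have := mul_le_mul_of_nonneg_left hmL hε0.le
    linarith
  have hεmc : ε * (((m : ℝ) + 2) * c) ≤ 2 * κ := by
    have := mul_le_mul_of_nonneg_left hmcL hε0.le
    linarith
  have hcp : c = p * d ^ (m + 1) := by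
    have : c * n = p * d ^ (m + 1) * n := by
      rw [← hpow, pow_succ]; rw [hd]; ring
    exact mul_right_cancel₀ hn0.ne' this
  have hexpc : 1 / d ≤ Real.exp (-c) := by
    rw [Real.exp_neg, one_div]
    apply inv_anti₀ (Real.exp_pos c)
    calc Real.exp c ≤ Real.exp (Real.log d) := Real.exp_le_exp.2 hcd
      _ = d := Real.exp_log hd0
  have hN : 100 * L ≤ δ ^ 2 * (n * Real.exp (-c)) := by
    have h1 : 100 * L ≤ δ ^ 2 * (n * (1 / d)) := by
      have h2 : (100 * L * d) * d ≤ (δ ^ 2 * n) * d := by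
        calc (100 * L * d) * d = 100 * L * d ^ 2 := by ring
          _ ≤ 100 * L * (3 * L * n) := by gcongr
          _ = 300 * n * L ^ 2 := by ring
          _ ≤ 300 * n * (κ ^ 2 / 128 * d) := by gcongr
          _ ≤ (δ ^ 2 * n) * d := by
            rw [hκ]
            have : 0 ≤ n * d * δ ^ 2 := by positivity
            linarith
      have h3 := le_of_mul_le_mul_right h2 hd0
      rw [mul_one_div, ← mul_div_assoc, le_div_iff₀ hd0]; exact h3
    refine h1.trans ?_
    gcongr
  have hN0 : 0 ≤ n * Real.exp (-c) := by positivity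
  have hδN : 1 ≤ δ * (n * Real.exp (-c)) := by
    have : δ ^ 2 * (n * Real.exp (-c)) ≤ δ * (n * Real.exp (-c)) := by
      apply mul_le_mul_of_nonneg_right _ hN0; nlinarith
    linarith
  refine ⟨ε, hε0, by linarith, hδN, hp0, hp1, ?_⟩
  have hcard : ((Fintype.card (Fin n) : ℕ) : ℝ) = n := by simp
  have hfin := pr_good (V := Fin n) (p := p) (d := d) (ε := ε) (c := c) (δ := δ) (by
      rw [Fintype.card_fin]; have : (1 : ℝ) ≤ n := by linarith
      exact_mod_cast this) hp0 hp1 m (by rw [hcard]; exact hd) hdbig hε0 (by linarith) hεd1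
      (by rw [hcard]; exact hεd) ?_ ?_ hcp hδ0 hδ1 hcδ (by rw [hcard]; exact hN) ?_
  · rw [hcard] at hfin; exact hfin
  · -- hsz
    rw [hcard]
    have h1 := pow_one_add_le hε0.le m (κ := 1) (by linarith) le_rfl
    have h2 : (1 + 2 * ε) ^ m ≤ 2 := by linarith
    have h3 : 2 * ((1 + 2 * ε) * d) ^ m * d * d ≤ ε * n / 4 * d := by
      calc 2 * ((1 + 2 * ε) * d) ^ m * d * d = 2 * (1 + 2 * ε) ^ m * d ^ (m + 2) := by
            rw [mul_pow]; ring
        _ ≤ 2 * 2 * d ^ (m + 2) := by gcongr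
        _ = 4 * (c * n) := by rw [hpow]; ring
        _ ≤ 4 * (3 * L * n) := by gcongr
        _ = 12 / 64 * (ε ^ 2 * d) * n := by rw [hεd]; ring
        _ ≤ ε * n / 4 * d := by
            have h5 : 0 ≤ ε * d * n := by positivity
            have h6 := mul_le_mul_of_nonneg_right (by linarith : ε ≤ 1) h5
            linarith
    exact le_of_mul_le_mul_right h3 hd0
  · -- h34
    have h1 := one_add_mul_le_pow (a := -(3 * ε)) (by linarith) (m + 1)
    push_cast at h1
    have h2 : (1 + -(3 * ε)) = 1 - 3 * ε := by ring
    rw [h2] at h1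
    refine le_trans ?_ h1
    linarith
  · intro a ha
    rw [hcard]
    have h1 := pow_one_add_le hε0.le (m + 1) (κ := 1) (by push_cast; linarith) le_rfl
    have hx : p * a ≤ c + 8 * κ := by
      calc p * a ≤ p * ((1 + 2 * ε) * d) ^ (m + 1) := by gcongr
        _ = c * (1 + 2 * ε) ^ (m + 1) := by rw [hcp, mul_pow]; ring
        _ ≤ c * (1 + 2 * (2 * ε * ((m + 1 : ℕ) : ℝ))) := by gcongr
        _ ≤ c + 8 * κ := by
            push_cast
            have : 0 ≤ ε * c := by positivity
            linarith
    have hpx : 2 * p * (p * a) ≤ κ := by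
      calc 2 * p * (p * a) ≤ 2 * p * (c + 8 * κ) := by gcongr
        _ ≤ 2 * p * (4 * L) := by gcongr; linarith
        _ ≤ κ := by linarith
    have han : (a : ℝ) ≤ κ * n := by
      have h2 : a * d ≤ κ * n * d := by
        calc a * d = (p * a) * n := by rw [hd]; ring
          _ ≤ (c + 8 * κ) * n := by gcongr
          _ ≤ (4 * L) * n := by gcongr; linarith
          _ ≤ (κ * d) * n := by
              apply mul_le_mul_of_nonneg_right _ hn0.le
              have h5 : κ ^ 2 * d ≤ κ / 400 * d := mul_le_mul_of_nonneg_right hκ2 hd0.le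
              have h6 : 0 < κ * d := by positivity
              linarith
          _ = _ := by ring
      exact le_of_mul_le_mul_right h2 hd0
    have hpow2 : Real.exp (-c) * (1 - 9 * κ) ≤ (1 - p) ^ a := by
      have h3 := exp_le_one_sub hp0.le (by linarith)
      calc Real.exp (-c) * (1 - 9 * κ) ≤ Real.exp (-c) * Real.exp (-(9 * κ)) := by
            gcongr; exact Real.one_sub_le_exp_neg _
        _ = Real.exp (-c + -(9 * κ)) := by rw [Real.exp_add]
        _ ≤ Real.exp (a * (-(p + 2 * p ^ 2))) := by
            apply Real.exp_le_exp.2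
            linarith
        _ = Real.exp (-(p + 2 * p ^ 2)) ^ a := by rw [Real.exp_nat_mul]
        _ ≤ _ := by gcongr
    calc (1 - δ / 4) * (n * Real.exp (-c)) ≤ ((1 - κ) * (1 - 9 * κ)) * (n * Real.exp (-c)) := by
          apply mul_le_mul_of_nonneg_right _ hN0
          have : δ = 400 * κ := by rw [hκ]; ring
          linarith [sq_nonneg κ]
      _ = ((1 - κ) * n) * (Real.exp (-c) * (1 - 9 * κ)) := by ring
      _ ≤ (n - a) * (1 - p) ^ a := by
          have h7 : κ * n ≤ 1 * n := mul_le_mul_of_nonneg_right (by linarith) hn0.le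
          apply mul_le_mul (by linarith) hpow2 _ (by linarith)
          have := Real.exp_pos (-c)
          apply mul_nonneg this.le; linarith

open Filter SimpleGraph Set
open scoped Topology

set_option maxHeartbeats 1000000 in
lemma pointwise_bound (n : ℕ) (p d c η : ℝ) (m : ℕ) (hη0 : 0 < η) (hη1 : η ≤ 1)
    (hL : 2 ≤ Real.log n) (hd : d = p * n) (hd0 : 0 < d)
    (hsm : Real.log n ^ 3 ≤ (η / 12 / 400) ^ 2 / 64 * d)
    (hc1 : 1 ≤ c) (hc3 : c ≤ 3 * Real.log n) (hcd : c ≤ Real.log d - Real.log (Real.log d))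
    (hpow : d ^ (m + 2) = c * n) (hn3 : 3 * Real.log n ≤ n)
    (hcδ : 4 * Real.exp (-(c / 2)) ≤ η / 12) (hdn : 6 * d ≤ n) (hΛ : 2 / η ≤ Real.log d) :
    0 ≤ p ∧ p ≤ 1 ∧ 1 - 6 / n ≤ gnpProb n p {G : SimpleGraph (Fin n) |
      (localizationNumber G : ℝ) ≤ (1 + η) * (Real.log d + 2 * Real.log (Real.log n))
                * Real.exp c} := by
  have hld2 : 2 ≤ Real.log d := by
    refine le_trans ?_ hΛ
    rw [le_div_iff₀ hη0]; linarith
  have hlld : 0 ≤ Real.log (Real.log d) := Real.log_nonneg (by linarith)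
  have hcd' : c ≤ Real.log d := by linarith
  obtain ⟨ε, hε0, hε1, hδN, hp0, hp1, hbad⟩ := numeric n p d c (η / 12) m hL hd hd0 (by positivity)
    (by linarith) hsm hc1 hc3 hcd' hpow hn3 hcδ
  refine ⟨hp0.le, hp1, ?_⟩
  set L := Real.log n with hLdef
  clear_value L
  have hn0 : (0 : ℝ) < n := by linarith
  have hnpos : 0 < n := by exact_mod_cast hn0
  haveI : Nonempty (Fin n) := ⟨⟨0, hnpos⟩⟩
  have hlogL : 0 ≤ Real.log L := Real.log_nonneg (by linarith)
  obtain ⟨Λ, hΛdef⟩ : ∃ Λ, Λ = Real.log d + 2 * Real.log L := ⟨_, rfl⟩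
  rw [← hΛdef]
  have hLd : L ≤ d := by
    have h1 : L * 1 ≤ L * L ^ 2 := by
      apply mul_le_mul_of_nonneg_left _ (by linarith)
      nlinarith
    have h2 : (η / 12 / 400) ^ 2 / 64 * d ≤ 1 * d := by
      apply mul_le_mul_of_nonneg_right _ hd0.le
      have : (η / 12 / 400) ^ 2 ≤ 1 := by
        apply pow_le_one₀ (by positivity); linarith
      linarith
    have h3 : L * L ^ 2 = L ^ 3 := by ring
    linarith
  have hLld : Real.log L ≤ Real.log d := Real.log_le_log (by linarith) hLd
  have hΛ3 : Λ ≤ 3 * Real.log d := by linarith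
  have hΛ1 : Real.log d ≤ Λ := by linarith
  have hΛ0 : 0 ≤ Λ := by linarith
  have hec : Real.log d * Real.exp c ≤ d := by
    have h1 : Real.exp c ≤ Real.exp (Real.log d - Real.log (Real.log d)) := Real.exp_le_exp.2 hcd
    rw [Real.exp_sub, Real.exp_log hd0, Real.exp_log (by linarith), le_div_iff₀ (by linarith)] at h1
    linarith
  obtain ⟨B, hB⟩ : ∃ B, B = (1 + η) * Λ * Real.exp c := ⟨_, rfl⟩
  rw [← hB]
  have hB0 : 0 ≤ B := by rw [hB]; positivity
  have hBn : B ≤ n := by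
    calc B = (1 + η) * Λ * Real.exp c := hB
      _ ≤ 2 * (3 * Real.log d) * Real.exp c := by gcongr; linarith
      _ = 6 * (Real.log d * Real.exp c) := by ring
      _ ≤ 6 * d := by linarith
      _ ≤ n := hdn
  have hk : ⌊B⌋₊ ≤ Fintype.card (Fin n) := by
    rw [Fintype.card_fin]
    exact Nat.floor_le_of_le hBn
  have hkB : B - 1 ≤ (⌊B⌋₊ : ℝ) := (Nat.sub_one_lt_floor B).le
  have hec1 : Real.exp (-c) ≤ 1 := Real.exp_le_one_iff.2 (by linarith)
  have hek : (1 + η / 2) * Λ ≤ Real.exp (-c) * (⌊B⌋₊ : ℝ) := by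
    have h1 := mul_le_mul_of_nonneg_left hkB (Real.exp_pos (-c)).le
    have h2 : Real.exp (-c) * (B - 1) = (1 + η) * Λ - Real.exp (-c) := by
      have : Real.exp (-c) * Real.exp c = 1 := by rw [← Real.exp_add]; simp
      rw [hB]
      calc Real.exp (-c) * ((1 + η) * Λ * Real.exp c - 1)
          = (1 + η) * Λ * (Real.exp (-c) * Real.exp c) - Real.exp (-c) := by ring
        _ = _ := by rw [this]; ring
    have h3 : 1 ≤ η / 2 * Λ := by
      have := (div_le_iff₀ hη0).1 (hΛ.trans hΛ1)
      linarith
    linarith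
  have hexpo : 2 * Λ ≤ 2 * (1 - 3 * (η / 12)) * Real.exp (-c) * (⌊B⌋₊ : ℝ) := by
    have h1 := mul_le_mul_of_nonneg_left hek (by linarith : 0 ≤ 2 * (1 - 3 * (η / 12)))
    have h2 : 1 * Λ ≤ ((1 - 3 * (η / 12)) * (1 + η / 2)) * Λ := by
      apply mul_le_mul_of_nonneg_right _ hΛ0
      nlinarith
    linarith
  have hs : ((1 + 2 * ε) * d) ^ 2 *
      Real.exp (-(2 * (1 - 3 * (η / 12)) * Real.exp (-c) * (⌊B⌋₊ : ℝ))) < 1 / 2 := by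
    have h1 : Real.exp (-(2 * Λ)) = (d ^ 2 * L ^ 4)⁻¹ := by
      rw [Real.exp_neg, hΛdef]
      congr 1
      have : 2 * (Real.log d + 2 * Real.log L) = ((2 : ℕ) : ℝ) * Real.log d + ((4 : ℕ) : ℝ) * Real.log L := by
        push_cast; ring
      rw [this, Real.exp_add, Real.exp_nat_mul, Real.exp_nat_mul, Real.exp_log hd0,
        Real.exp_log (by linarith)]
    have hL4 : 16 ≤ L ^ 4 := by
      calc (16 : ℝ) = 2 ^ 4 := by norm_num
        _ ≤ _ := by gcongr
    calc _ ≤ (2 * d) ^ 2 * Real.exp (-(2 * Λ)) := by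
          gcongr <;> linarith
      _ = 4 / L ^ 4 := by rw [h1]; field_simp; norm_num
      _ ≤ 4 / 16 := by gcongr
      _ < 1 / 2 := by norm_num
  have hcard : ((Fintype.card (Fin n) : ℕ) : ℝ) = n := by simp
  rw [gnpProb_eq]
  have hmono : Pr p (fun G : SimpleGraph (Fin n) =>
        ¬ ¬ GoodG G m ((1 + 2 * ε) * d) (n * Real.exp (-c)) (η / 12)) ≤
      Pr p (fun G : SimpleGraph (Fin n) =>
        G ∈ {G : SimpleGraph (Fin n) | (localizationNumber G : ℝ) ≤ B}) := by
    apply Pr_mono hp0.le hp1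
    intro G hG
    rw [not_not] at hG
    have hw := good_cops G m ⌊B⌋₊ ((1 + 2 * ε) * d) c (η / 12) (by positivity)
      (by rw [hcard]; exact hG) hk (by rw [hcard]; exact hδN) hs
    have h1 : localizationNumber G ≤ ⌊B⌋₊ := Nat.sInf_le hw
    have h2 : (localizationNumber G : ℝ) ≤ (⌊B⌋₊ : ℝ) := by exact_mod_cast h1
    exact h2.trans (Nat.floor_le hB0)
  rw [Pr_not] at hmono
  linarith

open Filter SimpleGraph Set
open scoped Topology

lemma diagonal_limit (P : ℕ → ℝ → ℝ)
    (h1 : ∀ M : ℕ, 1 ≤ M → ∀ᶠ n : ℕ in atTop, 1 - 1 / (M : ℝ) ≤ P n (1 / (M : ℝ)))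
    (h2 : ∀ᶠ n : ℕ in atTop, ∀ η, P n η ≤ 1) :
    ∃ ε : ℕ → ℝ, Tendsto ε atTop (𝓝 0) ∧ Tendsto (fun n => P n (ε n)) atTop (𝓝 1) := by
  classical
  let f : ℕ → ℕ := fun n =>
    Nat.findGreatest (fun M : ℕ => M = 0 ∨ 1 - 1 / (M : ℝ) ≤ P n (1 / (M : ℝ))) n
  have hf : Tendsto f atTop atTop := by
    rw [tendsto_atTop]
    intro M
    filter_upwards [h1 (M + 1) (by omega), eventually_ge_atTop (M + 1)] with n hn hn2
    have h3 : M + 1 ≤ f n :=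
      Nat.le_findGreatest (P := fun M : ℕ => M = 0 ∨ 1 - 1 / (M : ℝ) ≤ P n (1 / (M : ℝ)))
        hn2 (Or.inr hn)
    omega
  have hspec : ∀ n, f n = 0 ∨ 1 - 1 / (f n : ℝ) ≤ P n (1 / (f n : ℝ)) := fun n =>
    Nat.findGreatest_spec (P := fun M : ℕ => M = 0 ∨ 1 - 1 / (M : ℝ) ≤ P n (1 / (M : ℝ)))
      (Nat.zero_le n) (Or.inl rfl)
  have hlim : Tendsto (fun n => 1 / (f n : ℝ)) atTop (𝓝 0) := by
    have h3 := (tendsto_one_div_atTop_nhds_zero_nat (𝕜 := ℝ)).comp hf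
    exact h3
  refine ⟨fun n => 1 / (f n : ℝ), hlim, ?_⟩
  have hlow : Tendsto (fun n => 1 - 1 / (f n : ℝ)) atTop (𝓝 1) := by
    have := (tendsto_const_nhds (x := (1 : ℝ))).sub hlim
    simpa using this
  refine tendsto_of_tendsto_of_tendsto_of_le_of_le' hlow tendsto_const_nhds ?_ ?_
  · filter_upwards [hf.eventually_ge_atTop 1] with n hn
    rcases hspec n with h | h
    · omega
    · exact h
  · filter_upwards [h2] with n hn using hn _

set_option maxHeartbeats 1000000 in
lemma eventual_bound
    (p d : ℕ → ℝ) (i : ℕ → ℕ) (c : ℕ → ℝ)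
    (hd : ∀ n, d n = p n * n)
    (hc : ∀ n, c n = d n ^ i n / n)
    (hlog3 : Filter.Tendsto (fun n : ℕ => (Real.log n) ^ 3 / d n) Filter.atTop (nhds 0))
    (hdn : Filter.Tendsto (fun n : ℕ => d n / n) Filter.atTop (nhds 0))
    (himax : ∀ᶠ n : ℕ in Filter.atTop,
      c n ≤ 3 * Real.log n ∧ 3 * Real.log n < d n ^ (i n + 1) / n)
    (hcinf : Filter.Tendsto c Filter.atTop Filter.atTop)
    (hcB : Filter.Tendsto
      (fun n : ℕ => c n - (Real.log (d n) - Real.log (Real.log (d n))))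
      Filter.atTop Filter.atBot) (η : ℝ) (hη0 : 0 < η) (hη1 : η ≤ 1) :
    ∀ᶠ n : ℕ in atTop, 0 ≤ p n ∧ p n ≤ 1 ∧
      1 - 6 / n ≤ gnpProb n (p n) {G : SimpleGraph (Fin n) |
      (localizationNumber G : ℝ) ≤ (1 + η) * (Real.log (d n) + 2 * Real.log (Real.log n))
                * Real.exp (c n)} := by
  have hlogt : Tendsto (fun n : ℕ => Real.log n) atTop atTop :=
    Real.tendsto_log_atTop.comp tendsto_natCast_atTop_atTop
  have hlogn : ∀ᶠ n : ℕ in atTop, 3 * Real.log n ≤ n := by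
    have h1 := Real.isLittleO_log_id_atTop.def (c := 1 / 3) (by norm_num)
    have h2 := tendsto_natCast_atTop_atTop (R := ℝ).eventually h1
    filter_upwards [h2, hlogt.eventually_ge_atTop 0] with n hn hn0
    rw [Real.norm_of_nonneg hn0] at hn
    simp only [id_eq, Real.norm_natCast] at hn
    linarith
  have hcδ : ∀ᶠ n : ℕ in atTop, 4 * Real.exp (-(c n / 2)) ≤ η / 12 := by
    have h1 : Tendsto (fun n => -(c n / 2)) atTop atBot :=
      tendsto_neg_atTop_atBot.comp (hcinf.atTop_div_const (by norm_num))
    have h2 := Real.tendsto_exp_atBot.comp h1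
    filter_upwards [h2.eventually_le_const (show (0 : ℝ) < η / 12 / 4 by positivity)] with n hn
    simp only [Function.comp_apply] at hn
    linarith
  have hdpos : ∀ᶠ n : ℕ in atTop, 0 < d n := by
    filter_upwards [himax, hcinf.eventually_ge_atTop 2, hlogt.eventually_ge_atTop 2,
      eventually_ge_atTop 1] with n h1 h2 h3 h4
    have hn0 : (0 : ℝ) < n := by exact_mod_cast h4
    have h5 : 0 < d n ^ i n := by
      have : 0 < d n ^ i n / n := by rw [← hc]; linarith
      exact (div_pos_iff_of_pos_right hn0).1 this
    have h6 : 0 < d n ^ (i n + 1) :=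
      (div_pos_iff_of_pos_right hn0).1 (by linarith [h1.2])
    rw [pow_succ] at h6
    exact pos_of_mul_pos_right h6 h5.le
  have hκ : 0 < (η / 12 / 400) ^ 2 / 64 := by positivity
  have hbnd : ∀ᶠ n : ℕ in atTop, Real.log n ^ 3 ≤ (η / 12 / 400) ^ 2 / 64 * d n := by
    filter_upwards [hlog3.eventually_le_const hκ, hdpos] with n h1 h2
    rwa [div_le_iff₀ h2] at h1
  have hdinf : Tendsto d atTop atTop := by
    refine tendsto_atTop_mono' atTop ?_ hlogt
    filter_upwards [hlog3.eventually_le_const (one_pos), hdpos, hlogt.eventually_ge_atTop 1]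
      with n h1 h2 h3
    rw [div_le_iff₀ h2] at h1
    have : Real.log n ≤ Real.log n ^ 3 := le_self_pow₀ h3 (by norm_num)
    linarith
  have hlogd := Real.tendsto_log_atTop.comp hdinf
  filter_upwards [himax, hcinf.eventually_ge_atTop 2, hlogt.eventually_ge_atTop 2,
      eventually_ge_atTop 1, hlogn, hcδ, hdpos, hbnd, hlogd.eventually_ge_atTop (2 / η),
      hcB.eventually_le_atBot 0,
      hdn.eventually_le_const (show (0 : ℝ) < 1 / 6 by norm_num)]
    with n him hc2 hL hn1 hn3 hcd' hd0 hsm hld hcb hdn6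
  have hn0 : (0 : ℝ) < n := by exact_mod_cast hn1
  rw [div_le_iff₀ hn0] at hdn6
  have hcn : d n ^ i n = c n * n := by rw [hc]; field_simp
  have hi : 2 ≤ i n := by
    by_contra hcon
    have hn1' : (1 : ℝ) ≤ n := by exact_mod_cast hn1
    have h5 : i n = 0 ∨ i n = 1 := by omega
    rcases h5 with h5 | h5
    · rw [h5, pow_zero] at hcn
      nlinarith
    · rw [h5, pow_one] at hcn
      nlinarith
  obtain ⟨m, hm⟩ := Nat.exists_eq_add_of_le' hi
  exact pointwise_bound n (p n) (d n) (c n) η m hη0 hη1 hL (hd n) hd0 hsm (by linarith) him.1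
    (by linarith) (by rw [← hm]; exact hcn) hn3 hcd' (by linarith) hld

theorem stmt14_localization_upper_bound_c_to_infty
    (p d : ℕ → ℝ) (i : ℕ → ℕ) (c : ℕ → ℝ)
    (hd : ∀ n, d n = p n * n)
    (hc : ∀ n, c n = d n ^ i n / n)
    (hlog3 : Filter.Tendsto (fun n : ℕ => (Real.log n) ^ 3 / d n) Filter.atTop (nhds 0))
    (hdn : Filter.Tendsto (fun n : ℕ => d n / n) Filter.atTop (nhds 0))
    (himax : ∀ᶠ n : ℕ in Filter.atTop,
      c n ≤ 3 * Real.log n ∧ 3 * Real.log n < d n ^ (i n + 1) / n)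
    (hcinf : Filter.Tendsto c Filter.atTop Filter.atTop)
    (hcB : Filter.Tendsto
      (fun n : ℕ => c n - (Real.log (d n) - Real.log (Real.log (d n))))
      Filter.atTop Filter.atBot) :
    ∃ ε : ℕ → ℝ, Filter.Tendsto ε Filter.atTop (nhds 0) ∧
      AAS p (fun n : ℕ =>
        {G : SimpleGraph (Fin n) |
          (localizationNumber G : ℝ)
            ≤ (1 + ε n) * (Real.log (d n) + 2 * Real.log (Real.log n))
                * Real.exp (c n)}) := by
  have key := eventual_bound p d i c hd hc hlog3 hdn himax hcinf hcB
  unfold AAS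
  apply diagonal_limit (fun n η => gnpProb n (p n) {G : SimpleGraph (Fin n) |
      (localizationNumber G : ℝ) ≤ (1 + η) * (Real.log (d n) + 2 * Real.log (Real.log n))
                * Real.exp (c n)})
  · intro M hM
    have hM1 : (1 : ℝ) ≤ M := by exact_mod_cast hM
    have hM0 : (0 : ℝ) < M := by linarith
    have h6 : Tendsto (fun n : ℕ => (6 : ℝ) / n) atTop (𝓝 0) :=
      tendsto_const_div_atTop_nhds_zero_nat 6
    filter_upwards [key (1 / M) (by positivity) (by rw [div_le_one hM0]; exact hM1),
      h6.eventually_le_const (show (0 : ℝ) < 1 / M by positivity)] with n h1 h2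
    linarith [h1.2.2]
  · filter_upwards [key 1 one_pos le_rfl] with n h1 η
    rw [gnpProb_eq]
    exact Pr_le_one h1.1 h1.2.1 _
end
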